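/- arXiv:1011.1544 — 3 statements merged into one kernel-verified Lean document; each statement's English description precedes it below -/
import Mathlib

section
/- Let U ⊆ ℝ² be a connected and simply connected open set with coordinates (u, v), and let θ : U → ℝ be a smooth function satisfying the sinh-Gordon equation θ_{uu} + θ_{vv} = −4 sinh θ. Then there exists a front (f, ν) on U with values in ℝ³, without umbilic points, whose fundamental forms are: ⟨f_u, f_u⟩ = 4 cosh²(θ/2), ⟨f_u, f_v⟩ = 0, ⟨f_v, f_v⟩ = 4 sinh²(θ/2); ⟨f_u, ν_u⟩ = −2 sinh θ, ⟨f_u, ν_v⟩ = ⟨f_v, ν_u⟩ = 0, ⟨f_v, ν_v⟩ = −2 sinh θ (so II = 4 cosh(θ/2) sinh(θ/2)(du² + dv²)); ⟨ν_u, ν_u⟩ = 4 sinh²(θ/2), ⟨ν_u, ν_v⟩ = 0, ⟨ν_v, ν_v⟩ = 4 cosh²(θ/2). In particular, the singular set of f is Σ = {q ∈ U : θ(q) = 0} and at every regular point the Gaussian curvature of f equals 1, i.e. (II(∂_u,∂_u)II(∂_v,∂_v) − II(∂_u,∂_v)²)/(I(∂_u,∂_u)I(∂_v,∂_v) − I(∂_u,∂_v)²)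 = 1 on U∖Σ. -/
open scoped Matrix

noncomputable section

/-- Partial derivative of a vector-valued map in the `k`-th coordinate direction. -/
def pd {m N : ℕ} (k : Fin m) (f : (Fin m → ℝ) → (Fin N → ℝ)) :
    (Fin m → ℝ) → (Fin N → ℝ) :=
  fun q => fderiv ℝ f q (Pi.single k 1)

/-- Partial derivative of a scalar function in the `k`-th coordinate direction. -/
def pdr {m : ℕ} (k : Fin m) (g : (Fin m → ℝ) → ℝ) : (Fin m → ℝ) → ℝ :=
  fun q => fderiv ℝ g q (Pi.single k 1)

section Frob
open Set Filter Topology Metric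

variable {E R : Type*} [NormedAddCommGroup E] [NormedSpace ℝ E]
  [NormedRing R] [NormedAlgebra ℝ R] [CompleteSpace R]

/-- Linear ODE with a small coefficient on the unit interval. -/
lemma lin_ode (a : ℝ → R) (ha : ContinuousOn a (Icc 0 1))
    (hb : ∀ t ∈ Icc (0:ℝ) 1, ‖a t‖ ≤ 1 / 2) :
    ∃ y : ℝ → R, y 0 = 1 ∧
      ∀ t ∈ Icc (0:ℝ) 1, HasDerivWithinAt y (a t * y t) (Icc 0 1) t := by
  have h0 : (0:ℝ) ∈ Icc (0:ℝ) 1 := by simp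
  have hP : IsPicardLindelof (fun t z => a t * z) (⟨0, h0⟩ : Icc (0:ℝ) 1) (1 : R)
      ‖(1:R)‖₊ 0 ‖(1:R)‖₊ (1 / 2) := by
    refine ⟨?_, ?_, ?_, ?_⟩
    · intro t ht
      refine LipschitzOnWith.of_dist_le_mul ?_
      intro z _ w _
      rw [dist_eq_norm, dist_eq_norm, ← mul_sub]
      refine (norm_mul_le _ _).trans ?_
      refine mul_le_mul_of_nonneg_right ?_ (norm_nonneg _)
      simpa using hb t ht
    · intro z _
      exact ha.mul continuousOn_const
    · intro t ht z hz
      refine (norm_mul_le _ _).trans ?_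
      have h1 : ‖z‖ ≤ 2 * ‖(1:R)‖ := by
        rw [mem_closedBall, dist_eq_norm] at hz
        have := norm_le_norm_add_norm_sub' z 1
        simp at hz
        linarith
      have h2 := hb t ht
      have h3 := norm_nonneg (a t)
      have h4 := norm_nonneg z
      simp only [coe_nnnorm]
      nlinarith
    · simp
  exact hP.exists_eq_forall_mem_Icc_hasDerivWithinAt₀

/-- The right-hand side of the total differential equation `dY = A Y`. -/
def rhs (A : E →L[ℝ] R) (y : R) : E →L[ℝ] R :=
  ((ContinuousLinearMap.mul ℝ R).flip y).comp A

@[simp] lemma rhs_apply (A : E →L[ℝ] R) (y : R) (h : E) : rhs A y h = A h * y := rfl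

lemma taylor_bound {A : E → E →L[ℝ] R} {A' : E → E →L[ℝ] E →L[ℝ] R} {q₀ : E} {r M : ℝ}
    (hA : ∀ p ∈ ball q₀ r, HasFDerivAt A (A' p) p)
    (hM1 : ∀ p ∈ ball q₀ r, ‖A' p‖ ≤ M)
    (hM2 : ∀ p ∈ ball q₀ r, ∀ p' ∈ ball q₀ r, ‖A' p - A' p'‖ ≤ M * ‖p - p'‖)
    {p k : E} (hp : p ∈ ball q₀ r) (hk : p + k ∈ ball q₀ r) :
    ‖A (p + k) - A p‖ ≤ M * ‖k‖ ∧ ‖A (p + k) - A p - A' p k‖ ≤ M * ‖k‖ * ‖k‖ := by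
  have hM : 0 ≤ M := (norm_nonneg (A' p)).trans (hM1 p hp)
  have hs : segment ℝ p (p + k) ⊆ ball q₀ r := (convex_ball q₀ r).segment_subset hp hk
  constructor
  · have := (convex_ball q₀ r).norm_image_sub_le_of_norm_hasFDerivWithin_le
      (f := A) (f' := A') (fun z hz => (hA z hz).hasFDerivWithinAt) hM1 hp hk
    simpa using this
  · have := (convex_segment (𝕜 := ℝ) p (p + k)).norm_image_sub_le_of_norm_hasFDerivWithin_le'
      (f := A) (f' := A') (φ := A' p) (C := M * ‖k‖)
      (fun z hz => (hA z (hs hz)).hasFDerivWithinAt) ?_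
      (left_mem_segment ℝ p (p + k)) (right_mem_segment ℝ p (p + k))
    · simpa using this
    · intro z hz
      refine (hM2 z (hs hz) p hp).trans ?_
      refine mul_le_mul_of_nonneg_left ?_ hM
      obtain ⟨s, hs, rfl⟩ := (segment_eq_image' ℝ p (p + k)) ▸ hz
      simp only [add_sub_cancel_left, norm_smul, Real.norm_eq_abs, abs_of_nonneg hs.1]
      exact mul_le_of_le_one_left (norm_nonneg _) hs.2

lemma key_estimate {A : E → E →L[ℝ] R} {A' : E → E →L[ℝ] E →L[ℝ] R} {q₀ : E} {r M B : ℝ}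
    (hr : r ≤ 1)
    (hA : ∀ p ∈ ball q₀ r, HasFDerivAt A (A' p) p)
    (hM0 : ∀ p ∈ ball q₀ r, ‖A p‖ ≤ M)
    (hM1 : ∀ p ∈ ball q₀ r, ‖A' p‖ ≤ M)
    (hM2 : ∀ p ∈ ball q₀ r, ∀ p' ∈ ball q₀ r, ‖A' p - A' p'‖ ≤ M * ‖p - p'‖)
    (flat : ∀ p ∈ ball q₀ r, ∀ h k, A' p h k + A p k * A p h = A' p k h + A p h * A p k)
    {y z : ℝ → R} {x h : E} (hx : ‖x‖ < r) (hxh : ‖x + h‖ < r)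
    (hy0 : y 0 = 1) (hz0 : z 0 = 1)
    (hy : ∀ t ∈ Icc (0:ℝ) 1, HasDerivWithinAt y (A (q₀ + t • x) x * y t) (Icc 0 1) t)
    (hz : ∀ t ∈ Icc (0:ℝ) 1,
      HasDerivWithinAt z (A (q₀ + t • (x + h)) (x + h) * z t) (Icc 0 1) t)
    (hB : ∀ t ∈ Icc (0:ℝ) 1, ‖y t‖ ≤ B) :
    ‖z 1 - y 1 - A (q₀ + x) h * y 1‖ ≤
      gronwallBound 0 M (2 * M * B + 2 * M * M * B) 1 * ‖h‖ ^ 2 := by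
  have hmem : ∀ w : E, ‖w‖ < r → ∀ t ∈ Icc (0:ℝ) 1, q₀ + t • w ∈ ball q₀ r := by
    intro w hw t ht
    simp only [mem_ball, dist_self_add_left, norm_smul, Real.norm_eq_abs, abs_of_nonneg ht.1]
    exact (mul_le_of_le_one_left (norm_nonneg _) ht.2).trans_lt hw
  set Er : ℝ → R := fun t => z t - y t - A (q₀ + t • x) (t • h) * y t with hEr
  set Er' : ℝ → R := fun t => A (q₀ + t • (x + h)) (x + h) * z t - A (q₀ + t • x) x * y t -
    ((A' (q₀ + t • x) x (t • h) + A (q₀ + t • x) h) * y t +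
      A (q₀ + t • x) (t • h) * (A (q₀ + t • x) x * y t)) with hEr'
  have hd : ∀ t ∈ Icc (0:ℝ) 1, HasDerivWithinAt Er (Er' t) (Icc 0 1) t := by
    intro t ht
    refine ((hz t ht).sub (hy t ht)).sub (HasDerivWithinAt.mul ?_ (hy t ht))
    have h1 : HasDerivAt (fun t : ℝ => q₀ + t • x) x t := by
      simpa using ((hasDerivAt_id t).smul_const x).const_add q₀
    have h2 : HasDerivAt (fun t : ℝ => t • h) h t := by
      simpa using ((hasDerivAt_id t).smul_const h)
    have h3 : HasDerivAt (fun t : ℝ => A (q₀ + t • x)) (A' (q₀ + t • x) x) t :=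
      (hA _ (hmem x hx t ht)).comp_hasDerivAt t h1
    exact (h3.clm_apply h2).hasDerivWithinAt
  have hM : 0 ≤ M := (norm_nonneg _).trans (hM0 _ (hmem x hx 0 (by simp)))
  have hB0 : 0 ≤ B := (norm_nonneg _).trans (hB 0 (by simp))
  have hbound : ∀ t ∈ Icc (0:ℝ) 1,
      ‖Er' t‖ ≤ M * ‖Er t‖ + (2 * M * B + 2 * M * M * B) * ‖h‖ ^ 2 := by
    intro t ht
    set p := q₀ + t • x with hp
    have hpk : q₀ + t • (x + h) = p + t • h := by rw [hp, smul_add]; abel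
    have hp1 : p ∈ ball q₀ r := hmem x hx t ht
    have hp2 : p + t • h ∈ ball q₀ r := hpk ▸ hmem _ hxh t ht
    obtain ⟨T1, T2⟩ := taylor_bound hA hM1 hM2 hp1 hp2
    have hth : ‖t • h‖ ≤ ‖h‖ := by
      rw [norm_smul, Real.norm_eq_abs, abs_of_nonneg ht.1]
      exact mul_le_of_le_one_left (norm_nonneg _) ht.2
    have hid : Er' t = A (p + t • h) (x + h) * Er t
        + ((A (p + t • h) - A p - A' p (t • h)) (x + h) + A' p (t • h) h) * y t
        + ((A (p + t • h) - A p) (x + h) + A p h) * (A p (t • h) * y t) := by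
      have hf := flat p hp1 x (t • h)
      have hf' : A' p x (t • h) * y t + A p (t • h) * (A p x * y t) =
          A' p (t • h) x * y t + A p x * (A p (t • h) * y t) := by
        rw [← mul_assoc, ← mul_assoc, ← add_mul, ← add_mul, hf]
      simp only [hEr', hEr, hpk, ← hp]
      simp only [_root_.sub_apply, map_add, add_mul, sub_mul, mul_sub] at hf' ⊢
      rw [← sub_eq_zero] at hf'
      rw [← sub_eq_zero, ← neg_zero, ← hf']
      noncomm_ring
    have hx1 : ‖x + h‖ ≤ 1 := by linarith
    have a1 : ‖A (p + t • h) (x + h)‖ ≤ M := by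
      refine ((A (p + t • h)).le_opNorm _).trans ?_
      have := hM0 _ hp2
      nlinarith [norm_nonneg (x + h), norm_nonneg (A (p + t • h))]
    have a2 : ‖(A (p + t • h) - A p - A' p (t • h)) (x + h)‖ ≤ M * ‖h‖ ^ 2 := by
      refine (ContinuousLinearMap.le_opNorm _ _).trans ?_
      refine (mul_le_of_le_one_right (norm_nonneg _) hx1).trans (T2.trans ?_)
      rw [mul_assoc, pow_two]; gcongr
    have a3 : ‖A' p (t • h) h‖ ≤ M * ‖h‖ ^ 2 := by
      refine (ContinuousLinearMap.le_opNorm _ _).trans ?_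
      rw [pow_two, ← mul_assoc]; gcongr
      refine (ContinuousLinearMap.le_opNorm _ _).trans ?_
      exact mul_le_mul (hM1 p hp1) hth (norm_nonneg _) hM
    have a4 : ‖(A (p + t • h) - A p) (x + h)‖ ≤ M * ‖h‖ := by
      refine (ContinuousLinearMap.le_opNorm _ _).trans ?_
      refine (mul_le_of_le_one_right (norm_nonneg _) hx1).trans (T1.trans ?_)
      gcongr
    have a5 : ‖A p h‖ ≤ M * ‖h‖ := by
      refine (ContinuousLinearMap.le_opNorm _ _).trans ?_
      exact mul_le_mul_of_nonneg_right (hM0 p hp1) (norm_nonneg _)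
    have a6 : ‖A p (t • h)‖ ≤ M * ‖h‖ := by
      refine (ContinuousLinearMap.le_opNorm _ _).trans ?_
      exact mul_le_mul (hM0 p hp1) hth (norm_nonneg _) hM
    have hyB := hB t ht
    rw [hid]
    calc _ ≤ M * ‖Er t‖ + (M * ‖h‖ ^ 2 + M * ‖h‖ ^ 2) * B
          + (M * ‖h‖ + M * ‖h‖) * (M * ‖h‖ * B) := by
          refine norm_add₃_le.trans ?_
          refine add_le_add (add_le_add ?_ ?_) ?_
          · exact (norm_mul_le _ _).trans (mul_le_mul_of_nonneg_right a1 (norm_nonneg _))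
          · refine (norm_mul_le _ _).trans (mul_le_mul ?_ hyB (norm_nonneg _) (by positivity))
            exact (norm_add_le _ _).trans (add_le_add a2 a3)
          · refine (norm_mul_le _ _).trans (mul_le_mul ?_ ?_ (norm_nonneg _) (by positivity))
            · exact (norm_add_le _ _).trans (add_le_add a4 a5)
            · exact (norm_mul_le _ _).trans (mul_le_mul a6 hyB (norm_nonneg _) (by positivity))
      _ = _ := by ring
  have hG := norm_le_gronwallBound_of_norm_deriv_right_le (f := Er) (f' := Er') (δ := 0) (K := M)
    (ε := (2 * M * B + 2 * M * M * B) * ‖h‖ ^ 2) (a := 0) (b := 1)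
    (fun t ht => (hd t ht).continuousWithinAt)
    (fun t ht => (hd t (Ico_subset_Icc_self ht)).mono_of_mem_nhdsWithin
      (Icc_mem_nhdsGE_of_mem ht))
    (by simp [hEr, hy0, hz0]) (fun t ht => hbound t (Ico_subset_Icc_self ht)) 1 (by simp)
  simp only [hEr, one_smul, sub_zero] at hG
  refine hG.trans (le_of_eq ?_)
  unfold gronwallBound
  split_ifs with h0
  · simp
  · simp; ring

/-- Local solvability of a flat linear total differential equation. -/
lemma local_frobenius {U : Set E} (hU : IsOpen U) {A : E → E →L[ℝ] R}
    (hA : ContDiffOn ℝ 2 A U)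
    (flat : ∀ p ∈ U, ∀ h k, fderiv ℝ A p h k + A p k * A p h = fderiv ℝ A p k h + A p h * A p k)
    {q₀ : E} (hq : q₀ ∈ U) :
    ∃ r > 0, ∃ Φ : E → R, ball q₀ r ⊆ U ∧
      ∀ p ∈ ball q₀ r, HasFDerivAt Φ (rhs (A p) (Φ p)) p ∧ IsUnit (Φ p) := by
  have hAq : ContDiffAt ℝ 2 A q₀ := hA.contDiffAt (hU.mem_nhds hq)
  have hA'q : ContDiffAt ℝ 1 (fderiv ℝ A) q₀ := hAq.fderiv_right (by norm_num)
  obtain ⟨K, s, hs, hK⟩ := hA'q.exists_lipschitzOnWith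
  have e1 : ∀ᶠ p in 𝓝 q₀, ‖A p‖ < ‖A q₀‖ + 1 :=
    hAq.continuousAt.norm.eventually (gt_mem_nhds (lt_add_one _))
  have e2 : ∀ᶠ p in 𝓝 q₀, ‖fderiv ℝ A p‖ < ‖fderiv ℝ A q₀‖ + 1 :=
    ((continuous_norm (E := E →L[ℝ] E →L[ℝ] R)).continuousAt.comp hA'q.continuousAt).eventually
      (gt_mem_nhds (lt_add_one ‖fderiv ℝ A q₀‖))
  obtain ⟨ρ, hρ, hball⟩ := Metric.mem_nhds_iff.1
    (inter_mem (inter_mem hs (hU.mem_nhds hq)) (inter_mem e1 e2))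
  set M : ℝ := ‖A q₀‖ + 1 + (‖fderiv ℝ A q₀‖ + 1) + K with hMdef
  have hM : 0 < M := by positivity
  set r : ℝ := min ρ (min 1 (1 / (2 * M))) with hrdef
  have hr0 : 0 < r := by positivity
  have hrb : ball q₀ r ⊆ ball q₀ ρ := ball_subset_ball (min_le_left _ _)
  have hr1 : r ≤ 1 := (min_le_right _ _).trans (min_le_left _ _)
  have hr2 : r ≤ 1 / (2 * M) := (min_le_right _ _).trans (min_le_right _ _)
  have hrU : ball q₀ r ⊆ U := fun p hp => (hball (hrb hp)).1.2
  have hD : ∀ p ∈ ball q₀ r, HasFDerivAt A (fderiv ℝ A p) p := fun p hp =>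
    ((hA.contDiffAt (hU.mem_nhds (hrU hp))).differentiableAt (by norm_num)).hasFDerivAt
  have hM0 : ∀ p ∈ ball q₀ r, ‖A p‖ ≤ M := fun p hp => by
    have : ‖A p‖ < ‖A q₀‖ + 1 := (hball (hrb hp)).2.1
    have := norm_nonneg (fderiv ℝ A q₀)
    have hK0 : (0:ℝ) ≤ K := K.2
    rw [hMdef]; linarith
  have hM1 : ∀ p ∈ ball q₀ r, ‖fderiv ℝ A p‖ ≤ M := fun p hp => by
    have : ‖fderiv ℝ A p‖ < ‖fderiv ℝ A q₀‖ + 1 := (hball (hrb hp)).2.2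
    have := norm_nonneg (A q₀)
    have hK0 : (0:ℝ) ≤ K := K.2
    rw [hMdef]; linarith
  have hM2 : ∀ p ∈ ball q₀ r, ∀ p' ∈ ball q₀ r,
      ‖fderiv ℝ A p - fderiv ℝ A p'‖ ≤ M * ‖p - p'‖ := fun p hp p' hp' => by
    have := hK.dist_le_mul p (hball (hrb hp)).1.1 p' (hball (hrb hp')).1.1
    rw [dist_eq_norm, dist_eq_norm] at this
    refine this.trans (mul_le_mul_of_nonneg_right ?_ (norm_nonneg _))
    have := norm_nonneg (A q₀)
    have := norm_nonneg (fderiv ℝ A q₀)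
    simp only [hMdef]; linarith
  have hmem : ∀ w : E, ‖w‖ < r → ∀ t ∈ Icc (0:ℝ) 1, q₀ + t • w ∈ ball q₀ r := by
    intro w hw t ht
    simp only [mem_ball, dist_self_add_left, norm_smul, Real.norm_eq_abs, abs_of_nonneg ht.1]
    exact (mul_le_of_le_one_left (norm_nonneg _) ht.2).trans_lt hw
  have hex : ∀ x : E, ∃ y : ℝ → R, ‖x‖ < r → y 0 = 1 ∧
      ∀ t ∈ Icc (0:ℝ) 1, HasDerivWithinAt y (A (q₀ + t • x) x * y t) (Icc 0 1) t := by
    intro x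
    by_cases hx : ‖x‖ < r
    · have c1 : ContinuousOn (fun t : ℝ => A (q₀ + t • x) x) (Icc 0 1) := by
        refine ContinuousOn.clm_apply ?_ continuousOn_const
        intro t ht
        exact ((hD _ (hmem x hx t ht)).continuousAt.comp
          (f := fun t : ℝ => q₀ + t • x) (by fun_prop)).continuousWithinAt
      have c2 : ∀ t ∈ Icc (0:ℝ) 1, ‖A (q₀ + t • x) x‖ ≤ 1 / 2 := by
        intro t ht
        refine (ContinuousLinearMap.le_opNorm _ _).trans ?_
        calc _ ≤ M * (1 / (2 * M)) := mul_le_mul (hM0 _ (hmem x hx t ht))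
                (hx.le.trans hr2) (norm_nonneg _) hM.le
          _ = 1 / 2 := by field_simp
      obtain ⟨y, hy⟩ := lin_ode (fun t : ℝ => A (q₀ + t • x) x) c1 c2
      exact ⟨y, fun _ => hy⟩
    · exact ⟨0, fun h => absurd h hx⟩
  choose y hy using hex
  set Φ : E → R := fun p => y (p - q₀) 1 with hΦ
  have hder : ∀ p ∈ ball q₀ r, HasFDerivAt Φ (rhs (A p) (Φ p)) p := by
    intro p hp
    have hx : ‖p - q₀‖ < r := by rwa [mem_ball, dist_eq_norm] at hp
    obtain ⟨B, hB⟩ := isCompact_Icc.exists_bound_of_continuousOn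
      (fun t ht => ((hy _ hx).2 t ht).continuousWithinAt)
    rw [hasFDerivAt_iff_isLittleO_nhds_zero]
    have hlo : (fun h : E => ‖h‖ ^ 2) =o[𝓝 0] fun h => h :=
      Asymptotics.isLittleO_norm_pow_id (by norm_num)
    refine Asymptotics.IsBigO.trans_isLittleO (g := fun h : E => ‖h‖ ^ 2) ?_ hlo
    refine Asymptotics.IsBigO.of_bound (gronwallBound 0 M (2 * M * B + 2 * M * M * B) 1) ?_
    have hev : ∀ᶠ h : E in 𝓝 0, ‖p - q₀ + h‖ < r := by
      have hc : Continuous fun h : E => ‖p - q₀ + h‖ := by fun_prop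
      exact hc.continuousAt.eventually (gt_mem_nhds (by simpa using hx))
    filter_upwards [hev] with h hh
    have := key_estimate (q₀ := q₀) hr1 hD hM0 hM1 hM2 (fun p hp => flat p (hrU hp)) hx hh
      (hy _ hx).1 (hy _ hh).1 (hy _ hx).2 (hy _ hh).2 hB
    simp only [hΦ, rhs_apply, norm_pow, norm_norm]
    rw [add_sub_right_comm]
    simpa using this
  have hΦ0 : Φ q₀ = 1 := by
    have h0 : ‖(0:E)‖ < r := by simpa using hr0
    have hc := constant_of_derivWithin_zero (f := y 0) (a := 0) (b := 1)
      (fun t ht => ((hy 0 h0).2 t ht).differentiableWithinAt)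
      (fun t ht => by
        rw [((hy 0 h0).2 t (Ico_subset_Icc_self ht)).derivWithin
          (uniqueDiffOn_Icc_zero_one t (Ico_subset_Icc_self ht))]; simp) 1 (by simp)
    simp only [hΦ, sub_self, hc, (hy 0 h0).1]
  have hunit : ∀ᶠ p in 𝓝 q₀, IsUnit (Φ p) := by
    have hc : ContinuousAt Φ q₀ := (hder q₀ (mem_ball_self hr0)).continuousAt
    exact hc.eventually (Units.isOpen.mem_nhds (by rw [hΦ0]; exact isUnit_one))
  obtain ⟨r', hr', hb'⟩ := Metric.mem_nhds_iff.1 hunit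
  refine ⟨min r r', lt_min hr0 hr', Φ, (ball_subset_ball (min_le_left _ _)).trans hrU, ?_⟩
  intro p hp
  exact ⟨hder p (ball_subset_ball (min_le_left _ _) hp),
    hb' (ball_subset_ball (min_le_right _ _) hp)⟩

/-- A copy of `R` carrying the discrete topology. -/
structure Disc (R : Type*) where
  /-- The underlying element. -/
  out : R

instance discTop (R : Type*) : TopologicalSpace (Disc R) := ⊥

instance discDisc (R : Type*) : DiscreteTopology (Disc R) := ⟨rfl⟩

/-- Two local fundamental solutions differ by a constant. -/
lemma transition_const {A : E → E →L[ℝ] R} {W : Set E} (hW : IsOpen W) (hc : IsPreconnected W)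
    {Φ Ψ : E → R} (hΦ : ∀ p ∈ W, HasFDerivAt Φ (rhs (A p) (Φ p)) p)
    (hΨ : ∀ p ∈ W, HasFDerivAt Ψ (rhs (A p) (Ψ p)) p ∧ IsUnit (Ψ p)) :
    ∃ c, ∀ p ∈ W, Ring.inverse (Ψ p) * Φ p = c := by
  have hd : ∀ p ∈ W, HasFDerivAt (fun p => Ring.inverse (Ψ p) * Φ p) (0 : E →L[ℝ] R) p := by
    intro p hp
    obtain ⟨h1, u, hu⟩ := hΨ p hp
    have h2 := (hu ▸ hasFDerivAt_ringInverse (𝕜 := ℝ) u :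
      HasFDerivAt Ring.inverse _ (Ψ p))
    have h3 := (h2.comp p h1).mul' (hΦ p hp)
    refine h3.congr_fderiv ?_
    ext h
    simp [← hu, mul_assoc]
  refine hW.exists_is_const_of_fderiv_eq_zero (𝕜 := ℝ) hc ?_ ?_
  · exact fun p hp => (hd p hp).differentiableAt.differentiableWithinAt
  · exact fun p hp => (hd p hp).fderiv

/-- Global solvability of a flat linear total differential equation on a simply connected set. -/
lemma global_frobenius {U : Set E} (hU : IsOpen U) (hsc : SimplyConnectedSpace U)
    {A : E → E →L[ℝ] R} (hA : ContDiffOn ℝ 2 A U)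
    (flat : ∀ p ∈ U, ∀ h k, fderiv ℝ A p h k + A p k * A p h = fderiv ℝ A p k h + A p h * A p k)
    {q₀ : E} (hq : q₀ ∈ U) :
    ∃ Y : E → R, Y q₀ = 1 ∧ ∀ p ∈ U, HasFDerivAt Y (rhs (A p) (Y p)) p := by
  have hloc : ∀ i : U, ∃ r > 0, ∃ Φ : E → R, ball (i:E) r ⊆ U ∧
      ∀ p ∈ ball (i:E) r, HasFDerivAt Φ (rhs (A p) (Φ p)) p ∧ IsUnit (Φ p) :=
    fun i => local_frobenius hU hA flat i.2
  choose r hr Φ hrU hΦ using hloc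
  let Z : FiberBundleCore U U (Disc R) :=
    { baseSet := fun i => {x | (x:E) ∈ ball (i:E) (r i)}
      isOpen_baseSet := fun i => isOpen_ball.preimage continuous_subtype_val
      indexAt := fun x => x
      mem_baseSet_at := fun x => mem_ball_self (hr x)
      coordChange := fun i j x v => ⟨Ring.inverse (Φ j x) * Φ i x * v.out⟩
      coordChange_self := by
        intro i x hx v
        have := (hΦ i x hx).2
        show (⟨Ring.inverse (Φ i x) * Φ i x * v.out⟩ : Disc R) = v
        rw [Ring.inverse_mul_cancel _ this, one_mul]
      continuousOn_coordChange := by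
        intro i j
        obtain ⟨c, hc⟩ := transition_const (A := A) (W := ball (i:E) (r i) ∩ ball (j:E) (r j))
          (isOpen_ball.inter isOpen_ball)
          ((convex_ball _ _).inter (convex_ball _ _)).isPreconnected
          (fun p hp => (hΦ i p hp.1).1) (fun p hp => hΦ j p hp.2)
        have hcont : Continuous (fun v : Disc R => (⟨c * v.out⟩ : Disc R)) :=
          continuous_of_discreteTopology
        refine (hcont.comp continuous_snd).continuousOn.congr ?_
        rintro ⟨x, v⟩ hx
        show (⟨Ring.inverse (Φ j x) * Φ i x * v.out⟩ : Disc R) = ⟨c * v.out⟩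
        rw [hc x hx.1]
      coordChange_comp := by
        rintro i j k x ⟨⟨hi, hj⟩, hk⟩ v
        show (⟨Ring.inverse (Φ k x) * Φ j x * (Ring.inverse (Φ j x) * Φ i x * v.out)⟩ : Disc R) =
          ⟨Ring.inverse (Φ k x) * Φ i x * v.out⟩
        congr 1
        have := Ring.mul_inverse_cancel _ (hΦ j x hj).2
        calc _ = Ring.inverse (Φ k x) * (Φ j x * Ring.inverse (Φ j x)) * Φ i x * v.out := by
              simp only [mul_assoc]
          _ = _ := by rw [this, mul_one] }
  have hcov : IsCoveringMap (Bundle.TotalSpace.proj : Bundle.TotalSpace (Disc R) Z.Fiber → U) :=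
    FiberBundle.isCoveringMap
  have : LocallyPathConnectedSpace U := hU.locallyPathConnectedSpace
  let a₀ : U := ⟨q₀, hq⟩
  obtain ⟨s, ⟨hs0, hs⟩, -⟩ := hcov.existsUnique_continuousMap_lifts (ContinuousMap.id U) a₀
    (⟨a₀, (⟨Ring.inverse (Φ a₀ q₀)⟩ : Disc R)⟩ : Bundle.TotalSpace (Disc R) Z.Fiber) rfl
  have hs' : ∀ x : U, (s x).1 = x := fun x => congrFun hs x
  let v : U → R := fun x => Disc.out (s x).2
  classical
  let Y : E → R := fun p => if hp : p ∈ U then Φ ⟨p, hp⟩ p * v ⟨p, hp⟩ else 0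
  have hY : ∀ x : U, Y x = Φ x x * v x := fun x => by simp [Y]
  refine ⟨Y, ?_, ?_⟩
  · have h1 : v a₀ = Ring.inverse (Φ a₀ q₀) := by
      show Disc.out (s a₀).2 = _
      rw [hs0]
    have h2 := hY a₀
    rw [h1] at h2
    exact h2.trans (Ring.mul_inverse_cancel _ (hΦ a₀ q₀ (mem_ball_self (hr a₀))).2)
  · intro p hp
    let i : U := ⟨p, hp⟩
    let w : U → Disc R := fun x => (Z.localTriv i (s x)).2
    have hw : ∀ x : U, (w x).out = (Ring.inverse (Φ i x) * Φ x x * v x : R) := by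
      intro x
      show (Ring.inverse (Φ i (s x).1) * Φ (s x).1 (s x).1 * v x : R) = _
      rw [hs' x]
    have hwc : ContinuousAt w i := by
      have h1 : ContinuousAt (Z.localTriv i) (s i) := by
        refine (Z.localTriv i).continuousAt ?_
        rw [Z.mem_localTriv_source, hs' i]
        exact mem_ball_self (hr i)
      exact continuous_snd.continuousAt.comp (h1.comp s.continuous.continuousAt)
    have hev : ∀ᶠ x in 𝓝 i, w x = w i :=
      hwc.eventually ((isOpen_discrete {w i}).mem_nhds rfl)
    have hev2 : ∀ᶠ q in 𝓝 p, ∀ hq : q ∈ U, w ⟨q, hq⟩ = w i := by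
      rw [nhds_subtype_eq_comap, eventually_comap] at hev
      filter_upwards [hev] with q h hq
      exact h ⟨q, hq⟩ rfl
    have heq : Y =ᶠ[𝓝 p] fun q => Φ i q * (w i).out := by
      filter_upwards [hev2, isOpen_ball.mem_nhds (mem_ball_self (hr i) : p ∈ ball (i:E) (r i)),
        hU.mem_nhds hp] with q h1 h2 h3
      have h4 : (w i).out = (Ring.inverse (Φ i q) * Φ ⟨q, h3⟩ q * v ⟨q, h3⟩ : R) := by
        rw [← h1 h3]; exact hw ⟨q, h3⟩
      have h5 : Y q = Φ ⟨q, h3⟩ q * v ⟨q, h3⟩ := hY ⟨q, h3⟩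
      show Y q = Φ i q * (w i).out
      rw [h4, h5, ← mul_assoc, ← mul_assoc, Ring.mul_inverse_cancel _ (hΦ i q h2).2, one_mul]
    have hder := (hΦ i p (mem_ball_self (hr i))).1.mul_const' (w i).out
    refine (hder.congr_of_eventuallyEq heq).congr_fderiv ?_
    ext h
    have h6 : Y p = Φ i p * (w i).out := heq.self_of_nhds
    rw [rhs_apply, h6, ← mul_assoc]
    rfl

/-- Solutions of a smooth linear total differential equation are smooth. -/
lemma solution_smooth {U : Set E} (hU : IsOpen U) {A : E → E →L[ℝ] R} {Y : E → R}
    (hA : ContDiffOn ℝ (⊤ : ℕ∞) A U)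
    (hY : ∀ p ∈ U, HasFDerivAt Y (rhs (A p) (Y p)) p) : ContDiffOn ℝ (⊤ : ℕ∞) Y U := by
  rw [contDiffOn_infty]
  intro n
  induction n with
  | zero =>
    refine contDiffOn_zero.2 fun p hp => (hY p hp).continuousAt.continuousWithinAt
  | succ n ih =>
    push_cast
    rw [contDiffOn_succ_iff_fderiv_of_isOpen hU]
    refine ⟨fun p hp => (hY p hp).differentiableAt.differentiableWithinAt, by simp, ?_⟩
    have : ContDiffOn ℝ n (fun p => rhs (A p) (Y p)) U := by
      unfold rhs
      refine ContDiffOn.clm_comp ?_ (hA.of_le (by exact_mod_cast le_top))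
      exact (ContinuousLinearMap.mul ℝ R).flip.contDiff.comp_contDiffOn ih
    exact this.congr fun p hp => (hY p hp).fderiv

end Frob

section Frame
open Set Filter Topology

/-- Constant `4 × 4` matrices. -/
abbrev Mat := Matrix (Fin 4) (Fin 4) ℝ

def mA : Mat := !![0,1,0,0;-1,0,0,0;0,0,0,0;0,0,0,0]
def mB : Mat := !![0,0,1,0;0,0,0,0;-1,0,0,0;0,0,0,0]
def mC : Mat := !![0,0,0,0;0,0,1,0;0,-1,0,0;0,0,0,0]
def mD : Mat := !![0,0,0,0;0,0,0,0;0,0,0,0;1,0,0,0]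
def mE : Mat := !![0,0,0,0;0,0,0,0;0,0,0,0;0,1,0,0]

/-- Coefficient of `du`. -/
def cP (a s c : ℝ) : Mat := a • mA + s • mB + c • mD
/-- Coefficient of `dv`. -/
def cQ (b s c : ℝ) : Mat := b • mA + c • mC + s • mE

lemma cP_eq (a s c : ℝ) : cP a s c = !![0,a,s,0;-a,0,0,0;-s,0,0,0;c,0,0,0] := by
  ext i j; fin_cases i <;> fin_cases j <;> simp [cP, mA, mB, mD]

lemma cQ_eq (b s c : ℝ) : cQ b s c = !![0,b,0,0;-b,0,c,0;0,-c,0,0;0,s,0,0] := by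
  ext i j; fin_cases i <;> fin_cases j <;> simp [cQ, mA, mC, mE]

lemma flat_alg (a b s c h0 h1 k0 k1 a0 a1 b0 b1 : ℝ) (hyp : b0 - a1 = -(s * c)) :
    (k0 • cP (h0 * a0 + h1 * a1) (c * (b * h0 - a * h1)) (s * (b * h0 - a * h1))
      + k1 • cQ (h0 * b0 + h1 * b1) (c * (b * h0 - a * h1)) (s * (b * h0 - a * h1)))
      + (k0 • cP a s c + k1 • cQ b s c) * (h0 • cP a s c + h1 • cQ b s c) =
    (h0 • cP (k0 * a0 + k1 * a1) (c * (b * k0 - a * k1)) (s * (b * k0 - a * k1))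
      + h1 • cQ (k0 * b0 + k1 * b1) (c * (b * k0 - a * k1)) (s * (b * k0 - a * k1)))
      + (h0 • cP a s c + h1 • cQ b s c) * (k0 • cP a s c + k1 • cQ b s c) := by
  simp only [cP_eq, cQ_eq]
  ext i j
  fin_cases i <;> fin_cases j <;>
    simp [Matrix.mul_apply, Fin.sum_univ_four] <;>
    first
      | ring1
      | linear_combination (h0 * k1 - h1 * k0) * hyp
      | linear_combination -(h0 * k1 - h1 * k0) * hyp

variable {R : Type*} [NormedRing R] [NormedAlgebra ℝ R]

/-- The connection form. -/
def conn (ι : Mat ≃ₐ[ℝ] R) (a b s c : (Fin 2 → ℝ) → ℝ) (q : Fin 2 → ℝ) : (Fin 2 → ℝ) →L[ℝ] R :=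
  ContinuousLinearMap.smulRightL ℝ (Fin 2 → ℝ) R (ContinuousLinearMap.proj 0)
      (a q • ι mA + s q • ι mB + c q • ι mD)
    + ContinuousLinearMap.smulRightL ℝ (Fin 2 → ℝ) R (ContinuousLinearMap.proj 1)
      (b q • ι mA + c q • ι mC + s q • ι mE)

lemma conn_apply (ι : Mat ≃ₐ[ℝ] R) (a b s c : (Fin 2 → ℝ) → ℝ) (q h : Fin 2 → ℝ) :
    conn ι a b s c q h = ι (h 0 • cP (a q) (s q) (c q) + h 1 • cQ (b q) (s q) (c q)) := by
  simp [conn, cP, cQ]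

lemma conn_smooth (ι : Mat ≃ₐ[ℝ] R) {a b s c : (Fin 2 → ℝ) → ℝ} {U : Set (Fin 2 → ℝ)}
    {n : WithTop ℕ∞}
    (ha : ContDiffOn ℝ n a U) (hb : ContDiffOn ℝ n b U) (hs : ContDiffOn ℝ n s U)
    (hc : ContDiffOn ℝ n c U) : ContDiffOn ℝ n (conn ι a b s c) U := by
  unfold conn
  refine ContDiffOn.add ?_ ?_
  · refine (ContinuousLinearMap.contDiff _).comp_contDiffOn ?_
    exact ((ha.smul contDiffOn_const).add (hs.smul contDiffOn_const)).add
      (hc.smul contDiffOn_const)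
  · refine (ContinuousLinearMap.contDiff _).comp_contDiffOn ?_
    exact ((hb.smul contDiffOn_const).add (hc.smul contDiffOn_const)).add
      (hs.smul contDiffOn_const)

lemma conn_fderiv (ι : Mat ≃ₐ[ℝ] R) {a b s c : (Fin 2 → ℝ) → ℝ} {q : Fin 2 → ℝ}
    {a' b' s' c' : (Fin 2 → ℝ) →L[ℝ] ℝ}
    (ha : HasFDerivAt a a' q) (hb : HasFDerivAt b b' q)
    (hs : HasFDerivAt s s' q) (hc : HasFDerivAt c c' q) (h k : Fin 2 → ℝ) :
    fderiv ℝ (conn ι a b s c) q h k =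
      ι (k 0 • cP (a' h) (s' h) (c' h) + k 1 • cQ (b' h) (s' h) (c' h)) := by
  have hP := ((ha.smul_const (ι mA)).add (hs.smul_const (ι mB))).add (hc.smul_const (ι mD))
  have hQ := ((hb.smul_const (ι mA)).add (hc.smul_const (ι mC))).add (hs.smul_const (ι mE))
  have h1 := (ContinuousLinearMap.smulRightL ℝ (Fin 2 → ℝ) R
    (ContinuousLinearMap.proj 0)).hasFDerivAt.comp q hP
  have h2 := (ContinuousLinearMap.smulRightL ℝ (Fin 2 → ℝ) R
    (ContinuousLinearMap.proj 1)).hasFDerivAt.comp q hQ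
  have h3 : HasFDerivAt (conn ι a b s c) _ q := h1.add h2
  rw [h3.fderiv]
  simp [cP, cQ]
  module

lemma vec2 (h : Fin 2 → ℝ) : h = h 0 • Pi.single 0 1 + h 1 • Pi.single 1 1 := by
  ext i; fin_cases i <;> simp

lemma clm2 {F : Type*} [NormedAddCommGroup F] [NormedSpace ℝ F] (L : (Fin 2 → ℝ) →L[ℝ] F)
    (h : Fin 2 → ℝ) : L h = h 0 • L (Pi.single 0 1) + h 1 • L (Pi.single 1 1) := by
  conv_lhs => rw [vec2 h]
  simp only [map_add, map_smul]

/-- Existence of the adapted frame and the front. -/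
lemma exists_frame_aux [CompleteSpace R] (ι : Mat ≃ₐ[ℝ] R) (U : Set (Fin 2 → ℝ)) (hU : IsOpen U)
    (hconn : IsConnected U) (hsc : SimplyConnectedSpace U)
    (θ : (Fin 2 → ℝ) → ℝ) (hθ : ContDiffOn ℝ (⊤ : ℕ∞) θ U)
    (hSG : ∀ q ∈ U, pdr 0 (pdr 0 θ) q + pdr 1 (pdr 1 θ) q = -4 * Real.sinh (θ q)) :
    ∃ f e₀ e₁ ν : (Fin 2 → ℝ) → (Fin 3 → ℝ),
      ContDiffOn ℝ (⊤ : ℕ∞) f U ∧ ContDiffOn ℝ (⊤ : ℕ∞) ν U ∧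
      ∀ q ∈ U,
        (e₀ q ⬝ᵥ e₀ q = 1 ∧ e₁ q ⬝ᵥ e₁ q = 1 ∧ ν q ⬝ᵥ ν q = 1 ∧
          e₀ q ⬝ᵥ e₁ q = 0 ∧ e₀ q ⬝ᵥ ν q = 0 ∧ e₁ q ⬝ᵥ ν q = 0) ∧
        (∀ X, fderiv ℝ f q X = (X 0 * (2 * Real.cosh (θ q / 2))) • e₀ q +
          (X 1 * (2 * Real.sinh (θ q / 2))) • e₁ q) ∧
        (∀ X, fderiv ℝ ν q X = -((X 0 * (2 * Real.sinh (θ q / 2))) • e₀ q +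
          (X 1 * (2 * Real.cosh (θ q / 2))) • e₁ q)) := by
  set a : (Fin 2 → ℝ) → ℝ := fun q => -(pdr 1 θ q / 2) with ha
  set b : (Fin 2 → ℝ) → ℝ := fun q => pdr 0 θ q / 2 with hb
  set s : (Fin 2 → ℝ) → ℝ := fun q => 2 * Real.sinh (θ q / 2) with hs
  set c : (Fin 2 → ℝ) → ℝ := fun q => 2 * Real.cosh (θ q / 2) with hc
  have hpd : ∀ k : Fin 2, ContDiffOn ℝ (⊤ : ℕ∞) (pdr k θ) U := fun k =>
    (hθ.fderiv_of_isOpen hU (by simp)).clm_apply contDiffOn_const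
  have sa : ContDiffOn ℝ (⊤ : ℕ∞) a U := ((hpd 1).div_const 2).neg
  have sb : ContDiffOn ℝ (⊤ : ℕ∞) b U := (hpd 0).div_const 2
  have ss : ContDiffOn ℝ (⊤ : ℕ∞) s U :=
    contDiffOn_const.mul (Real.contDiff_sinh.comp_contDiffOn (hθ.div_const 2))
  have sc : ContDiffOn ℝ (⊤ : ℕ∞) c U :=
    contDiffOn_const.mul (Real.contDiff_cosh.comp_contDiffOn (hθ.div_const 2))
  have sA : ContDiffOn ℝ (⊤ : ℕ∞) (conn ι a b s c) U := conn_smooth ι sa sb ss sc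
  have dif : ∀ {g : (Fin 2 → ℝ) → ℝ}, ContDiffOn ℝ (⊤ : ℕ∞) g U → ∀ q ∈ U,
      HasFDerivAt g (fderiv ℝ g q) q := fun hg q hq =>
    ((hg.contDiffAt (hU.mem_nhds hq)).differentiableAt (by simp)).hasFDerivAt
  have flat : ∀ p ∈ U, ∀ h k, fderiv ℝ (conn ι a b s c) p h k +
      conn ι a b s c p k * conn ι a b s c p h =
      fderiv ℝ (conn ι a b s c) p k h + conn ι a b s c p h * conn ι a b s c p k := by
    intro p hp h k
    have dθ := dif hθ p hp
    have d0 := dif (hpd 0) p hp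
    have d1 := dif (hpd 1) p hp
    have dh : HasFDerivAt (fun q => θ q / 2) ((1 / 2 : ℝ) • fderiv ℝ θ p) p := by
      simpa [div_eq_inv_mul] using dθ.const_mul (2⁻¹ : ℝ)
    have da : HasFDerivAt a (-((1 / 2 : ℝ) • fderiv ℝ (pdr 1 θ) p)) p := by
      have : HasFDerivAt (fun q => pdr 1 θ q / 2) ((1 / 2 : ℝ) • fderiv ℝ (pdr 1 θ) p) p := by
        simpa [div_eq_inv_mul] using d1.const_mul (2⁻¹ : ℝ)
      exact this.neg
    have db : HasFDerivAt b ((1 / 2 : ℝ) • fderiv ℝ (pdr 0 θ) p) p := by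
      simpa [hb, div_eq_inv_mul] using d0.const_mul (2⁻¹ : ℝ)
    have ds : HasFDerivAt s ((2:ℝ) • (Real.cosh (θ p / 2) • ((1 / 2 : ℝ) • fderiv ℝ θ p))) p :=
      dh.sinh.const_mul 2
    have dc : HasFDerivAt c ((2:ℝ) • (Real.sinh (θ p / 2) • ((1 / 2 : ℝ) • fderiv ℝ θ p))) p :=
      dh.cosh.const_mul 2
    rw [conn_fderiv ι da db ds dc, conn_fderiv ι da db ds dc]
    simp only [conn_apply]
    have e1 : ∀ h : Fin 2 → ℝ, fderiv ℝ θ p h = 2 * (b p * h 0 - a p * h 1) := by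
      intro h
      rw [clm2 (fderiv ℝ θ p) h]
      simp only [ha, hb, pdr, smul_eq_mul]; ring
    have key := flat_alg (a p) (b p) (s p) (c p) (h 0) (h 1) (k 0) (k 1)
      (-(pdr 0 (pdr 1 θ) p / 2)) (-(pdr 1 (pdr 1 θ) p / 2))
      (pdr 0 (pdr 0 θ) p / 2) (pdr 1 (pdr 0 θ) p / 2) (by
        have h1 := hSG p hp
        have h2 : Real.sinh (θ p) = 2 * Real.sinh (θ p / 2) * Real.cosh (θ p / 2) := by
          rw [← Real.sinh_two_mul]; congr 1; ring
        rw [h2] at h1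
        simp only [hs, hc]
        linarith)
    have ea : ∀ h : Fin 2 → ℝ, (-((1 / 2 : ℝ) • fderiv ℝ (pdr 1 θ) p)) h =
        h 0 * (-(pdr 0 (pdr 1 θ) p / 2)) + h 1 * (-(pdr 1 (pdr 1 θ) p / 2)) := by
      intro h
      rw [clm2 _ h]
      simp [pdr]; ring
    have eb : ∀ h : Fin 2 → ℝ, ((1 / 2 : ℝ) • fderiv ℝ (pdr 0 θ) p) h =
        h 0 * (pdr 0 (pdr 0 θ) p / 2) + h 1 * (pdr 1 (pdr 0 θ) p / 2) := by
      intro h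
      rw [clm2 _ h]
      simp [pdr]; ring
    have es : ∀ h : Fin 2 → ℝ,
        ((2:ℝ) • (Real.cosh (θ p / 2) • ((1 / 2 : ℝ) • fderiv ℝ θ p))) h =
        c p * (b p * h 0 - a p * h 1) := by
      intro h
      simp only [_root_.smul_apply, e1, smul_eq_mul, hc]; ring
    have ec : ∀ h : Fin 2 → ℝ,
        ((2:ℝ) • (Real.sinh (θ p / 2) • ((1 / 2 : ℝ) • fderiv ℝ θ p))) h =
        s p * (b p * h 0 - a p * h 1) := by
      intro h
      simp only [_root_.smul_apply, e1, smul_eq_mul, hs]; ring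
    simp only [ea, eb, es, ec]
    rw [← map_mul, ← map_mul, ← map_add, ← map_add]
    exact congrArg ι key
  obtain ⟨q₀, hq₀⟩ := hconn.nonempty
  obtain ⟨Y, hY0, hY⟩ := global_frobenius hU hsc
    (sA.of_le (WithTop.coe_le_coe.2 (le_top : (2 : ℕ∞) ≤ ⊤))) flat hq₀
  have sY := solution_smooth hU sA hY
  have fd : FiniteDimensional ℝ R := LinearEquiv.finiteDimensional ι.toLinearEquiv
  let ent : Fin 4 → Fin 4 → R →L[ℝ] ℝ := fun i j =>
    LinearMap.toContinuousLinearMap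
      ((Matrix.entryLinearMap ℝ ℝ i j) ∘ₗ ι.symm.toLinearMap)
  have hent : ∀ i j (m : R), ent i j m = ι.symm m i j := fun i j m => rfl
  have dent : ∀ q ∈ U, ∀ i j, HasFDerivAt (fun q => ι.symm (Y q) i j)
      ((ent i j).comp (rhs (conn ι a b s c q) (Y q))) q := fun q hq i j =>
    (ent i j).hasFDerivAt.comp q (hY q hq)
  have vent : ∀ q i j X, ((ent i j).comp (rhs (conn ι a b s c q) (Y q))) X =
      ∑ l, (X 0 • cP (a q) (s q) (c q) + X 1 • cQ (b q) (s q) (c q)) i l * ι.symm (Y q) l j := by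
    intro q i j X
    rw [ContinuousLinearMap.comp_apply, rhs_apply, conn_apply, hent, map_mul, AlgEquiv.symm_apply_apply,
      Matrix.mul_apply]
  let row : Fin 4 → (Fin 2 → ℝ) → Fin 3 → ℝ := fun i q x => ι.symm (Y q) i x.castSucc
  have srow : ∀ i, ContDiffOn ℝ (⊤ : ℕ∞) (row i) U := fun i =>
    contDiffOn_pi.2 fun x => (ent i x.castSucc).contDiff.comp_contDiffOn sY
  have drow : ∀ q ∈ U, ∀ i X, fderiv ℝ (row i) q X = fun x : Fin 3 =>
      ∑ l, (X 0 • cP (a q) (s q) (c q) + X 1 • cQ (b q) (s q) (c q)) i l * ι.symm (Y q) l x.castSucc := by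
    intro q hq i X
    have : HasFDerivAt (row i) (ContinuousLinearMap.pi fun x : Fin 3 =>
        (ent i x.castSucc).comp (rhs (conn ι a b s c q) (Y q))) q :=
      hasFDerivAt_pi.2 fun x => dent q hq i x.castSucc
    rw [this.fderiv]
    ext x
    rw [ContinuousLinearMap.pi_apply, vent]
  -- orthogonality of the frame
  have gram : ∀ q ∈ U, ∀ x y : Fin 3, (ι.symm (Y q) 0 x.castSucc * ι.symm (Y q) 0 y.castSucc
      + ι.symm (Y q) 1 x.castSucc * ι.symm (Y q) 1 y.castSucc + ι.symm (Y q) 2 x.castSucc * ι.symm (Y q) 2 y.castSucc) =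
      (1 : Matrix (Fin 3) (Fin 3) ℝ) x y := by
    intro q hq x y
    set g : (Fin 2 → ℝ) → ℝ := fun q => (ι.symm (Y q) 0 x.castSucc * ι.symm (Y q) 0 y.castSucc
      + ι.symm (Y q) 1 x.castSucc * ι.symm (Y q) 1 y.castSucc + ι.symm (Y q) 2 x.castSucc * ι.symm (Y q) 2 y.castSucc) with hg
    have dg : ∀ q ∈ U, HasFDerivAt g (0 : (Fin 2 → ℝ) →L[ℝ] ℝ) q := by
      intro q hq
      have := (((dent q hq 0 x.castSucc).mul (dent q hq 0 y.castSucc)).add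
        ((dent q hq 1 x.castSucc).mul (dent q hq 1 y.castSucc))).add
        ((dent q hq 2 x.castSucc).mul (dent q hq 2 y.castSucc))
      refine this.congr_fderiv ?_
      refine ContinuousLinearMap.ext fun X => ?_
      simp only [_root_.add_apply, _root_.smul_apply, vent,
        _root_.zero_apply, smul_eq_mul, cP_eq, cQ_eq, Fin.sum_univ_four]
      simp
      ring
    have hcst := hU.is_const_of_fderiv_eq_zero (𝕜 := ℝ) (f := g) hconn.isPreconnected
      (fun q hq => (dg q hq).differentiableAt.differentiableWithinAt)
      (fun q hq => (dg q hq).fderiv) hq hq₀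
    show g q = _
    rw [hcst]
    simp only [hg, hY0, map_one]
    fin_cases x <;> fin_cases y <;> simp [Matrix.one_apply]
  refine ⟨row 3, row 0, row 1, row 2, srow 3, srow 2, fun q hq => ⟨?_, ?_, ?_⟩⟩
  · let G : Matrix (Fin 3) (Fin 3) ℝ := fun i x => ι.symm (Y q) i.castSucc x.castSucc
    have h1 : Gᵀ * G = 1 := by
      ext x y
      rw [← gram q hq x y, Matrix.mul_apply, Fin.sum_univ_three]
      rfl
    have h2 : G * Gᵀ = 1 := mul_eq_one_comm.1 h1
    have h3 : ∀ i j : Fin 3, row i.castSucc q ⬝ᵥ row j.castSucc q =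
        (1 : Matrix (Fin 3) (Fin 3) ℝ) i j := by
      intro i j
      rw [← h2, Matrix.mul_apply]
      rfl
    exact ⟨h3 0 0, h3 1 1, h3 2 2, h3 0 1, h3 0 2, h3 1 2⟩
  · intro X
    rw [drow q hq 3 X]
    ext x
    simp [cP_eq, cQ_eq, Fin.sum_univ_four, row, hs, hc]
  · intro X
    rw [drow q hq 2 X]
    ext x
    simp [cP_eq, cQ_eq, Fin.sum_univ_four, row, hs, hc]
    try ring

/-- Existence of the adapted frame and the front. -/
lemma exists_frame (U : Set (Fin 2 → ℝ)) (hU : IsOpen U)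
    (hconn : IsConnected U) (hsc : SimplyConnectedSpace U)
    (θ : (Fin 2 → ℝ) → ℝ) (hθ : ContDiffOn ℝ (⊤ : ℕ∞) θ U)
    (hSG : ∀ q ∈ U, pdr 0 (pdr 0 θ) q + pdr 1 (pdr 1 θ) q = -4 * Real.sinh (θ q)) :
    ∃ f e₀ e₁ ν : (Fin 2 → ℝ) → (Fin 3 → ℝ),
      ContDiffOn ℝ (⊤ : ℕ∞) f U ∧ ContDiffOn ℝ (⊤ : ℕ∞) ν U ∧
      ∀ q ∈ U,
        (e₀ q ⬝ᵥ e₀ q = 1 ∧ e₁ q ⬝ᵥ e₁ q = 1 ∧ ν q ⬝ᵥ ν q = 1 ∧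
          e₀ q ⬝ᵥ e₁ q = 0 ∧ e₀ q ⬝ᵥ ν q = 0 ∧ e₁ q ⬝ᵥ ν q = 0) ∧
        (∀ X, fderiv ℝ f q X = (X 0 * (2 * Real.cosh (θ q / 2))) • e₀ q +
          (X 1 * (2 * Real.sinh (θ q / 2))) • e₁ q) ∧
        (∀ X, fderiv ℝ ν q X = -((X 0 * (2 * Real.sinh (θ q / 2))) • e₀ q +
          (X 1 * (2 * Real.cosh (θ q / 2))) • e₁ q)) :=
  exists_frame_aux (Matrix.toLinAlgEquiv'.trans (Module.End.toContinuousLinearMap (Fin 4 → ℝ)))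
    U hU hconn hsc θ hθ hSG

end Frame

/-- Realization of fronts of constant Gaussian curvature `1` in `ℝ³` from solutions of the
sinh-Gordon equation `θ_{uu} + θ_{vv} = −4 sinh θ`: there is a front `(f, ν)` without
umbilic points with `I = 4(cosh²(θ/2) du² + sinh²(θ/2) dv²)`,
`II = 4 cosh(θ/2) sinh(θ/2) (du² + dv²)`, `III = 4(sinh²(θ/2) du² + cosh²(θ/2) dv²)`;
its singular set is `{θ = 0}` and its Gaussian curvature is `1` at regular points. -/
theorem sinh_gordon_realization (U : Set (Fin 2 → ℝ)) (hU : IsOpen U)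
    (hconn : IsConnected U) (hsc : SimplyConnectedSpace U)
    (θ : (Fin 2 → ℝ) → ℝ) (hθ : ContDiffOn ℝ (⊤ : ℕ∞) θ U)
    (hSG : ∀ q ∈ U, pdr 0 (pdr 0 θ) q + pdr 1 (pdr 1 θ) q = -4 * Real.sinh (θ q)) :
    ∃ f ν : (Fin 2 → ℝ) → (Fin 3 → ℝ),
      ContDiffOn ℝ (⊤ : ℕ∞) f U ∧ ContDiffOn ℝ (⊤ : ℕ∞) ν U ∧
      (∀ q ∈ U, ν q ⬝ᵥ ν q = 1) ∧
      (∀ q ∈ U, ∀ k : Fin 2, pd k f q ⬝ᵥ ν q = 0) ∧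
      (∀ q ∈ U, ∀ X : Fin 2 → ℝ, fderiv ℝ f q X = 0 → fderiv ℝ ν q X = 0 → X = 0) ∧
      (∀ q ∈ U,
        pd 0 f q ⬝ᵥ pd 0 f q = 4 * Real.cosh (θ q / 2) ^ 2 ∧
        pd 0 f q ⬝ᵥ pd 1 f q = 0 ∧
        pd 1 f q ⬝ᵥ pd 1 f q = 4 * Real.sinh (θ q / 2) ^ 2 ∧
        pd 0 f q ⬝ᵥ pd 0 ν q = -2 * Real.sinh (θ q) ∧
        pd 0 f q ⬝ᵥ pd 1 ν q = 0 ∧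
        pd 1 f q ⬝ᵥ pd 0 ν q = 0 ∧
        pd 1 f q ⬝ᵥ pd 1 ν q = -2 * Real.sinh (θ q) ∧
        pd 0 ν q ⬝ᵥ pd 0 ν q = 4 * Real.sinh (θ q / 2) ^ 2 ∧
        pd 0 ν q ⬝ᵥ pd 1 ν q = 0 ∧
        pd 1 ν q ⬝ᵥ pd 1 ν q = 4 * Real.cosh (θ q / 2) ^ 2) ∧
      (∀ q ∈ U, (∀ X : Fin 2 → ℝ, fderiv ℝ f q X = 0 → X = 0) →
        ¬∃ c : ℝ,
          -(pd 0 f q ⬝ᵥ pd 0 ν q) = c * (pd 0 f q ⬝ᵥ pd 0 f q) ∧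
          -(pd 0 f q ⬝ᵥ pd 1 ν q) = c * (pd 0 f q ⬝ᵥ pd 1 f q) ∧
          -(pd 1 f q ⬝ᵥ pd 1 ν q) = c * (pd 1 f q ⬝ᵥ pd 1 f q)) ∧
      (∀ q ∈ U, ((∃ X : Fin 2 → ℝ, X ≠ 0 ∧ fderiv ℝ f q X = 0) ↔ θ q = 0)) ∧
      (∀ q ∈ U, θ q ≠ 0 →
        ((-(pd 0 f q ⬝ᵥ pd 0 ν q)) * (-(pd 1 f q ⬝ᵥ pd 1 ν q))
            - (-(pd 0 f q ⬝ᵥ pd 1 ν q)) ^ 2) /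
          ((pd 0 f q ⬝ᵥ pd 0 f q) * (pd 1 f q ⬝ᵥ pd 1 f q)
            - (pd 0 f q ⬝ᵥ pd 1 f q) ^ 2) = 1) := by
  obtain ⟨f, e₀, e₁, ν, hf, hν, H⟩ := exists_frame U hU hconn hsc θ hθ hSG
  have hpf : ∀ q ∈ U, pd 0 f q = (2 * Real.cosh (θ q / 2)) • e₀ q ∧
      pd 1 f q = (2 * Real.sinh (θ q / 2)) • e₁ q ∧
      pd 0 ν q = -((2 * Real.sinh (θ q / 2)) • e₀ q) ∧
      pd 1 ν q = -((2 * Real.cosh (θ q / 2)) • e₁ q) := by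
    intro q hq
    obtain ⟨-, h1, h2⟩ := H q hq
    simp [pd, h1, h2]
  have forms : ∀ q ∈ U,
        pd 0 f q ⬝ᵥ pd 0 f q = 4 * Real.cosh (θ q / 2) ^ 2 ∧
        pd 0 f q ⬝ᵥ pd 1 f q = 0 ∧
        pd 1 f q ⬝ᵥ pd 1 f q = 4 * Real.sinh (θ q / 2) ^ 2 ∧
        pd 0 f q ⬝ᵥ pd 0 ν q = -2 * Real.sinh (θ q) ∧
        pd 0 f q ⬝ᵥ pd 1 ν q = 0 ∧
        pd 1 f q ⬝ᵥ pd 0 ν q = 0 ∧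
        pd 1 f q ⬝ᵥ pd 1 ν q = -2 * Real.sinh (θ q) ∧
        pd 0 ν q ⬝ᵥ pd 0 ν q = 4 * Real.sinh (θ q / 2) ^ 2 ∧
        pd 0 ν q ⬝ᵥ pd 1 ν q = 0 ∧
        pd 1 ν q ⬝ᵥ pd 1 ν q = 4 * Real.cosh (θ q / 2) ^ 2 := by
    intro q hq
    obtain ⟨p1, p2, p3, p4⟩ := hpf q hq
    obtain ⟨⟨o1, o2, o3, o4, o5, o6⟩, -, -⟩ := H q hq
    have o4' : e₁ q ⬝ᵥ e₀ q = 0 := by rw [dotProduct_comm]; exact o4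
    have h2 : Real.sinh (θ q) = 2 * Real.sinh (θ q / 2) * Real.cosh (θ q / 2) := by
      rw [← Real.sinh_two_mul]; congr 1; ring
    rw [p1, p2, p3, p4, h2]
    refine ⟨?_, ?_, ?_, ?_, ?_, ?_, ?_, ?_, ?_, ?_⟩ <;>
      simp only [smul_dotProduct, dotProduct_smul, neg_dotProduct, dotProduct_neg,
        o1, o2, o4, o4', smul_eq_mul] <;> ring
  have coef : ∀ q ∈ U, ∀ x y : ℝ, x • e₀ q + y • e₁ q = 0 → x = 0 ∧ y = 0 := by
    intro q hq x y h
    obtain ⟨⟨o1, o2, o3, o4, o5, o6⟩, -, -⟩ := H q hq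
    have o4' : e₁ q ⬝ᵥ e₀ q = 0 := by rw [dotProduct_comm]; exact o4
    have h1 := congrArg (fun w => e₀ q ⬝ᵥ w) h
    have h2 := congrArg (fun w => e₁ q ⬝ᵥ w) h
    simp [dotProduct_add, dotProduct_smul, o1, o2, o4, o4'] at h1 h2
    exact ⟨h1, h2⟩
  have cpos : ∀ q, 0 < Real.cosh (θ q / 2) := fun q => Real.cosh_pos _
  have inj0 : ∀ q ∈ U, ∀ X : Fin 2 → ℝ, fderiv ℝ f q X = 0 →
      X 0 = 0 ∧ X 1 * (2 * Real.sinh (θ q / 2)) = 0 := by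
    intro q hq X h
    obtain ⟨-, h1, -⟩ := H q hq
    rw [h1] at h
    obtain ⟨h3, h4⟩ := coef q hq _ _ h
    have := (cpos q).ne'
    refine ⟨?_, h4⟩
    rcases mul_eq_zero.1 h3 with h | h
    · exact h
    · exact absurd h (by positivity)
  have sne : ∀ q, θ q ≠ 0 → Real.sinh (θ q / 2) ≠ 0 := by
    intro q h h0
    rw [Real.sinh_eq_zero] at h0
    exact h (by linarith)
  have sing : ∀ q ∈ U, ((∃ X : Fin 2 → ℝ, X ≠ 0 ∧ fderiv ℝ f q X = 0) ↔ θ q = 0) := by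
    intro q hq
    constructor
    · rintro ⟨X, hX, h⟩
      by_contra h0
      obtain ⟨h1, h2⟩ := inj0 q hq X h
      have := sne q h0
      apply hX
      ext i
      fin_cases i
      · exact h1
      · simpa [this] using h2
    · intro h0
      refine ⟨Pi.single 1 1, fun h => ?_, ?_⟩
      · simpa using congrFun h 1
      · rw [(H q hq).2.1]; simp [h0]
  refine ⟨f, ν, hf, hν, fun q hq => (H q hq).1.2.2.1, ?_, ?_, forms, ?_, sing, ?_⟩
  · intro q hq k
    obtain ⟨p1, p2, p3, p4⟩ := hpf q hq
    obtain ⟨⟨o1, o2, o3, o4, o5, o6⟩, -, -⟩ := H q hq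
    fin_cases k
    · show pd 0 f q ⬝ᵥ ν q = 0
      rw [p1, smul_dotProduct, o5, smul_zero]
    · show pd 1 f q ⬝ᵥ ν q = 0
      rw [p2, smul_dotProduct, o6, smul_zero]
  · intro q hq X h1 h2
    obtain ⟨h3, -⟩ := inj0 q hq X h1
    rw [(H q hq).2.2, neg_eq_zero] at h2
    obtain ⟨-, h4⟩ := coef q hq _ _ h2
    have := (cpos q).ne'
    ext i
    fin_cases i
    · exact h3
    · simpa [this] using h4
  · intro q hq hreg
    rintro ⟨k, h1, -, h3⟩
    have h0 : θ q ≠ 0 := by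
      intro h0
      obtain ⟨X, hX, h⟩ := (sing q hq).2 h0
      exact hX (hreg X h)
    have hs := sne q h0
    obtain ⟨p1, -, p3, p4, -, -, p7, -⟩ := forms q hq
    rw [p4, p1] at h1
    rw [p7, p3] at h3
    have h2 : Real.sinh (θ q) = 2 * Real.sinh (θ q / 2) * Real.cosh (θ q / 2) := by
      rw [← Real.sinh_two_mul]; congr 1; ring
    have hc := Real.cosh_sq (θ q / 2)
    have hk : k = 0 := by nlinarith
    rw [hk, h2] at h1
    have : Real.sinh (θ q / 2) * Real.cosh (θ q / 2) = 0 := by linarith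
    exact (mul_ne_zero hs (cpos q).ne') this
  · intro q hq h0
    have hs := sne q h0
    have hc := (cpos q).ne'
    obtain ⟨p1, p2, p3, p4, p5, -, p7, -⟩ := forms q hq
    have h2 : Real.sinh (θ q) = 2 * Real.sinh (θ q / 2) * Real.cosh (θ q / 2) := by
      rw [← Real.sinh_two_mul]; congr 1; ring
    rw [p1, p2, p3, p4, p5, p7, h2]
    field_simp
    ring
end
end

section
/- Let U ⊆ ℝ² be a connected open set and let (f, ν) be a front on U with values in ℝ³ such that the regular set R_f = U∖Σ is dense in U, the Gaussian curvature equals 1 at every point of R_f (i.e. II(∂_u,∂_u)II(∂_v,∂_v) − II(∂_u,∂_v)² = I(∂_u,∂_u)I(∂_v,∂_v) − I(∂_u,∂_v)² ≠ 0 there), and no point of R_f is umbilic. Then every point of U has an open neighborhood V, a diffeomorphism Φ from V onto an open set W ⊆ ℝ² with coordinates (u, v), and a smooth function θ : W → ℝ satisfying the sinh-Gordon equation θ_{uu} + θ_{vv} = −4 sinh θ, such that the maps f̃ := f∘Φ^{−1} and ν̃ := ν∘Φ^{−1} satisfy: ⟨f̃_u, f̃_u⟩ = 4 cosh²(θ/2),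 ⟨f̃_u, f̃_v⟩ = 0, ⟨f̃_v, f̃_v⟩ = 4 sinh²(θ/2); ⟨f̃_u, ν̃_u⟩ = −2 sinh θ, ⟨f̃_u, ν̃_v⟩ = ⟨f̃_v, ν̃_u⟩ = 0, ⟨f̃_v, ν̃_v⟩ = −2 sinh θ; ⟨ν̃_u, ν̃_u⟩ = 4 sinh²(θ/2), ⟨ν̃_u, ν̃_v⟩ = 0, ⟨ν̃_v, ν̃_v⟩ = 4 cosh²(θ/2). -/
open scoped Matrix

noncomputable section

/-! ### Basic calculus of partial derivatives -/

lemma sm_diffAt {E F : Type*} [NormedAddCommGroup E] [NormedSpace ℝ E]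
    [NormedAddCommGroup F] [NormedSpace ℝ F] {U : Set E} (hU : IsOpen U) {f : E → F}
    (hf : ContDiffOn ℝ (⊤ : ℕ∞) f U) {q : E} (hq : q ∈ U) : DifferentiableAt ℝ f q :=
  (hf.contDiffAt (hU.mem_nhds hq)).differentiableAt (by simp)

lemma sm_fderiv {E F : Type*} [NormedAddCommGroup E] [NormedSpace ℝ E]
    [NormedAddCommGroup F] [NormedSpace ℝ F] {U : Set E} (hU : IsOpen U) {f : E → F}
    (hf : ContDiffOn ℝ (⊤ : ℕ∞) f U) : ContDiffOn ℝ (⊤ : ℕ∞) (fderiv ℝ f) U :=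
  ((contDiffOn_infty_iff_fderiv_of_isOpen hU).1 hf).2

lemma sm_pd {m N : ℕ} {U : Set (Fin m → ℝ)} (hU : IsOpen U) {f : (Fin m → ℝ) → (Fin N → ℝ)}
    (hf : ContDiffOn ℝ (⊤ : ℕ∞) f U) (k : Fin m) : ContDiffOn ℝ (⊤ : ℕ∞) (pd k f) U :=
  (sm_fderiv hU hf).clm_apply contDiffOn_const

lemma sm_pdr {m : ℕ} {U : Set (Fin m → ℝ)} (hU : IsOpen U) {f : (Fin m → ℝ) → ℝ}
    (hf : ContDiffOn ℝ (⊤ : ℕ∞) f U) (k : Fin m) : ContDiffOn ℝ (⊤ : ℕ∞) (pdr k f) U :=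
  (sm_fderiv hU hf).clm_apply contDiffOn_const

lemma sm_dot {m N : ℕ} {U : Set (Fin m → ℝ)} {a b : (Fin m → ℝ) → (Fin N → ℝ)}
    (ha : ContDiffOn ℝ (⊤ : ℕ∞) a U) (hb : ContDiffOn ℝ (⊤ : ℕ∞) b U) :
    ContDiffOn ℝ (⊤ : ℕ∞) (fun q => a q ⬝ᵥ b q) U := by
  unfold dotProduct
  exact ContDiffOn.sum fun i _ => (contDiffOn_pi.1 ha i).mul (contDiffOn_pi.1 hb i)

lemma pd_apply {m N : ℕ} {f : (Fin m → ℝ) → (Fin N → ℝ)} {q : Fin m → ℝ}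
    (hf : DifferentiableAt ℝ f q) (k : Fin m) (i : Fin N) :
    pd k f q i = pdr k (fun x => f x i) q := by
  unfold pd pdr
  rw [fderiv_pi (fun i => (differentiableAt_pi.1 hf i))]
  rfl

lemma pdr_mul' {m : ℕ} {a b : (Fin m → ℝ) → ℝ} {q : Fin m → ℝ}
    (ha : DifferentiableAt ℝ a q) (hb : DifferentiableAt ℝ b q) (k : Fin m) :
    pdr k (fun x => a x * b x) q = pdr k a q * b q + a q * pdr k b q := by
  unfold pdr
  rw [fderiv_fun_mul ha hb]
  simp
  ring

lemma pdr_dot {m N : ℕ} {a b : (Fin m → ℝ) → (Fin N → ℝ)} {q : Fin m → ℝ}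
    (ha : DifferentiableAt ℝ a q) (hb : DifferentiableAt ℝ b q) (k : Fin m) :
    pdr k (fun x => a x ⬝ᵥ b x) q = pd k a q ⬝ᵥ b q + a q ⬝ᵥ pd k b q := by
  have ha' := differentiableAt_pi.1 ha
  have hb' := differentiableAt_pi.1 hb
  have : pdr k (fun x => a x ⬝ᵥ b x) q = ∑ i, pdr k (fun x => a x i * b x i) q := by
    unfold pdr dotProduct
    rw [fderiv_fun_sum (fun i _ => (ha' i).fun_mul (hb' i))]
    simp
  rw [this]
  unfold dotProduct
  rw [← Finset.sum_add_distrib]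
  refine Finset.sum_congr rfl fun i _ => ?_
  rw [pdr_mul' (ha' i) (hb' i), pd_apply ha, pd_apply hb]

lemma pdr_congr {m : ℕ} {U : Set (Fin m → ℝ)} (hU : IsOpen U) {a b : (Fin m → ℝ) → ℝ}
    (h : ∀ q ∈ U, a q = b q) {q : Fin m → ℝ} (hq : q ∈ U) (k : Fin m) :
    pdr k a q = pdr k b q := by
  unfold pdr
  rw [Filter.EventuallyEq.fderiv_eq (Filter.eventuallyEq_of_mem (hU.mem_nhds hq) h)]

lemma pd_congr {m N : ℕ} {U : Set (Fin m → ℝ)} (hU : IsOpen U)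
    {a b : (Fin m → ℝ) → (Fin N → ℝ)}
    (h : ∀ q ∈ U, a q = b q) {q : Fin m → ℝ} (hq : q ∈ U) (k : Fin m) :
    pd k a q = pd k b q := by
  unfold pd
  rw [Filter.EventuallyEq.fderiv_eq (Filter.eventuallyEq_of_mem (hU.mem_nhds hq) h)]

lemma pd_comm {m N : ℕ} {U : Set (Fin m → ℝ)} (hU : IsOpen U)
    {f : (Fin m → ℝ) → (Fin N → ℝ)} (hf : ContDiffOn ℝ (⊤ : ℕ∞) f U)
    {q : Fin m → ℝ} (hq : q ∈ U) (j k : Fin m) : pd j (pd k f) q = pd k (pd j f) q := by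
  have hd : DifferentiableAt ℝ (fderiv ℝ f) q := sm_diffAt hU (sm_fderiv hU hf) hq
  have key : ∀ j k : Fin m,
      pd j (pd k f) q = fderiv ℝ (fderiv ℝ f) q (Pi.single j 1) (Pi.single k 1) := by
    intro j k
    change fderiv ℝ (fun x => fderiv ℝ f x (Pi.single k 1)) q (Pi.single j 1) = _
    rw [fderiv_clm_apply hd (differentiableAt_const _)]
    simp
  rw [key, key]
  exact ((hf.contDiffAt (hU.mem_nhds hq)).isSymmSndFDerivAt (by simp; exact WithTop.coe_le_coe.2 (le_top (a := (2 : ℕ∞))))) _ _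

lemma pd_smul' {m N : ℕ} {a : (Fin m → ℝ) → ℝ} {b : (Fin m → ℝ) → (Fin N → ℝ)} {q : Fin m → ℝ}
    (ha : DifferentiableAt ℝ a q) (hb : DifferentiableAt ℝ b q) (k : Fin m) :
    pd k (fun x => a x • b x) q = pdr k a q • b q + a q • pd k b q := by
  unfold pdr pd
  rw [fderiv_fun_smul ha hb]
  simp [add_comm]

lemma pd_add' {m N : ℕ} {a b : (Fin m → ℝ) → (Fin N → ℝ)} {q : Fin m → ℝ}
    (ha : DifferentiableAt ℝ a q) (hb : DifferentiableAt ℝ b q) (k : Fin m) :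
    pd k (fun x => a x + b x) q = pd k a q + pd k b q := by
  unfold pd
  rw [fderiv_fun_add ha hb]
  simp

lemma pd_sub' {m N : ℕ} {a b : (Fin m → ℝ) → (Fin N → ℝ)} {q : Fin m → ℝ}
    (ha : DifferentiableAt ℝ a q) (hb : DifferentiableAt ℝ b q) (k : Fin m) :
    pd k (fun x => a x - b x) q = pd k a q - pd k b q := by
  unfold pd
  rw [fderiv_fun_sub ha hb]
  simp

lemma fderiv_eq_pd {N : ℕ} (f : (Fin 2 → ℝ) → (Fin N → ℝ)) (q X : Fin 2 → ℝ) :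
    fderiv ℝ f q X = X 0 • pd 0 f q + X 1 • pd 1 f q := by
  have : X = X 0 • Pi.single 0 1 + X 1 • Pi.single (1 : Fin 2) (1 : ℝ) := by
    ext i; fin_cases i <;> simp
  unfold pd
  conv_lhs => rw [this]
  simp only [map_add, map_smul]

/-! ### Linear algebra in three-space -/

lemma dot3 (a b : Fin 3 → ℝ) : a ⬝ᵥ b = a 0 * b 0 + a 1 * b 1 + a 2 * b 2 := by
  simp [dotProduct, Fin.sum_univ_three]

lemma dot_self_zero {a : Fin 3 → ℝ} (h : a ⬝ᵥ a = 0) : a = 0 :=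
  dotProduct_self_eq_zero.1 h

lemma dot_self_pos {a : Fin 3 → ℝ} (h : a ≠ 0) : 0 < a ⬝ᵥ a := by
  have h0 : a ⬝ᵥ a ≠ 0 := fun h' => h (dot_self_zero h')
  have h1 : 0 ≤ a ⬝ᵥ a := by rw [dot3]; nlinarith [sq_nonneg (a 0), sq_nonneg (a 1), sq_nonneg (a 2)]
  exact lt_of_le_of_ne h1 (Ne.symm h0)

/-- Parseval for an orthonormal triple. -/
lemma parseval {a b n : Fin 3 → ℝ} (haa : a ⬝ᵥ a = 1) (hbb : b ⬝ᵥ b = 1) (hnn : n ⬝ᵥ n = 1)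
    (hab : a ⬝ᵥ b = 0) (han : a ⬝ᵥ n = 0) (hbn : b ⬝ᵥ n = 0) (u w : Fin 3 → ℝ) :
    u ⬝ᵥ w = (u ⬝ᵥ a) * (w ⬝ᵥ a) + (u ⬝ᵥ b) * (w ⬝ᵥ b) + (u ⬝ᵥ n) * (w ⬝ᵥ n) := by
  let M : Matrix (Fin 3) (Fin 3) ℝ := !![a 0, a 1, a 2; b 0, b 1, b 2; n 0, n 1, n 2]
  have h1 : M * Mᵀ = 1 := by
    rw [dot3] at *
    ext i j
    fin_cases i <;> fin_cases j <;>
      simp [M, Matrix.mul_apply, Fin.sum_univ_three] <;> linarith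
  have h2 : Mᵀ * M = 1 := mul_eq_one_comm.1 h1
  have e : ∀ i j : Fin 3, a i * a j + b i * b j + n i * n j = if i = j then 1 else 0 := by
    intro i j
    have := congrFun (congrFun h2 i) j
    rw [Matrix.mul_apply, Fin.sum_univ_three, Matrix.one_apply] at this
    rw [← this]
    fin_cases i <;> fin_cases j <;> simp [M]
  have e00 := e 0 0
  have e01 := e 0 1
  have e02 := e 0 2
  have e11 := e 1 1
  have e12 := e 1 2
  have e22 := e 2 2
  simp at e00 e01 e02 e11 e12 e22
  simp only [dot3]
  linear_combination (-(u 0 * w 0)) * e00 - (u 0 * w 1 + u 1 * w 0) * e01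
    - (u 0 * w 2 + u 2 * w 0) * e02 - u 1 * w 1 * e11 - (u 1 * w 2 + u 2 * w 1) * e12
    - u 2 * w 2 * e22

/-- A tangent vector expands in the orthonormal tangent frame. -/
lemma expand {a b n : Fin 3 → ℝ} (haa : a ⬝ᵥ a = 1) (hbb : b ⬝ᵥ b = 1) (hnn : n ⬝ᵥ n = 1)
    (hab : a ⬝ᵥ b = 0) (han : a ⬝ᵥ n = 0) (hbn : b ⬝ᵥ n = 0) {u : Fin 3 → ℝ} (hu : u ⬝ᵥ n = 0) :
    u = (u ⬝ᵥ a) • a + (u ⬝ᵥ b) • b := by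
  have : (u - ((u ⬝ᵥ a) • a + (u ⬝ᵥ b) • b)) = 0 := by
    apply dot_self_zero
    have hba : b ⬝ᵥ a = 0 := by rw [dotProduct_comm]; exact hab
    rw [parseval haa hbb hnn hab han hbn]
    simp only [sub_dotProduct, add_dotProduct, smul_dotProduct, smul_eq_mul, haa, hbb, hab, hba,
      han, hbn, hu]
    ring
  exact sub_eq_zero.1 this

/-- Pointwise algebra at a regular point. -/
lemma regular_algebra {f0 f1 n0 n1 n : Fin 3 → ℝ} (hn : n ⬝ᵥ n = 1)
    (hf0 : f0 ⬝ᵥ n = 0) (hf1 : f1 ⬝ᵥ n = 0) (hn0 : n0 ⬝ᵥ n = 0) (hn1 : n1 ⬝ᵥ n = 0)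
    (hsym : f0 ⬝ᵥ n1 = f1 ⬝ᵥ n0)
    (hK : (f0 ⬝ᵥ n0) * (f1 ⬝ᵥ n1) - (f0 ⬝ᵥ n1) ^ 2
      = (f0 ⬝ᵥ f0) * (f1 ⬝ᵥ f1) - (f0 ⬝ᵥ f1) ^ 2)
    (hD : (f0 ⬝ᵥ f0) * (f1 ⬝ᵥ f1) - (f0 ⬝ᵥ f1) ^ 2 ≠ 0) :
    (∃ T : ℝ, f0 ⬝ᵥ f0 + n0 ⬝ᵥ n0 = T * (f0 ⬝ᵥ n0) ∧
      f0 ⬝ᵥ f1 + n0 ⬝ᵥ n1 = T * (f0 ⬝ᵥ n1) ∧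
      f1 ⬝ᵥ f1 + n1 ⬝ᵥ n1 = T * (f1 ⬝ᵥ n1)) ∧
    (n0 ⬝ᵥ n0) * (n1 ⬝ᵥ n1) - (n0 ⬝ᵥ n1) ^ 2
      = (f0 ⬝ᵥ f0) * (f1 ⬝ᵥ f1) - (f0 ⬝ᵥ f1) ^ 2 := by
  have hinj : ∀ w : Fin 3 → ℝ, f0 ⬝ᵥ w = 0 → f1 ⬝ᵥ w = 0 → n ⬝ᵥ w = 0 → w = 0 := by
    intro w h0 h1 h2
    let M : Matrix (Fin 3) (Fin 3) ℝ := !![f0 0, f0 1, f0 2; f1 0, f1 1, f1 2; n 0, n 1, n 2]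
    have hdet : M.det ≠ 0 := by
      intro hz
      apply hD
      have : M.det ^ 2 = ((f0 ⬝ᵥ f0) * (f1 ⬝ᵥ f1) - (f0 ⬝ᵥ f1) ^ 2) * (n ⬝ᵥ n)
          - (f0 ⬝ᵥ n) ^ 2 * (f1 ⬝ᵥ f1) - (f1 ⬝ᵥ n) ^ 2 * (f0 ⬝ᵥ f0)
          + 2 * (f0 ⬝ᵥ n) * (f1 ⬝ᵥ n) * (f0 ⬝ᵥ f1) := by
        simp only [dot3, M, Matrix.det_fin_three]
        simp
        ring
      rw [hz, hn, hf0, hf1] at this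
      linarith
    apply Matrix.eq_zero_of_mulVec_eq_zero hdet
    rw [dot3] at h0 h1 h2
    ext i
    fin_cases i <;> simp [M, Matrix.mulVec, dotProduct, Fin.sum_univ_three] <;> assumption
  set D := (f0 ⬝ᵥ f0) * (f1 ⬝ᵥ f1) - (f0 ⬝ᵥ f1) ^ 2 with hDdef
  have c10 : f1 ⬝ᵥ f0 = f0 ⬝ᵥ f1 := dotProduct_comm _ _
  have hex : ∀ m : Fin 3 → ℝ, m ⬝ᵥ n = 0 → ∃ a b : ℝ, m = a • f0 + b • f1 := by
    intro m hm
    refine ⟨((f0 ⬝ᵥ m) * (f1 ⬝ᵥ f1) - (f1 ⬝ᵥ m) * (f0 ⬝ᵥ f1)) / D,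
      ((f1 ⬝ᵥ m) * (f0 ⬝ᵥ f0) - (f0 ⬝ᵥ m) * (f0 ⬝ᵥ f1)) / D, ?_⟩
    apply sub_eq_zero.1
    apply hinj
    · simp only [dotProduct_sub, dotProduct_add, dotProduct_smul, smul_eq_mul]
      field_simp
      rw [hDdef]; ring
    · simp only [dotProduct_sub, dotProduct_add, dotProduct_smul, smul_eq_mul, c10]
      field_simp
      rw [hDdef]; ring
    · simp only [dotProduct_sub, dotProduct_add, dotProduct_smul, smul_eq_mul]
      rw [dotProduct_comm n, dotProduct_comm n, dotProduct_comm n, hm, hf0, hf1]; ring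
  obtain ⟨a, b, h0⟩ := hex n0 hn0
  obtain ⟨c, d, h1⟩ := hex n1 hn1
  subst h0 h1
  simp only [dotProduct_add, dotProduct_smul, smul_eq_mul, add_dotProduct, smul_dotProduct, c10]
    at hsym hK ⊢
  set E := f0 ⬝ᵥ f0
  set F := f0 ⬝ᵥ f1
  set G := f1 ⬝ᵥ f1
  have hdet : a * d - b * c = 1 := by
    apply mul_left_cancel₀ hD
    rw [hDdef] at hK ⊢
    linear_combination hK + (c * E + d * F) * hsym
  refine ⟨⟨a + d, ?_, ?_, ?_⟩, ?_⟩
  · linear_combination (-E) * hdet - b * hsym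
  · linear_combination (-F) * hdet - d * hsym
  · linear_combination (-G) * hdet + c * hsym
  · rw [hDdef]
    linear_combination (E * G - F ^ 2) * (a * d - b * c + 1) * hdet

/-! ### Closedness, integration, and the sinh-Gordon equation -/

lemma pdr_exp {m : ℕ} {t : (Fin m → ℝ) → ℝ} {q : Fin m → ℝ}
    (ht : DifferentiableAt ℝ t q) (c : ℝ) (k : Fin m) :
    pdr k (fun x => Real.exp (c * t x)) q = Real.exp (c * t q) * (c * pdr k t q) := by
  unfold pdr
  rw [fderiv_exp (ht.const_mul c), fderiv_const_mul ht]
  simp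

lemma sm_exp {m : ℕ} {U : Set (Fin m → ℝ)} {t : (Fin m → ℝ) → ℝ}
    (ht : ContDiffOn ℝ (⊤ : ℕ∞) t U) (c : ℝ) :
    ContDiffOn ℝ (⊤ : ℕ∞) (fun x => Real.exp (c * t x)) U :=
  (contDiffOn_const.mul ht).exp

lemma frame_deriv {V : Set (Fin 2 → ℝ)} (hV : IsOpen V) {a b : (Fin 2 → ℝ) → (Fin 3 → ℝ)}
    (ha : ContDiffOn ℝ (⊤ : ℕ∞) a V) (hb : ContDiffOn ℝ (⊤ : ℕ∞) b V) {c : ℝ}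
    (hab : ∀ q ∈ V, a q ⬝ᵥ b q = c) {q : Fin 2 → ℝ} (hq : q ∈ V) (k : Fin 2) :
    pd k a q ⬝ᵥ b q + a q ⬝ᵥ pd k b q = 0 := by
  rw [← pdr_dot (sm_diffAt hV ha hq) (sm_diffAt hV hb hq), pdr_congr hV hab hq]
  simp [pdr]

lemma closed_form {V : Set (Fin 2 → ℝ)} (hV : IsOpen V)
    {x y n a b : (Fin 2 → ℝ) → (Fin 3 → ℝ)} {t : (Fin 2 → ℝ) → ℝ} {ε : ℝ} (hε : ε ≠ 0)
    (hx : ContDiffOn ℝ (⊤ : ℕ∞) x V) (hy : ContDiffOn ℝ (⊤ : ℕ∞) y V)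
    (ha : ContDiffOn ℝ (⊤ : ℕ∞) a V) (ht : ContDiffOn ℝ (⊤ : ℕ∞) t V)
    (haa : ∀ q ∈ V, a q ⬝ᵥ a q = 1) (hbb : ∀ q ∈ V, b q ⬝ᵥ b q = 1)
    (hnn : ∀ q ∈ V, n q ⬝ᵥ n q = 1) (hab : ∀ q ∈ V, a q ⬝ᵥ b q = 0)
    (han : ∀ q ∈ V, a q ⬝ᵥ n q = 0) (hbn : ∀ q ∈ V, b q ⬝ᵥ n q = 0)
    (hxn : ∀ q ∈ V, ∀ k, pd k x q ⬝ᵥ n q = 0) (hyn : ∀ q ∈ V, ∀ k, pd k y q ⬝ᵥ n q = 0)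
    (hxa : ∀ q ∈ V, ∀ k, pd k x q ⬝ᵥ a q = ε * (Real.exp (-1 * t q) * (pd k y q ⬝ᵥ a q)))
    (hxb : ∀ q ∈ V, ∀ k, pd k x q ⬝ᵥ b q = -(ε * (Real.exp (-1 * t q) * (pd k y q ⬝ᵥ b q))))
    {q : Fin 2 → ℝ} (hq : q ∈ V) :
    pdr 1 (fun q => Real.exp (-1/2 * t q) * (pd 0 y q ⬝ᵥ a q)) q
      = pdr 0 (fun q => Real.exp (-1/2 * t q) * (pd 1 y q ⬝ᵥ a q)) q := by
  have dt := sm_diffAt hV ht hq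
  have dP : ∀ k, DifferentiableAt ℝ (fun q => pd k y q ⬝ᵥ a q) q := fun k =>
    sm_diffAt hV (sm_dot (sm_pd hV hy k) ha) hq
  have dE : ∀ c : ℝ, DifferentiableAt ℝ (fun q => Real.exp (c * t q)) q := fun c =>
    sm_diffAt hV (sm_exp ht c) hq
  have hda : ∀ k, pd k a q ⬝ᵥ a q = 0 := by
    intro k
    have := frame_deriv hV ha ha haa hq k
    rw [dotProduct_comm (a q)] at this
    linarith
  have tang : ∀ w : Fin 3 → ℝ, w ⬝ᵥ n q = 0 → ∀ k,
      w ⬝ᵥ pd k a q = (w ⬝ᵥ b q) * (pd k a q ⬝ᵥ b q) := by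
    intro w hw k
    rw [parseval (haa q hq) (hbb q hq) (hnn q hq) (hab q hq) (han q hq) (hbn q hq), hw, hda]
    ring
  have hP : ∀ j k, pdr j (fun q => pd k y q ⬝ᵥ a q) q
      = pd j (pd k y) q ⬝ᵥ a q + (pd k y q ⬝ᵥ b q) * (pd j a q ⬝ᵥ b q) := by
    intro j k
    rw [pdr_dot (sm_diffAt hV (sm_pd hV hy k) hq) (sm_diffAt hV ha hq), tang _ (hyn q hq k)]
  have hQ : ∀ j k, pdr j (fun q => pd k x q ⬝ᵥ a q) q
      = pd j (pd k x) q ⬝ᵥ a q + (pd k x q ⬝ᵥ b q) * (pd j a q ⬝ᵥ b q) := by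
    intro j k
    rw [pdr_dot (sm_diffAt hV (sm_pd hV hx k) hq) (sm_diffAt hV ha hq), tang _ (hxn q hq k)]
  have hQ' : ∀ j k, pdr j (fun q => pd k x q ⬝ᵥ a q) q
      = ε * (Real.exp (-1 * t q) * (-1 * pdr j t q) * (pd k y q ⬝ᵥ a q)
        + Real.exp (-1 * t q) * pdr j (fun q => pd k y q ⬝ᵥ a q) q) := by
    intro j k
    rw [pdr_congr hV (fun q hq => hxa q hq k) hq,
      pdr_mul' (differentiableAt_const _) ((dE _).fun_mul (dP k)), pdr_mul' (dE _) (dP k),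
      pdr_exp dt]
    simp [pdr]
  have cy := pd_comm hV hy hq 0 1
  have cx := pd_comm hV hx hq 0 1
  rw [pdr_mul' (dE _) (dP 0), pdr_mul' (dE _) (dP 1), pdr_exp dt, pdr_exp dt]
  have e1 : pdr 1 (fun q => pd 0 y q ⬝ᵥ a q) q - pdr 0 (fun q => pd 1 y q ⬝ᵥ a q) q
      = (pd 0 y q ⬝ᵥ b q) * (pd 1 a q ⬝ᵥ b q) - (pd 1 y q ⬝ᵥ b q) * (pd 0 a q ⬝ᵥ b q) := by
    rw [hP, hP, cy]; ring
  have e2 : pdr 1 (fun q => pd 0 x q ⬝ᵥ a q) q - pdr 0 (fun q => pd 1 x q ⬝ᵥ a q) q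
      = (pd 0 x q ⬝ᵥ b q) * (pd 1 a q ⬝ᵥ b q) - (pd 1 x q ⬝ᵥ b q) * (pd 0 a q ⬝ᵥ b q) := by
    rw [hQ, hQ, cx]; ring
  rw [hQ', hQ', hxb q hq, hxb q hq] at e2
  have hpos := (Real.exp_pos (-1 * t q)).ne'
  have e3 : ε * Real.exp (-1 * t q) * (
      (-pdr 1 t q * (pd 0 y q ⬝ᵥ a q) + pdr 1 (fun q => pd 0 y q ⬝ᵥ a q) q
      + pdr 0 t q * (pd 1 y q ⬝ᵥ a q) - pdr 0 (fun q => pd 1 y q ⬝ᵥ a q) q)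
      + ((pd 0 y q ⬝ᵥ b q) * (pd 1 a q ⬝ᵥ b q) - (pd 1 y q ⬝ᵥ b q) * (pd 0 a q ⬝ᵥ b q))) = 0 := by
    linear_combination e2
  have e4 := (mul_eq_zero.1 e3).resolve_left (mul_ne_zero hε hpos)
  linear_combination (Real.exp (-1/2 * t q) / 2) * e4 + (Real.exp (-1/2 * t q) / 2) * e1

/-- Chain rule in coordinates. -/
lemma pd_comp {N : ℕ} {g : (Fin 2 → ℝ) → (Fin N → ℝ)} {Ψ : (Fin 2 → ℝ) → (Fin 2 → ℝ)}
    {y : Fin 2 → ℝ} (hg : DifferentiableAt ℝ g (Ψ y)) (hΨ : DifferentiableAt ℝ Ψ y) (j : Fin 2) :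
    pd j (g ∘ Ψ) y = pd j Ψ y 0 • pd 0 g (Ψ y) + pd j Ψ y 1 • pd 1 g (Ψ y) := by
  rw [← fderiv_eq_pd]
  unfold pd
  rw [fderiv_comp _ hg hΨ]
  rfl

/-- Integrating two independent closed one-forms to a local coordinate system. -/
lemma integrate_forms {V : Set (Fin 2 → ℝ)} (hV : IsOpen V) {p : Fin 2 → ℝ} (hp : p ∈ V)
    (w : Fin 2 → Fin 2 → (Fin 2 → ℝ) → ℝ)
    (hw : ∀ k i, ContDiffOn ℝ (⊤ : ℕ∞) (w k i) V)
    (hclosed : ∀ k, ∀ q ∈ V, pdr 1 (w k 0) q = pdr 0 (w k 1) q)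
    (hdet : ∀ q ∈ V, w 0 0 q * w 1 1 q - w 0 1 q * w 1 0 q ≠ 0) :
    ∃ (V' W : Set (Fin 2 → ℝ)) (Φ Ψ : (Fin 2 → ℝ) → (Fin 2 → ℝ)),
      IsOpen V' ∧ p ∈ V' ∧ V' ⊆ V ∧ IsOpen W ∧
      ContDiffOn ℝ (⊤ : ℕ∞) Φ V' ∧ ContDiffOn ℝ (⊤ : ℕ∞) Ψ W ∧
      Φ '' V' = W ∧ (∀ x ∈ V', Ψ (Φ x) = x) ∧ (∀ y ∈ W, Φ (Ψ y) = y) ∧ (∀ y ∈ W, Ψ y ∈ V') ∧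
      ∀ y ∈ W, ∀ k j, pd j Ψ y 0 * w k 0 (Ψ y) + pd j Ψ y 1 * w k 1 (Ψ y)
        = if k = j then 1 else 0 := by
  obtain ⟨r, hr, hball⟩ := Metric.isOpen_iff.1 hV p hp
  let B := Metric.ball p r
  have hB : IsOpen B := Metric.isOpen_ball
  have hBc : Convex ℝ B := convex_ball p r
  let P : Fin 2 → ((Fin 2 → ℝ) →L[ℝ] ℝ) := fun i => ContinuousLinearMap.proj i
  let om : Fin 2 → (Fin 2 → ℝ) → ((Fin 2 → ℝ) →L[ℝ] ℝ) :=
    fun k q => w k 0 q • P 0 + w k 1 q • P 1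
  have hom : ∀ k, ContDiffOn ℝ (⊤ : ℕ∞) (om k) B := fun k =>
    (((hw k 0).mono hball).smul contDiffOn_const).add
      (((hw k 1).mono hball).smul contDiffOn_const)
  have hpot : ∀ k, ∃ g : (Fin 2 → ℝ) → ℝ, ∀ q ∈ B, HasFDerivAt g (om k q) q := by
    intro k
    apply hBc.exists_forall_hasFDerivAt_of_fderiv_symmetric hB
      (fun q hq => (sm_diffAt hB (hom k) hq).differentiableWithinAt)
    intro q hq X Y
    have d0 := sm_diffAt hV (hw k 0) (hball hq)
    have d1 := sm_diffAt hV (hw k 1) (hball hq)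
    have hfd : ∀ X Y : Fin 2 → ℝ, fderiv ℝ (om k) q X Y
        = fderiv ℝ (w k 0) q X * Y 0 + fderiv ℝ (w k 1) q X * Y 1 := by
      intro X Y
      change fderiv ℝ (fun q => w k 0 q • P 0 + w k 1 q • P 1) q X Y = _
      rw [fderiv_fun_add (d0.smul_const (P 0)) (d1.smul_const (P 1)), fderiv_smul_const d0,
        fderiv_smul_const d1]
      simp [P]
    have hlin : ∀ (g : (Fin 2 → ℝ) → ℝ) (X : Fin 2 → ℝ),
        fderiv ℝ g q X = X 0 * pdr 0 g q + X 1 * pdr 1 g q := by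
      intro g X
      have : X = X 0 • Pi.single 0 1 + X 1 • Pi.single (1 : Fin 2) (1 : ℝ) := by
        ext i; fin_cases i <;> simp
      unfold pdr
      conv_lhs => rw [this]
      simp only [map_add, map_smul, smul_eq_mul]
    rw [hfd, hfd, hlin, hlin, hlin, hlin, hclosed k q (hball hq)]
    ring
  choose g hg using hpot
  let Φ : (Fin 2 → ℝ) → (Fin 2 → ℝ) := fun q k => g k q
  let L : (Fin 2 → ℝ) → ((Fin 2 → ℝ) →L[ℝ] (Fin 2 → ℝ)) :=
    fun q => ContinuousLinearMap.pi fun k => om k q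
  have hΦ : ∀ q ∈ B, HasFDerivAt Φ (L q) q := fun q hq => hasFDerivAt_pi.2 fun k => hg k q hq
  have smg : ∀ k, ContDiffOn ℝ (⊤ : ℕ∞) (g k) B := by
    intro k
    rw [contDiffOn_infty_iff_fderiv_of_isOpen hB]
    exact ⟨fun q hq => (hg k q hq).differentiableAt.differentiableWithinAt,
      (hom k).congr fun q hq => (hg k q hq).fderiv⟩
  have smΦ : ContDiffOn ℝ (⊤ : ℕ∞) Φ B := contDiffOn_pi.2 smg
  have hLinj : ∀ q ∈ B, ∃ e : (Fin 2 → ℝ) ≃L[ℝ] (Fin 2 → ℝ),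
      (e : (Fin 2 → ℝ) →L[ℝ] (Fin 2 → ℝ)) = L q := by
    intro q hq
    have hinj : Function.Injective (L q : (Fin 2 → ℝ) →ₗ[ℝ] (Fin 2 → ℝ)) := by
      rw [← LinearMap.ker_eq_bot, LinearMap.ker_eq_bot']
      intro X hX
      have h0 : w 0 0 q * X 0 + w 0 1 q * X 1 = 0 := by
        simpa [L, om, P] using congrFun hX 0
      have h1 : w 1 0 q * X 0 + w 1 1 q * X 1 = 0 := by
        simpa [L, om, P] using congrFun hX 1
      have hd := hdet q (hball hq)
      ext i
      fin_cases i
      · apply mul_left_cancel₀ hd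
        simp only [Fin.zero_eta, Pi.zero_apply]
        linear_combination w 1 1 q * h0 - w 0 1 q * h1
      · apply mul_left_cancel₀ hd
        simp only [Fin.mk_one, Pi.zero_apply]
        linear_combination w 0 0 q * h1 - w 1 0 q * h0
    refine ⟨(LinearEquiv.ofInjectiveEndo _ hinj).toContinuousLinearEquiv, ?_⟩
    ext X
    rfl
  have hpB : p ∈ B := Metric.mem_ball_self hr
  obtain ⟨e, he⟩ := hLinj p hpB
  have hΦp := hΦ p hpB
  rw [← he] at hΦp
  let h := (smΦ.contDiffAt (hB.mem_nhds hpB)).toOpenPartialHomeomorph Φ hΦp (by simp)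
  have hcoe : ∀ q, h q = Φ q := fun q => rfl
  have hps : p ∈ h.source := ContDiffAt.mem_toOpenPartialHomeomorph_source _ hΦp _
  let V' := h.source ∩ B
  have hV' : IsOpen V' := h.open_source.inter hB
  have hWo : IsOpen (Φ '' V') := h.isOpen_image_of_subset_source hV' Set.inter_subset_left
  have hΨV : ∀ y ∈ Φ '' V', h.symm y ∈ V' ∧ Φ (h.symm y) = y ∧ y ∈ h.target := by
    rintro _ ⟨q, hq, rfl⟩
    have : h.symm (Φ q) = q := h.left_inv hq.1
    rw [this]
    exact ⟨hq, rfl, h.map_source hq.1⟩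
  have smΨ : ContDiffOn ℝ (⊤ : ℕ∞) h.symm (Φ '' V') := by
    intro y hy
    obtain ⟨h1, h2, h3⟩ := hΨV y hy
    obtain ⟨e', he'⟩ := hLinj _ h1.2
    have hd := hΦ _ h1.2
    rw [← he'] at hd
    exact (h.contDiffAt_symm h3 hd (smΦ.contDiffAt (hB.mem_nhds h1.2))).contDiffWithinAt
  refine ⟨V', Φ '' V', Φ, h.symm, hV', ⟨hps, hpB⟩, fun q hq => hball hq.2, hWo,
    smΦ.mono Set.inter_subset_right, smΨ, rfl, fun q hq => h.left_inv hq.1,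
    fun y hy => (hΨV y hy).2.1, fun y hy => (hΨV y hy).1, ?_⟩
  intro y hy k j
  have hyV := (hΨV y hy).1
  have dΨ := sm_diffAt hWo smΨ hy
  have hid : fderiv ℝ (fun z => Φ (h.symm z)) y = ContinuousLinearMap.id ℝ _ := by
    rw [Filter.EventuallyEq.fderiv_eq (Filter.eventuallyEq_of_mem (hWo.mem_nhds hy)
      (fun z hz => (hΨV z hz).2.1) : (fun z => Φ (h.symm z)) =ᶠ[nhds y] fun z => z)]
    exact fderiv_fun_id
  have hcomp : fderiv ℝ (fun z => Φ (h.symm z)) y = (L (h.symm y)).comp (fderiv ℝ h.symm y) :=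
    ((hΦ _ hyV.2).comp y dΨ.hasFDerivAt).fderiv
  have := congrFun (congrArg (fun l : (Fin 2 → ℝ) →L[ℝ] (Fin 2 → ℝ) => l (Pi.single j 1))
    (hcomp.symm.trans hid)) k
  simp only [ContinuousLinearMap.comp_apply, ContinuousLinearMap.id_apply, L, om, P,
    ContinuousLinearMap.coe_pi', add_apply, smul_apply,
    ContinuousLinearMap.proj_apply, smul_eq_mul, Pi.single_apply] at this
  rw [← this]
  unfold pd
  ring

/-- The Gauss equation in curvature line coordinates is the sinh-Gordon equation. -/
lemma sinh_gordon {W : Set (Fin 2 → ℝ)} (hW : IsOpen W)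
    {y n a b : (Fin 2 → ℝ) → (Fin 3 → ℝ)} {t : (Fin 2 → ℝ) → ℝ}
    (hy : ContDiffOn ℝ (⊤ : ℕ∞) y W) (hn : ContDiffOn ℝ (⊤ : ℕ∞) n W)
    (ha : ContDiffOn ℝ (⊤ : ℕ∞) a W) (hb : ContDiffOn ℝ (⊤ : ℕ∞) b W)
    (ht : ContDiffOn ℝ (⊤ : ℕ∞) t W)
    (haa : ∀ q ∈ W, a q ⬝ᵥ a q = 1) (hbb : ∀ q ∈ W, b q ⬝ᵥ b q = 1)
    (hnn : ∀ q ∈ W, n q ⬝ᵥ n q = 1) (hab : ∀ q ∈ W, a q ⬝ᵥ b q = 0)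
    (han : ∀ q ∈ W, a q ⬝ᵥ n q = 0) (hbn : ∀ q ∈ W, b q ⬝ᵥ n q = 0)
    (hy0 : ∀ q ∈ W, pd 0 y q = (2 * Real.exp (1/2 * t q)) • a q)
    (hy1 : ∀ q ∈ W, pd 1 y q = (2 * Real.exp (1/2 * t q)) • b q)
    (hn0 : ∀ q ∈ W, pd 0 n q = (-2 * Real.sinh (t q / 2)) • a q)
    (hn1 : ∀ q ∈ W, pd 1 n q = (-2 * Real.cosh (t q / 2)) • b q) :
    ∀ q ∈ W, pdr 0 (pdr 0 t) q + pdr 1 (pdr 1 t) q = -4 * Real.sinh (t q) := by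
  have conn : ∀ q ∈ W, pd 0 a q ⬝ᵥ b q = -1/2 * pdr 1 t q ∧ pd 1 a q ⬝ᵥ b q = 1/2 * pdr 0 t q := by
    intro q hq
    have da := sm_diffAt hW ha hq
    have db := sm_diffAt hW hb hq
    have dt := sm_diffAt hW ht hq
    have dE : DifferentiableAt ℝ (fun q => Real.exp (1/2 * t q)) q :=
      sm_diffAt hW (sm_exp ht (1/2)) hq
    have hc := pd_comm hW hy hq 0 1
    rw [pd_congr hW hy0 hq, pd_congr hW hy1 hq, pd_smul' (dE.const_mul 2) da,
      pd_smul' (dE.const_mul 2) db, pdr_mul' (differentiableAt_const _) dE,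
      pdr_mul' (differentiableAt_const _) dE, pdr_exp dt, pdr_exp dt] at hc
    have hc0 : ∀ k, pdr k (fun _ : Fin 2 → ℝ => (2 : ℝ)) q = 0 := fun k => by simp [pdr]
    rw [hc0, hc0] at hc
    have hba : b q ⬝ᵥ a q = 0 := by rw [dotProduct_comm]; exact hab q hq
    have a0 := frame_deriv hW ha ha haa hq 1
    have b0 := frame_deriv hW hb hb hbb hq 0
    have ab0 := frame_deriv hW ha hb hab hq 0
    rw [dotProduct_comm (a q)] at a0 ab0
    rw [dotProduct_comm (b q)] at b0
    have hpos := (Real.exp_pos (1/2 * t q)).ne'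
    have h1 := congrArg (fun v => v ⬝ᵥ a q) hc
    have h2 := congrArg (fun v => v ⬝ᵥ b q) hc
    simp only [add_dotProduct, smul_dotProduct, smul_eq_mul, haa q hq, hbb q hq, hba, hab q hq]
      at h1 h2
    constructor
    · apply mul_left_cancel₀ hpos
      linear_combination (-1/2) * h1 + (Real.exp (1/2 * t q)) * ab0 - Real.exp (1/2 * t q) / 2 * a0
    · apply mul_left_cancel₀ hpos
      linear_combination (-1/2) * h2 + Real.exp (1/2 * t q) / 2 * b0
  intro q hq
  have da := sm_diffAt hW ha hq
  have db := sm_diffAt hW hb hq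
  have d0 := pdr_congr hW (fun q hq => (conn q hq).1) hq 1
  have d1 := pdr_congr hW (fun q hq => (conn q hq).2) hq 0
  rw [pdr_dot (sm_diffAt hW (sm_pd hW ha 0) hq) db,
    pdr_mul' (differentiableAt_const _) (sm_diffAt hW (sm_pdr hW ht 1) hq)] at d0
  rw [pdr_dot (sm_diffAt hW (sm_pd hW ha 1) hq) db,
    pdr_mul' (differentiableAt_const _) (sm_diffAt hW (sm_pdr hW ht 0) hq)] at d1
  have hc0 : ∀ (c : ℝ) k, pdr k (fun _ : Fin 2 → ℝ => c) q = 0 := fun c k => by simp [pdr]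
  rw [hc0] at d0 d1
  have hc := pd_comm hW ha hq 0 1
  have pv := parseval (haa q hq) (hbb q hq) (hnn q hq) (hab q hq) (han q hq) (hbn q hq)
  have daa : ∀ k, pd k a q ⬝ᵥ a q = 0 := by
    intro k
    have := frame_deriv hW ha ha haa hq k
    rw [dotProduct_comm (a q)] at this
    linarith
  have dbb : ∀ k, pd k b q ⬝ᵥ b q = 0 := by
    intro k
    have := frame_deriv hW hb hb hbb hq k
    rw [dotProduct_comm (b q)] at this
    linarith
  have hba : b q ⬝ᵥ a q = 0 := by rw [dotProduct_comm]; exact hab q hq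
  have an0 := frame_deriv hW ha hn han hq 0
  have an1 := frame_deriv hW ha hn han hq 1
  have bn0 := frame_deriv hW hb hn hbn hq 0
  have bn1 := frame_deriv hW hb hn hbn hq 1
  rw [hn0 q hq, dotProduct_smul, smul_eq_mul] at an0 bn0
  rw [hn1 q hq, dotProduct_smul, smul_eq_mul] at an1 bn1
  rw [haa q hq] at an0
  rw [hba] at bn0
  rw [hab q hq] at an1
  rw [hbb q hq] at bn1
  have e1 : pd 0 a q ⬝ᵥ n q = 2 * Real.sinh (t q / 2) := by linarith
  have e2 : pd 1 a q ⬝ᵥ n q = 0 := by linarith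
  have e3 : pd 1 b q ⬝ᵥ n q = 2 * Real.cosh (t q / 2) := by linarith
  rw [pv (pd 0 a q) (pd 1 b q), daa, dbb, e1, e3] at d0
  rw [pv (pd 1 a q) (pd 0 b q), daa, dbb, e2, hc] at d1
  have hs : Real.sinh (t q) = 2 * Real.sinh (t q / 2) * Real.cosh (t q / 2) := by
    rw [← Real.sinh_two_mul]; congr 1; ring
  rw [hs]
  linear_combination 2 * d0 - 2 * d1

/-! ### Pointwise facts about the front -/

lemma dense_zero {U R : Set (Fin 2 → ℝ)} (hU : IsOpen U) {φ : (Fin 2 → ℝ) → ℝ}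
    (hφ : ContinuousOn φ U) (hR : ∀ q ∈ R, φ q = 0) {q : Fin 2 → ℝ} (hq : q ∈ U)
    (hc : q ∈ closure R) : φ q = 0 := by
  by_contra h
  have hev : ∀ᶠ x in nhds q, φ x ≠ 0 := (hφ.continuousAt (hU.mem_nhds hq)).eventually_ne h
  obtain ⟨x, hx, hxR⟩ := ((mem_closure_iff_frequently.1 hc).and_eventually hev).exists
  exact hxR (hR x hx)

lemma front_facts
    (U : Set (Fin 2 → ℝ)) (hU : IsOpen U)
    (f ν : (Fin 2 → ℝ) → (Fin 3 → ℝ))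
    (hf : ContDiffOn ℝ (⊤ : ℕ∞) f U) (hν : ContDiffOn ℝ (⊤ : ℕ∞) ν U)
    (hν1 : ∀ q ∈ U, ν q ⬝ᵥ ν q = 1)
    (htang : ∀ q ∈ U, ∀ k : Fin 2, pd k f q ⬝ᵥ ν q = 0)
    (hfront : ∀ q ∈ U, ∀ X : Fin 2 → ℝ, fderiv ℝ f q X = 0 → fderiv ℝ ν q X = 0 → X = 0)
    (hdense : ∀ q ∈ U,
      q ∈ closure {x | x ∈ U ∧ ∀ X : Fin 2 → ℝ, fderiv ℝ f x X = 0 → X = 0})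
    (hcurv : ∀ q ∈ U, (∀ X : Fin 2 → ℝ, fderiv ℝ f q X = 0 → X = 0) →
      ((-(pd 0 f q ⬝ᵥ pd 0 ν q)) * (-(pd 1 f q ⬝ᵥ pd 1 ν q))
          - (-(pd 0 f q ⬝ᵥ pd 1 ν q)) ^ 2
        = (pd 0 f q ⬝ᵥ pd 0 f q) * (pd 1 f q ⬝ᵥ pd 1 f q)
          - (pd 0 f q ⬝ᵥ pd 1 f q) ^ 2) ∧
      (pd 0 f q ⬝ᵥ pd 0 f q) * (pd 1 f q ⬝ᵥ pd 1 f q)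
          - (pd 0 f q ⬝ᵥ pd 1 f q) ^ 2 ≠ 0)
    (humb : ∀ q ∈ U, (∀ X : Fin 2 → ℝ, fderiv ℝ f q X = 0 → X = 0) →
      ¬∃ c : ℝ,
        -(pd 0 f q ⬝ᵥ pd 0 ν q) = c * (pd 0 f q ⬝ᵥ pd 0 f q) ∧
        -(pd 0 f q ⬝ᵥ pd 1 ν q) = c * (pd 0 f q ⬝ᵥ pd 1 f q) ∧
        -(pd 1 f q ⬝ᵥ pd 1 ν q) = c * (pd 1 f q ⬝ᵥ pd 1 f q)) :
    ∃ t : (Fin 2 → ℝ) → ℝ, ContDiffOn ℝ (⊤ : ℕ∞) t U ∧ ∀ q ∈ U,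
      (∀ k, pd k ν q ⬝ᵥ ν q = 0) ∧ (∀ i j, pd i f q ⬝ᵥ pd j ν q = pd j f q ⬝ᵥ pd i ν q) ∧
      (∀ i j, (pd i f q + pd i ν q) ⬝ᵥ (pd j f q + pd j ν q)
        = Real.exp (-1 * t q) ^ 2 * ((pd i f q - pd i ν q) ⬝ᵥ (pd j f q - pd j ν q))) ∧
      (∃ i, (pd i f q + pd i ν q) + Real.exp (-1 * t q) • (pd i f q - pd i ν q) ≠ 0) ∧
      (∃ i, (pd i f q + pd i ν q) - Real.exp (-1 * t q) • (pd i f q - pd i ν q) ≠ 0) := by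
  have hνν : ∀ q ∈ U, ∀ k, pd k ν q ⬝ᵥ ν q = 0 := by
    intro q hq k
    have := frame_deriv hU hν hν hν1 hq k
    rw [dotProduct_comm (ν q)] at this
    linarith
  have hsym : ∀ q ∈ U, ∀ i j, pd i f q ⬝ᵥ pd j ν q = pd j f q ⬝ᵥ pd i ν q := by
    intro q hq i j
    have h1 := frame_deriv hU (sm_pd hU hf i) hν (fun q hq => htang q hq i) hq j
    have h2 := frame_deriv hU (sm_pd hU hf j) hν (fun q hq => htang q hq j) hq i
    rw [pd_comm hU hf hq] at h1
    linarith
  have sf := fun k => sm_pd hU hf k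
  have sn := fun k => sm_pd hU hν k
  have hreg : ∀ q ∈ {x | x ∈ U ∧ ∀ X : Fin 2 → ℝ, fderiv ℝ f x X = 0 → X = 0},
      (∃ T : ℝ, pd 0 f q ⬝ᵥ pd 0 f q + pd 0 ν q ⬝ᵥ pd 0 ν q = T * (pd 0 f q ⬝ᵥ pd 0 ν q) ∧
      pd 0 f q ⬝ᵥ pd 1 f q + pd 0 ν q ⬝ᵥ pd 1 ν q = T * (pd 0 f q ⬝ᵥ pd 1 ν q) ∧
      pd 1 f q ⬝ᵥ pd 1 f q + pd 1 ν q ⬝ᵥ pd 1 ν q = T * (pd 1 f q ⬝ᵥ pd 1 ν q)) ∧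
    (pd 0 ν q ⬝ᵥ pd 0 ν q) * (pd 1 ν q ⬝ᵥ pd 1 ν q) - (pd 0 ν q ⬝ᵥ pd 1 ν q) ^ 2
      = (pd 0 f q ⬝ᵥ pd 0 f q) * (pd 1 f q ⬝ᵥ pd 1 f q) - (pd 0 f q ⬝ᵥ pd 1 f q) ^ 2 := by
    rintro q ⟨hq, hr⟩
    obtain ⟨c1, c2⟩ := hcurv q hq hr
    refine regular_algebra (hν1 q hq) (htang q hq 0) (htang q hq 1) (hνν q hq 0) (hνν q hq 1)
      (hsym q hq 0 1) ?_ c2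
    rw [← c1]; ring
  have hdet : ∀ q ∈ U,
      (pd 0 ν q ⬝ᵥ pd 0 ν q) * (pd 1 ν q ⬝ᵥ pd 1 ν q) - (pd 0 ν q ⬝ᵥ pd 1 ν q) ^ 2
      - ((pd 0 f q ⬝ᵥ pd 0 f q) * (pd 1 f q ⬝ᵥ pd 1 f q) - (pd 0 f q ⬝ᵥ pd 1 f q) ^ 2) = 0 := by
    intro q hq
    refine dense_zero hU (φ := fun q =>
      (pd 0 ν q ⬝ᵥ pd 0 ν q) * (pd 1 ν q ⬝ᵥ pd 1 ν q) - (pd 0 ν q ⬝ᵥ pd 1 ν q) ^ 2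
      - ((pd 0 f q ⬝ᵥ pd 0 f q) * (pd 1 f q ⬝ᵥ pd 1 f q) - (pd 0 f q ⬝ᵥ pd 1 f q) ^ 2))
      ?_ (fun q hq => ?_) hq (hdense q hq)
    · exact (((((sm_dot (sn 0) (sn 0)).mul (sm_dot (sn 1) (sn 1))).sub
        ((sm_dot (sn 0) (sn 1)).pow 2))).sub
        (((sm_dot (sf 0) (sf 0)).mul (sm_dot (sf 1) (sf 1))).sub
        ((sm_dot (sf 0) (sf 1)).pow 2))).continuousOn
    · exact sub_eq_zero.2 (hreg q hq).2
  have hprop0 : ∀ i j : Fin 2, i ≤ j → ∀ q ∈ U,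
      (pd i f q ⬝ᵥ pd j ν q) * (pd 0 f q ⬝ᵥ pd 0 f q + pd 0 ν q ⬝ᵥ pd 0 ν q
        + (pd 1 f q ⬝ᵥ pd 1 f q + pd 1 ν q ⬝ᵥ pd 1 ν q))
      - (pd 0 f q ⬝ᵥ pd 0 ν q + pd 1 f q ⬝ᵥ pd 1 ν q) *
        (pd i f q ⬝ᵥ pd j f q + pd i ν q ⬝ᵥ pd j ν q) = 0 := by
    intro i j hij q hq
    refine dense_zero hU (φ := fun q =>
      (pd i f q ⬝ᵥ pd j ν q) * (pd 0 f q ⬝ᵥ pd 0 f q + pd 0 ν q ⬝ᵥ pd 0 ν q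
        + (pd 1 f q ⬝ᵥ pd 1 f q + pd 1 ν q ⬝ᵥ pd 1 ν q))
      - (pd 0 f q ⬝ᵥ pd 0 ν q + pd 1 f q ⬝ᵥ pd 1 ν q) *
        (pd i f q ⬝ᵥ pd j f q + pd i ν q ⬝ᵥ pd j ν q))
      ?_ (fun q hq => ?_) hq (hdense q hq)
    · exact (((sm_dot (sf i) (sn j)).mul (((sm_dot (sf 0) (sf 0)).add (sm_dot (sn 0) (sn 0))).add
        ((sm_dot (sf 1) (sf 1)).add (sm_dot (sn 1) (sn 1))))).sub
        (((sm_dot (sf 0) (sn 0)).add (sm_dot (sf 1) (sn 1))).mul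
        ((sm_dot (sf i) (sf j)).add (sm_dot (sn i) (sn j))))).continuousOn
    · obtain ⟨⟨T, h0, h1, h2⟩, -⟩ := hreg q hq
      have : pd i f q ⬝ᵥ pd j f q + pd i ν q ⬝ᵥ pd j ν q = T * (pd i f q ⬝ᵥ pd j ν q) := by
        fin_cases i <;> fin_cases j
        · exact h0
        · exact h1
        · simp at hij
        · exact h2
      rw [this, h0, h2]; ring
  have hprop : ∀ i j : Fin 2, ∀ q ∈ U,
      (pd i f q ⬝ᵥ pd j ν q) * (pd 0 f q ⬝ᵥ pd 0 f q + pd 0 ν q ⬝ᵥ pd 0 ν q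
        + (pd 1 f q ⬝ᵥ pd 1 f q + pd 1 ν q ⬝ᵥ pd 1 ν q))
      - (pd 0 f q ⬝ᵥ pd 0 ν q + pd 1 f q ⬝ᵥ pd 1 ν q) *
        (pd i f q ⬝ᵥ pd j f q + pd i ν q ⬝ᵥ pd j ν q) = 0 := by
    intro i j q hq
    rcases le_total i j with h | h
    · exact hprop0 i j h q hq
    · have := hprop0 j i h q hq
      rw [hsym q hq i j, dotProduct_comm (pd i f q) (pd j f q),
        dotProduct_comm (pd i ν q) (pd j ν q)]
      exact this
  -- the key nondegeneracy
  have hN : ∀ q ∈ U, ∀ α β : ℝ, (∀ i, α • pd i f q + β • pd i ν q = 0) → α = 0 ∧ β = 0 := by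
    intro q hq α β h
    have hf0 : ¬ ∀ i, pd i f q = 0 := by
      intro hz
      have hd := hdet q hq
      rw [hz 0, hz 1] at hd
      simp only [zero_dotProduct] at hd
      have hfX : ∀ X, fderiv ℝ f q X = 0 := fun X => by rw [fderiv_eq_pd, hz, hz]; simp
      have hX := hfront q hq ![pd 1 ν q ⬝ᵥ pd 1 ν q, -(pd 0 ν q ⬝ᵥ pd 1 ν q)] (hfX _) (by
        rw [fderiv_eq_pd]
        apply dot_self_zero
        simp only [Matrix.cons_val_zero, Matrix.cons_val_one, add_dotProduct, dotProduct_add,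
          smul_dotProduct, dotProduct_smul, smul_eq_mul]
        rw [dotProduct_comm (pd 1 ν q) (pd 0 ν q)]
        linear_combination (pd 1 ν q ⬝ᵥ pd 1 ν q) * hd)
      have h0 : pd 1 ν q ⬝ᵥ pd 1 ν q = 0 := by simpa using congrFun hX 0
      have h1 := hfront q hq ![0, 1] (hfX _) (by
        rw [fderiv_eq_pd, dot_self_zero h0]; simp)
      simpa using congrFun h1 1
    by_cases hβ : β = 0
    · refine ⟨?_, hβ⟩
      by_contra hα
      apply hf0
      intro i
      have := h i
      rw [hβ, zero_smul, add_zero] at this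
      exact (smul_eq_zero.1 this).resolve_left hα
    · exfalso
      have hn : ∀ i, pd i ν q = (-(α / β)) • pd i f q := by
        intro i
        have h1 : β • pd i ν q = (-α) • pd i f q := by
          rw [neg_smul]; exact eq_neg_of_add_eq_zero_right (h i)
        calc pd i ν q = β⁻¹ • (β • pd i ν q) := by rw [smul_smul, inv_mul_cancel₀ hβ, one_smul]
          _ = _ := by rw [h1, smul_smul]; congr 1; field_simp
      by_cases hr : ∀ X : Fin 2 → ℝ, fderiv ℝ f q X = 0 → X = 0
      · apply humb q hq hr
        refine ⟨α / β, ?_, ?_, ?_⟩ <;> rw [hn, dotProduct_smul, smul_eq_mul] <;> ring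
      · push Not at hr
        obtain ⟨X, hX, hX0⟩ := hr
        apply hX0
        apply hfront q hq X hX
        rw [fderiv_eq_pd] at hX ⊢
        rw [hn, hn, smul_comm, smul_comm (X 1), ← smul_add, hX, smul_zero]
  have hpos : ∀ (c : ℝ), c ≠ 0 → ∀ q ∈ U,
      0 < (pd 0 f q + c • pd 0 ν q) ⬝ᵥ (pd 0 f q + c • pd 0 ν q)
        + (pd 1 f q + c • pd 1 ν q) ⬝ᵥ (pd 1 f q + c • pd 1 ν q) := by
    intro c hc q hq
    have nn : ∀ v : Fin 3 → ℝ, 0 ≤ v ⬝ᵥ v := fun v => by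
      rw [dot3]; nlinarith [sq_nonneg (v 0), sq_nonneg (v 1), sq_nonneg (v 2)]
    refine lt_of_le_of_ne (add_nonneg (nn _) (nn _)) fun h => hc ?_
    have h0 := nn (pd 0 f q + c • pd 0 ν q)
    have h1 := nn (pd 1 f q + c • pd 1 ν q)
    refine (hN q hq 1 c fun i => ?_).2
    rw [one_smul]
    apply dot_self_zero
    fin_cases i
    · change (pd 0 f q + c • pd 0 ν q) ⬝ᵥ (pd 0 f q + c • pd 0 ν q) = 0
      linarith
    · change (pd 1 f q + c • pd 1 ν q) ⬝ᵥ (pd 1 f q + c • pd 1 ν q) = 0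
      linarith
  let S : ℝ → (Fin 2 → ℝ) → ℝ := fun c q =>
    (pd 0 f q + c • pd 0 ν q) ⬝ᵥ (pd 0 f q + c • pd 0 ν q)
        + (pd 1 f q + c • pd 1 ν q) ⬝ᵥ (pd 1 f q + c • pd 1 ν q)
  have smS : ∀ c, ContDiffOn ℝ (⊤ : ℕ∞) (S c) U := by
    intro c
    have : ∀ i, ContDiffOn ℝ (⊤ : ℕ∞) (fun q => pd i f q + c • pd i ν q) U := fun i =>
      (sf i).add ((sn i).const_smul c)
    exact (sm_dot (this 0) (this 0)).add (sm_dot (this 1) (this 1))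
  have hp1 : ∀ q ∈ U, 0 < S 1 q := hpos 1 (by norm_num)
  have hm1 : ∀ q ∈ U, 0 < S (-1) q := hpos (-1) (by norm_num)
  refine ⟨fun q => 1/2 * (Real.log (S (-1) q) - Real.log (S 1 q)), ?_, ?_⟩
  · exact contDiffOn_const.mul (((smS (-1)).log fun q hq => (hm1 q hq).ne').sub
      ((smS 1).log fun q hq => (hp1 q hq).ne'))
  intro q hq
  set σ := Real.exp (-1 * (1/2 * (Real.log (S (-1) q) - Real.log (S 1 q)))) with hσ
  have hσpos : 0 < σ := Real.exp_pos _
  have hσ2 : σ ^ 2 * S (-1) q = S 1 q := by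
    have : σ ^ 2 = S 1 q / S (-1) q := by
      rw [hσ, ← Real.exp_nat_mul, ← Real.exp_log (div_pos (hp1 q hq) (hm1 q hq)),
        Real.log_div (hp1 q hq).ne' (hm1 q hq).ne']
      congr 1; push_cast; ring
    rw [this, div_mul_cancel₀ _ (hm1 q hq).ne']
  refine ⟨hνν q hq, hsym q hq, ?_, ?_, ?_⟩
  · intro i j
    apply mul_left_cancel₀ (hm1 q hq).ne'
    have hP := hprop i j q hq
    have hs := hsym q hq i j
    have key : S (-1) q * ((pd i f q + pd i ν q) ⬝ᵥ (pd j f q + pd j ν q))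
      = S 1 q * ((pd i f q - pd i ν q) ⬝ᵥ (pd j f q - pd j ν q)) := by
      simp only [S, one_smul, neg_smul, add_dotProduct, dotProduct_add, sub_dotProduct,
        dotProduct_sub, neg_dotProduct, dotProduct_neg]
      rw [dotProduct_comm (pd i ν q) (pd j f q), ← hs, dotProduct_comm (pd 0 ν q) (pd 0 f q),
        dotProduct_comm (pd 1 ν q) (pd 1 f q)]
      linear_combination 4 * hP
    rw [key, ← hσ2]; ring
  · by_contra hcon
    push Not at hcon
    have := hN q hq (1 + σ) (1 - σ) fun i => by
      rw [← hcon i]; module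
    linarith [this.1]
  · by_contra hcon
    push Not at hcon
    have := hN q hq (1 - σ) (1 + σ) fun i => by
      rw [← hcon i]; module
    linarith [this.2]

/-! ### Assembly -/

lemma sm_normalize {V : Set (Fin 2 → ℝ)} {w : (Fin 2 → ℝ) → (Fin 3 → ℝ)}
    (hw : ContDiffOn ℝ (⊤ : ℕ∞) w V) (h0 : ∀ q ∈ V, w q ≠ 0) :
    ContDiffOn ℝ (⊤ : ℕ∞) (fun q => (√(w q ⬝ᵥ w q))⁻¹ • w q) V := by
  refine ContDiffOn.smul (ContDiffOn.inv (ContDiffOn.sqrt (sm_dot hw hw) fun q hq => ?_)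
    fun q hq => ?_) hw
  · exact (dot_self_pos (h0 q hq)).ne'
  · exact (Real.sqrt_pos.2 (dot_self_pos (h0 q hq))).ne'

/-- Local existence of the curvature-line coframe data. -/
lemma local_frame {U : Set (Fin 2 → ℝ)} (hU : IsOpen U)
    {x y n : (Fin 2 → ℝ) → (Fin 3 → ℝ)} {t : (Fin 2 → ℝ) → ℝ}
    (hx : ContDiffOn ℝ (⊤ : ℕ∞) x U) (hy : ContDiffOn ℝ (⊤ : ℕ∞) y U)
    (ht : ContDiffOn ℝ (⊤ : ℕ∞) t U)
    (hxn : ∀ q ∈ U, ∀ k, pd k x q ⬝ᵥ n q = 0) (hyn : ∀ q ∈ U, ∀ k, pd k y q ⬝ᵥ n q = 0)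
    (hsym : ∀ q ∈ U, ∀ i j, pd i x q ⬝ᵥ pd j y q = pd j x q ⬝ᵥ pd i y q)
    (hconf : ∀ q ∈ U, ∀ i j, pd i x q ⬝ᵥ pd j x q
      = Real.exp (-1 * t q) ^ 2 * (pd i y q ⬝ᵥ pd j y q))
    {p : Fin 2 → ℝ} (hp : p ∈ U)
    (h1 : ∃ i, pd i x p + Real.exp (-1 * t p) • pd i y p ≠ 0)
    (h2 : ∃ i, pd i x p - Real.exp (-1 * t p) • pd i y p ≠ 0) :
    ∃ (V : Set (Fin 2 → ℝ)) (a b : (Fin 2 → ℝ) → (Fin 3 → ℝ)), IsOpen V ∧ p ∈ V ∧ V ⊆ U ∧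
      ContDiffOn ℝ (⊤ : ℕ∞) a V ∧ ContDiffOn ℝ (⊤ : ℕ∞) b V ∧
      (∀ q ∈ V, a q ⬝ᵥ a q = 1) ∧ (∀ q ∈ V, b q ⬝ᵥ b q = 1) ∧ (∀ q ∈ V, a q ⬝ᵥ b q = 0) ∧
      (∀ q ∈ V, a q ⬝ᵥ n q = 0) ∧ (∀ q ∈ V, b q ⬝ᵥ n q = 0) ∧
      (∀ q ∈ V, ∀ k, pd k x q ⬝ᵥ a q = Real.exp (-1 * t q) * (pd k y q ⬝ᵥ a q)) ∧
      (∀ q ∈ V, ∀ k, pd k x q ⬝ᵥ b q = -(Real.exp (-1 * t q) * (pd k y q ⬝ᵥ b q))) := by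
  obtain ⟨i, hi⟩ := h1
  obtain ⟨j, hj⟩ := h2
  let w : (Fin 2 → ℝ) → (Fin 3 → ℝ) := fun q => pd i x q + Real.exp (-1 * t q) • pd i y q
  let z : (Fin 2 → ℝ) → (Fin 3 → ℝ) := fun q => pd j x q - Real.exp (-1 * t q) • pd j y q
  have sw : ContDiffOn ℝ (⊤ : ℕ∞) w U :=
    (sm_pd hU hx i).add (ContDiffOn.smul (sm_exp ht (-1)) (sm_pd hU hy i))
  have sz : ContDiffOn ℝ (⊤ : ℕ∞) z U :=
    (sm_pd hU hx j).sub (ContDiffOn.smul (sm_exp ht (-1)) (sm_pd hU hy j))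
  let V := (U ∩ w ⁻¹' {0}ᶜ) ∩ (U ∩ z ⁻¹' {0}ᶜ)
  have hV : IsOpen V := (sw.continuousOn.isOpen_inter_preimage hU isOpen_compl_singleton).inter
    (sz.continuousOn.isOpen_inter_preimage hU isOpen_compl_singleton)
  have hVU : V ⊆ U := fun q hq => hq.1.1
  have hw0 : ∀ q ∈ V, w q ≠ 0 := fun q hq => hq.1.2
  have hz0 : ∀ q ∈ V, z q ≠ 0 := fun q hq => hq.2.2
  have unit : ∀ v : Fin 3 → ℝ, v ≠ 0 → ((√(v ⬝ᵥ v))⁻¹ • v) ⬝ᵥ ((√(v ⬝ᵥ v))⁻¹ • v) = 1 := by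
    intro v hv
    have hpos := dot_self_pos hv
    have hs := Real.sqrt_pos.2 hpos
    rw [smul_dotProduct, dotProduct_smul, smul_eq_mul, smul_eq_mul]
    have := Real.mul_self_sqrt hpos.le
    field_simp
    rw [sq]; exact this.symm
  refine ⟨V, fun q => (√(w q ⬝ᵥ w q))⁻¹ • w q, fun q => (√(z q ⬝ᵥ z q))⁻¹ • z q, hV,
    ⟨⟨hp, hi⟩, ⟨hp, hj⟩⟩, hVU, sm_normalize (sw.mono hVU) hw0, sm_normalize (sz.mono hVU) hz0,
    fun q hq => unit _ (hw0 q hq), fun q hq => unit _ (hz0 q hq), ?_, ?_, ?_, ?_, ?_⟩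
  · intro q hq
    have : w q ⬝ᵥ z q = 0 := by
      simp only [w, z, add_dotProduct, dotProduct_sub, smul_dotProduct, dotProduct_smul,
        smul_eq_mul]
      rw [hconf q (hVU hq), hsym q (hVU hq) i j, dotProduct_comm (pd i y q) (pd j x q)]
      ring
    simp [smul_dotProduct, dotProduct_smul, this]
  · intro q hq
    simp [w, smul_dotProduct, add_dotProduct, hxn q (hVU hq), hyn q (hVU hq)]
  · intro q hq
    simp [z, smul_dotProduct, sub_dotProduct, hxn q (hVU hq), hyn q (hVU hq)]
  · intro q hq k
    have : pd k x q ⬝ᵥ w q = Real.exp (-1 * t q) * (pd k y q ⬝ᵥ w q) := by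
      simp only [w, dotProduct_add, dotProduct_smul, smul_eq_mul]
      rw [hconf q (hVU hq), hsym q (hVU hq) k i, dotProduct_comm (pd k y q) (pd i x q)]
      ring
    rw [dotProduct_smul, dotProduct_smul, this, smul_eq_mul, smul_eq_mul]
    ring
  · intro q hq k
    have : pd k x q ⬝ᵥ z q = -(Real.exp (-1 * t q) * (pd k y q ⬝ᵥ z q)) := by
      simp only [z, dotProduct_sub, dotProduct_smul, smul_eq_mul]
      rw [hconf q (hVU hq), hsym q (hVU hq) k j, dotProduct_comm (pd k y q) (pd j x q)]
      ring
    rw [dotProduct_smul, dotProduct_smul, this, smul_eq_mul, smul_eq_mul]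
    ring

lemma exp_half (s : ℝ) : Real.exp (1/2 * s) = Real.cosh (s / 2) + Real.sinh (s / 2) ∧
    Real.exp (-1/2 * s) = Real.cosh (s / 2) - Real.sinh (s / 2) := by
  rw [Real.cosh_add_sinh, Real.cosh_sub_sinh]
  constructor <;> congr 1 <;> ring


/-- Converse part of the realization theorem for fronts of constant positive Gaussian
curvature `1` in `ℝ³`: every such front whose regular set is dense and which has no
umbilic points arises locally, in suitable curvature-line coordinates, from a solution
of the sinh-Gordon equation `θ_{uu} + θ_{vv} = −4 sinh θ`. -/
theorem constant_positive_curvature_front_is_sinh_gordon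
    (U : Set (Fin 2 → ℝ)) (hU : IsOpen U) (hconn : IsConnected U)
    (f ν : (Fin 2 → ℝ) → (Fin 3 → ℝ))
    (hf : ContDiffOn ℝ (⊤ : ℕ∞) f U) (hν : ContDiffOn ℝ (⊤ : ℕ∞) ν U)
    (hν1 : ∀ q ∈ U, ν q ⬝ᵥ ν q = 1)
    (htang : ∀ q ∈ U, ∀ k : Fin 2, pd k f q ⬝ᵥ ν q = 0)
    (hfront : ∀ q ∈ U, ∀ X : Fin 2 → ℝ, fderiv ℝ f q X = 0 → fderiv ℝ ν q X = 0 → X = 0)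
    (hdense : ∀ q ∈ U,
      q ∈ closure {x | x ∈ U ∧ ∀ X : Fin 2 → ℝ, fderiv ℝ f x X = 0 → X = 0})
    (hcurv : ∀ q ∈ U, (∀ X : Fin 2 → ℝ, fderiv ℝ f q X = 0 → X = 0) →
      ((-(pd 0 f q ⬝ᵥ pd 0 ν q)) * (-(pd 1 f q ⬝ᵥ pd 1 ν q))
          - (-(pd 0 f q ⬝ᵥ pd 1 ν q)) ^ 2
        = (pd 0 f q ⬝ᵥ pd 0 f q) * (pd 1 f q ⬝ᵥ pd 1 f q)
          - (pd 0 f q ⬝ᵥ pd 1 f q) ^ 2) ∧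
      (pd 0 f q ⬝ᵥ pd 0 f q) * (pd 1 f q ⬝ᵥ pd 1 f q)
          - (pd 0 f q ⬝ᵥ pd 1 f q) ^ 2 ≠ 0)
    (humb : ∀ q ∈ U, (∀ X : Fin 2 → ℝ, fderiv ℝ f q X = 0 → X = 0) →
      ¬∃ c : ℝ,
        -(pd 0 f q ⬝ᵥ pd 0 ν q) = c * (pd 0 f q ⬝ᵥ pd 0 f q) ∧
        -(pd 0 f q ⬝ᵥ pd 1 ν q) = c * (pd 0 f q ⬝ᵥ pd 1 f q) ∧
        -(pd 1 f q ⬝ᵥ pd 1 ν q) = c * (pd 1 f q ⬝ᵥ pd 1 f q)) :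
    ∀ p ∈ U, ∃ (V W : Set (Fin 2 → ℝ)) (Φ Ψ : (Fin 2 → ℝ) → (Fin 2 → ℝ))
      (θ : (Fin 2 → ℝ) → ℝ),
      IsOpen V ∧ p ∈ V ∧ V ⊆ U ∧ IsOpen W ∧
      ContDiffOn ℝ (⊤ : ℕ∞) Φ V ∧ ContDiffOn ℝ (⊤ : ℕ∞) Ψ W ∧
      Φ '' V = W ∧ (∀ x ∈ V, Ψ (Φ x) = x) ∧ (∀ y ∈ W, Φ (Ψ y) = y) ∧
      ContDiffOn ℝ (⊤ : ℕ∞) θ W ∧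
      (∀ y ∈ W, pdr 0 (pdr 0 θ) y + pdr 1 (pdr 1 θ) y = -4 * Real.sinh (θ y)) ∧
      (∀ y ∈ W,
        pd 0 (f ∘ Ψ) y ⬝ᵥ pd 0 (f ∘ Ψ) y = 4 * Real.cosh (θ y / 2) ^ 2 ∧
        pd 0 (f ∘ Ψ) y ⬝ᵥ pd 1 (f ∘ Ψ) y = 0 ∧
        pd 1 (f ∘ Ψ) y ⬝ᵥ pd 1 (f ∘ Ψ) y = 4 * Real.sinh (θ y / 2) ^ 2 ∧
        pd 0 (f ∘ Ψ) y ⬝ᵥ pd 0 (ν ∘ Ψ) y = -2 * Real.sinh (θ y) ∧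
        pd 0 (f ∘ Ψ) y ⬝ᵥ pd 1 (ν ∘ Ψ) y = 0 ∧
        pd 1 (f ∘ Ψ) y ⬝ᵥ pd 0 (ν ∘ Ψ) y = 0 ∧
        pd 1 (f ∘ Ψ) y ⬝ᵥ pd 1 (ν ∘ Ψ) y = -2 * Real.sinh (θ y) ∧
        pd 0 (ν ∘ Ψ) y ⬝ᵥ pd 0 (ν ∘ Ψ) y = 4 * Real.sinh (θ y / 2) ^ 2 ∧
        pd 0 (ν ∘ Ψ) y ⬝ᵥ pd 1 (ν ∘ Ψ) y = 0 ∧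
        pd 1 (ν ∘ Ψ) y ⬝ᵥ pd 1 (ν ∘ Ψ) y = 4 * Real.cosh (θ y / 2) ^ 2) := by
  intro p hp
  obtain ⟨t, ht, hfacts⟩ := front_facts U hU f ν hf hν hν1 htang hfront hdense hcurv humb
  let x : (Fin 2 → ℝ) → (Fin 3 → ℝ) := fun q => f q + ν q
  let y : (Fin 2 → ℝ) → (Fin 3 → ℝ) := fun q => f q - ν q
  have hx : ContDiffOn ℝ (⊤ : ℕ∞) x U := hf.add hν
  have hy : ContDiffOn ℝ (⊤ : ℕ∞) y U := hf.sub hν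
  have px : ∀ q ∈ U, ∀ k, pd k x q = pd k f q + pd k ν q := fun q hq k =>
    pd_add' (sm_diffAt hU hf hq) (sm_diffAt hU hν hq) k
  have py : ∀ q ∈ U, ∀ k, pd k y q = pd k f q - pd k ν q := fun q hq k =>
    pd_sub' (sm_diffAt hU hf hq) (sm_diffAt hU hν hq) k
  have hxn : ∀ q ∈ U, ∀ k, pd k x q ⬝ᵥ ν q = 0 := fun q hq k => by
    rw [px q hq, add_dotProduct, htang q hq, (hfacts q hq).1, add_zero]
  have hyn : ∀ q ∈ U, ∀ k, pd k y q ⬝ᵥ ν q = 0 := fun q hq k => by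
    rw [py q hq, sub_dotProduct, htang q hq, (hfacts q hq).1, sub_zero]
  have hsym : ∀ q ∈ U, ∀ i j, pd i x q ⬝ᵥ pd j y q = pd j x q ⬝ᵥ pd i y q := by
    intro q hq i j
    have h := (hfacts q hq).2.1 i j
    rw [px q hq, px q hq, py q hq, py q hq]
    simp only [add_dotProduct, dotProduct_sub]
    rw [dotProduct_comm (pd i ν q) (pd j f q), dotProduct_comm (pd j ν q) (pd i f q),
      dotProduct_comm (pd i ν q) (pd j ν q), dotProduct_comm (pd i f q) (pd j f q)]
    linear_combination (-2) * h
  have hconf : ∀ q ∈ U, ∀ i j, pd i x q ⬝ᵥ pd j x q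
      = Real.exp (-1 * t q) ^ 2 * (pd i y q ⬝ᵥ pd j y q) := by
    intro q hq i j
    rw [px q hq, px q hq, py q hq, py q hq]
    exact (hfacts q hq).2.2.1 i j
  obtain ⟨V, a, b, hV, hpV, hVU, ha, hb, haa, hbb, hab, han, hbn, hxa, hxb⟩ :=
    local_frame hU hx hy ht hxn hyn hsym hconf hp
      (by
        obtain ⟨i, hi⟩ := (hfacts p hp).2.2.2.1
        exact ⟨i, by rwa [px p hp, py p hp]⟩)
      (by
        obtain ⟨i, hi⟩ := (hfacts p hp).2.2.2.2
        exact ⟨i, by rwa [px p hp, py p hp]⟩)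
  have hba : ∀ q ∈ V, b q ⬝ᵥ a q = 0 := fun q hq => by rw [dotProduct_comm]; exact hab q hq
  have hnn : ∀ q ∈ V, ν q ⬝ᵥ ν q = 1 := fun q hq => hν1 q (hVU hq)
  have hxV := hx.mono hVU
  have hyV := hy.mono hVU
  have htV := ht.mono hVU
  -- the immersion `y`
  have hyimm : ∀ q ∈ U, ∀ X : Fin 2 → ℝ, X 0 • pd 0 y q + X 1 • pd 1 y q = 0 → X = 0 := by
    intro q hq X hX
    have hX' : X 0 • pd 0 x q + X 1 • pd 1 x q = 0 := by
      apply dot_self_zero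
      have h := congrArg (fun v => v ⬝ᵥ v) hX
      simp only [add_dotProduct, dotProduct_add, smul_dotProduct, dotProduct_smul, smul_eq_mul,
        zero_dotProduct] at h ⊢
      rw [hconf q hq, hconf q hq, hconf q hq, hconf q hq]
      linear_combination Real.exp (-1 * t q) ^ 2 * h
    rw [px q hq, px q hq] at hX'
    rw [py q hq, py q hq] at hX
    apply hfront q hq
    · rw [fderiv_eq_pd]
      have : (2 : ℝ) • (X 0 • pd 0 f q + X 1 • pd 1 f q) = 0 := by
        have h3 := congrArg₂ (· + ·) hX' hX
        simp only [add_zero] at h3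
        rw [← h3]; module
      exact (smul_eq_zero.1 this).resolve_left two_ne_zero
    · rw [fderiv_eq_pd]
      have : (2 : ℝ) • (X 0 • pd 0 ν q + X 1 • pd 1 ν q) = 0 := by
        have h3 := congrArg₂ (· - ·) hX' hX
        simp only [sub_zero] at h3
        rw [← h3]; module
      exact (smul_eq_zero.1 this).resolve_left two_ne_zero
  let fr : Fin 2 → (Fin 2 → ℝ) → (Fin 3 → ℝ) := ![a, b]
  let w : Fin 2 → Fin 2 → (Fin 2 → ℝ) → ℝ :=
    fun k i q => 1/2 * (Real.exp (-1/2 * t q) * (pd i y q ⬝ᵥ fr k q))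
  have sfr : ∀ k, ContDiffOn ℝ (⊤ : ℕ∞) (fr k) V := by
    intro k
    fin_cases k
    · exact ha
    · exact hb
  have sw' : ∀ k i, ContDiffOn ℝ (⊤ : ℕ∞)
      (fun q => Real.exp (-1/2 * t q) * (pd i y q ⬝ᵥ fr k q)) V := fun k i =>
    (sm_exp htV (-1/2)).mul (sm_dot (sm_pd hV hyV i) (sfr k))
  have sw : ∀ k i, ContDiffOn ℝ (⊤ : ℕ∞) (w k i) V := fun k i => contDiffOn_const.mul (sw' k i)
  have hclosed : ∀ k, ∀ q ∈ V, pdr 1 (w k 0) q = pdr 0 (w k 1) q := by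
    intro k q hq
    have h0 : ∀ j, pdr j (fun _ : Fin 2 → ℝ => (1/2 : ℝ)) q = 0 := fun j => by simp [pdr]
    rw [pdr_mul' (differentiableAt_const _) (sm_diffAt hV (sw' k 0) hq),
      pdr_mul' (differentiableAt_const _) (sm_diffAt hV (sw' k 1) hq), h0, h0]
    have : pdr 1 (fun q => Real.exp (-1/2 * t q) * (pd 0 y q ⬝ᵥ fr k q)) q
      = pdr 0 (fun q => Real.exp (-1/2 * t q) * (pd 1 y q ⬝ᵥ fr k q)) q := by
      fin_cases k
      · exact closed_form hV (x := x) (ε := 1) one_ne_zero hxV hyV ha htV haa hbb hnn hab han hbn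
          (fun q hq => hxn q (hVU hq)) (fun q hq => hyn q (hVU hq))
          (fun q hq k => by rw [one_mul]; exact hxa q hq k)
          (fun q hq k => by rw [one_mul]; exact hxb q hq k) hq
      · exact closed_form hV (x := x) (ε := -1) (by norm_num) hxV hyV hb htV hbb haa hnn hba hbn
          han (fun q hq => hxn q (hVU hq)) (fun q hq => hyn q (hVU hq))
          (fun q hq k => by rw [hxb q hq k]; ring)
          (fun q hq k => by rw [hxa q hq k]; ring) hq
    rw [this]
    ring
  have yexp : ∀ q ∈ V, ∀ k, pd k y q = (pd k y q ⬝ᵥ a q) • a q + (pd k y q ⬝ᵥ b q) • b q :=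
    fun q hq k => expand (haa q hq) (hbb q hq) (hnn q hq) (hab q hq) (han q hq) (hbn q hq)
      (hyn q (hVU hq) k)
  have xexp : ∀ q ∈ V, ∀ k, pd k x q = (pd k x q ⬝ᵥ a q) • a q + (pd k x q ⬝ᵥ b q) • b q :=
    fun q hq k => expand (haa q hq) (hbb q hq) (hnn q hq) (hab q hq) (han q hq) (hbn q hq)
      (hxn q (hVU hq) k)
  have hdet : ∀ q ∈ V, w 0 0 q * w 1 1 q - w 0 1 q * w 1 0 q ≠ 0 := by
    intro q hq hz
    have hE := (Real.exp_pos (-1/2 * t q)).ne'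
    have hz' : (pd 0 y q ⬝ᵥ a q) * (pd 1 y q ⬝ᵥ b q)
        - (pd 1 y q ⬝ᵥ a q) * (pd 0 y q ⬝ᵥ b q) = 0 := by
      have : (1/4 * Real.exp (-1/2 * t q) ^ 2) * ((pd 0 y q ⬝ᵥ a q) * (pd 1 y q ⬝ᵥ b q)
        - (pd 1 y q ⬝ᵥ a q) * (pd 0 y q ⬝ᵥ b q)) = 0 := by
        have e0 : fr 0 = a := rfl
        have e1 : fr 1 = b := rfl
        simp only [w, e0, e1] at hz
        linear_combination hz
      exact (mul_eq_zero.1 this).resolve_left (by positivity)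
    have hX := hyimm q (hVU hq) ![pd 1 y q ⬝ᵥ a q, -(pd 0 y q ⬝ᵥ a q)] (by
      rw [yexp q hq 0, yexp q hq 1]
      simp only [Matrix.cons_val_zero, Matrix.cons_val_one, add_dotProduct, smul_dotProduct,
        haa q hq, hba q hq, smul_eq_mul]
      have : (pd 1 y q ⬝ᵥ a q) * (pd 0 y q ⬝ᵥ b q) = (pd 0 y q ⬝ᵥ a q) * (pd 1 y q ⬝ᵥ b q) := by
        linarith
      simp only [mul_one, mul_zero, add_zero, smul_add, smul_smul, neg_mul, this]
      module)
    have hY := hyimm q (hVU hq) ![pd 1 y q ⬝ᵥ b q, -(pd 0 y q ⬝ᵥ b q)] (by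
      rw [yexp q hq 0, yexp q hq 1]
      simp only [Matrix.cons_val_zero, Matrix.cons_val_one, add_dotProduct, smul_dotProduct,
        hbb q hq, hab q hq, smul_eq_mul]
      have : (pd 1 y q ⬝ᵥ b q) * (pd 0 y q ⬝ᵥ a q) = (pd 0 y q ⬝ᵥ b q) * (pd 1 y q ⬝ᵥ a q) := by
        linarith
      simp only [mul_one, mul_zero, zero_add, smul_add, smul_smul, neg_mul, this]
      module)
    have h1 : pd 1 y q ⬝ᵥ a q = 0 := by simpa using congrFun hX 0
    have h2 : pd 1 y q ⬝ᵥ b q = 0 := by simpa using congrFun hY 0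
    have hy1 : pd 1 y q = 0 := by rw [yexp q hq 1, h1, h2]; simp
    have := hyimm q (hVU hq) ![0, 1] (by rw [hy1]; simp)
    simpa using congrFun this 1
  obtain ⟨V', W, Φ, Ψ, hV', hpV', hV'V, hW, hΦ, hΨ, himg, hl, hr, hmap, hΨw⟩ :=
    integrate_forms hV hpV w sw hclosed hdet
  have hmapV : Set.MapsTo Ψ W V := fun z hz => hV'V (hmap z hz)
  have hmapU : Set.MapsTo Ψ W U := fun z hz => hVU (hmapV hz)
  -- derivatives in the new coordinates
  have hcoord : ∀ z ∈ W, ∀ j, pd j Ψ z 0 * (pd 0 y (Ψ z) ⬝ᵥ a (Ψ z))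
        + pd j Ψ z 1 * (pd 1 y (Ψ z) ⬝ᵥ a (Ψ z))
          = 2 * Real.exp (1/2 * t (Ψ z)) * (if (0 : Fin 2) = j then 1 else 0) ∧
      pd j Ψ z 0 * (pd 0 y (Ψ z) ⬝ᵥ b (Ψ z)) + pd j Ψ z 1 * (pd 1 y (Ψ z) ⬝ᵥ b (Ψ z))
          = 2 * Real.exp (1/2 * t (Ψ z)) * (if (1 : Fin 2) = j then 1 else 0) := by
    intro z hz j
    have hE : Real.exp (1/2 * t (Ψ z)) * Real.exp (-1/2 * t (Ψ z)) = 1 := by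
      rw [← Real.exp_add, ← Real.exp_zero]; congr 1; ring
    have e0 : fr 0 = a := rfl
    have e1 : fr 1 = b := rfl
    constructor
    · rw [← hΨw z hz 0 j]
      simp only [w, e0]
      linear_combination (-(pd j Ψ z 0 * (pd 0 y (Ψ z) ⬝ᵥ a (Ψ z))
        + pd j Ψ z 1 * (pd 1 y (Ψ z) ⬝ᵥ a (Ψ z)))) * hE
    · rw [← hΨw z hz 1 j]
      simp only [w, e1]
      linear_combination (-(pd j Ψ z 0 * (pd 0 y (Ψ z) ⬝ᵥ b (Ψ z))
        + pd j Ψ z 1 * (pd 1 y (Ψ z) ⬝ᵥ b (Ψ z)))) * hE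
  have hyΨ : ∀ z ∈ W, ∀ j, pd j (y ∘ Ψ) z
      = (2 * Real.exp (1/2 * t (Ψ z)) * (if (0 : Fin 2) = j then 1 else 0)) • a (Ψ z)
      + (2 * Real.exp (1/2 * t (Ψ z)) * (if (1 : Fin 2) = j then 1 else 0)) • b (Ψ z) := by
    intro z hz j
    rw [pd_comp (sm_diffAt hU hy (hmapU hz)) (sm_diffAt hW hΨ hz),
      yexp _ (hmapV hz) 0, yexp _ (hmapV hz) 1, ← (hcoord z hz j).1, ← (hcoord z hz j).2]
    module
  have hxΨ : ∀ z ∈ W, ∀ j, pd j (x ∘ Ψ) z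
      = (2 * Real.exp (-1/2 * t (Ψ z)) * (if (0 : Fin 2) = j then 1 else 0)) • a (Ψ z)
      + (-(2 * Real.exp (-1/2 * t (Ψ z)) * (if (1 : Fin 2) = j then 1 else 0))) • b (Ψ z) := by
    intro z hz j
    have hE : Real.exp (-1/2 * t (Ψ z)) = Real.exp (-1 * t (Ψ z)) * Real.exp (1/2 * t (Ψ z)) := by
      rw [← Real.exp_add]; congr 1; ring
    have e0 : 2 * Real.exp (-1/2 * t (Ψ z)) * (if (0 : Fin 2) = j then 1 else 0)
        = Real.exp (-1 * t (Ψ z)) *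
          (2 * Real.exp (1/2 * t (Ψ z)) * (if (0 : Fin 2) = j then 1 else 0)) := by
      rw [hE]; ring
    have e1 : 2 * Real.exp (-1/2 * t (Ψ z)) * (if (1 : Fin 2) = j then 1 else 0)
        = Real.exp (-1 * t (Ψ z)) *
          (2 * Real.exp (1/2 * t (Ψ z)) * (if (1 : Fin 2) = j then 1 else 0)) := by
      rw [hE]; ring
    rw [pd_comp (sm_diffAt hU hx (hmapU hz)) (sm_diffAt hW hΨ hz),
      xexp _ (hmapV hz) 0, xexp _ (hmapV hz) 1, e0, e1, ← (hcoord z hz j).1,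
      ← (hcoord z hz j).2, hxa _ (hmapV hz), hxa _ (hmapV hz), hxb _ (hmapV hz),
      hxb _ (hmapV hz)]
    module
  have sfΨ : ContDiffOn ℝ (⊤ : ℕ∞) (f ∘ Ψ) W := hf.comp hΨ hmapU
  have snΨ : ContDiffOn ℝ (⊤ : ℕ∞) (ν ∘ Ψ) W := hν.comp hΨ hmapU
  have hfn : ∀ z ∈ W, ∀ j, pd j (f ∘ Ψ) z = (1/2 : ℝ) • (pd j (x ∘ Ψ) z + pd j (y ∘ Ψ) z) ∧
      pd j (ν ∘ Ψ) z = (1/2 : ℝ) • (pd j (x ∘ Ψ) z - pd j (y ∘ Ψ) z) := by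
    intro z hz j
    have h1 : pd j (x ∘ Ψ) z = pd j (f ∘ Ψ) z + pd j (ν ∘ Ψ) z :=
      pd_add' (sm_diffAt hW sfΨ hz) (sm_diffAt hW snΨ hz) j
    have h2 : pd j (y ∘ Ψ) z = pd j (f ∘ Ψ) z - pd j (ν ∘ Ψ) z :=
      pd_sub' (sm_diffAt hW sfΨ hz) (sm_diffAt hW snΨ hz) j
    rw [h1, h2]
    constructor <;> module
  have f0 : ∀ z ∈ W, pd 0 (f ∘ Ψ) z = (2 * Real.cosh (t (Ψ z) / 2)) • a (Ψ z) := by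
    intro z hz
    rw [(hfn z hz 0).1, hxΨ z hz, hyΨ z hz, (exp_half _).1, (exp_half _).2]
    simp only [if_true, one_ne_zero, if_false]
    module
  have f1 : ∀ z ∈ W, pd 1 (f ∘ Ψ) z = (2 * Real.sinh (t (Ψ z) / 2)) • b (Ψ z) := by
    intro z hz
    rw [(hfn z hz 1).1, hxΨ z hz, hyΨ z hz, (exp_half _).1, (exp_half _).2]
    simp only [if_true, zero_ne_one, if_false]
    module
  have n0 : ∀ z ∈ W, pd 0 (ν ∘ Ψ) z = (-2 * Real.sinh (t (Ψ z) / 2)) • a (Ψ z) := by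
    intro z hz
    rw [(hfn z hz 0).2, hxΨ z hz, hyΨ z hz, (exp_half _).1, (exp_half _).2]
    simp only [if_true, one_ne_zero, if_false]
    module
  have n1 : ∀ z ∈ W, pd 1 (ν ∘ Ψ) z = (-2 * Real.cosh (t (Ψ z) / 2)) • b (Ψ z) := by
    intro z hz
    rw [(hfn z hz 1).2, hxΨ z hz, hyΨ z hz, (exp_half _).1, (exp_half _).2]
    simp only [if_true, zero_ne_one, if_false]
    module
  have stΨ : ContDiffOn ℝ (⊤ : ℕ∞) (t ∘ Ψ) W := ht.comp hΨ hmapU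
  refine ⟨V', W, Φ, Ψ, t ∘ Ψ, hV', hpV', hV'V.trans hVU, hW, hΦ, hΨ, himg, hl, hr, stΨ, ?_, ?_⟩
  · refine sinh_gordon hW (y := y ∘ Ψ) (n := ν ∘ Ψ) (a := a ∘ Ψ) (b := b ∘ Ψ)
      (hy.comp hΨ hmapU) snΨ (ha.comp hΨ hmapV) (hb.comp hΨ hmapV) stΨ
      (fun z hz => haa _ (hmapV hz)) (fun z hz => hbb _ (hmapV hz))
      (fun z hz => hnn _ (hmapV hz)) (fun z hz => hab _ (hmapV hz))
      (fun z hz => han _ (hmapV hz)) (fun z hz => hbn _ (hmapV hz)) ?_ ?_ n0 n1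
    · intro z hz
      rw [hyΨ z hz]
      simp
    · intro z hz
      rw [hyΨ z hz]
      simp
  · intro z hz
    have hs : Real.sinh (t (Ψ z)) = 2 * Real.sinh (t (Ψ z) / 2) * Real.cosh (t (Ψ z) / 2) := by
      rw [← Real.sinh_two_mul]; congr 1; ring
    simp only [f0 z hz, f1 z hz, n0 z hz, n1 z hz, smul_dotProduct, dotProduct_smul, smul_eq_mul,
      haa _ (hmapV hz), hbb _ (hmapV hz), hab _ (hmapV hz), hba _ (hmapV hz), Function.comp_apply,
      hs]
    refine ⟨?_, ?_, ?_, ?_, ?_, ?_, ?_, ?_, ?_, ?_⟩ <;> ring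
end
end

section
/- Let m ≥ 2, let U ⊆ ℝ^m be open, let (f, ν) be a front on U with values in ℝ^{m+1}, and let p ∈ U be an A₂-point of f. Suppose there is an open neighborhood V ⊆ U of p on which K^ext does not change sign, i.e. either K^ext(X, Y)(q) ≥ 0 for all q ∈ V∖Σ and all linearly independent X, Y ∈ ℝ^m, or K^ext(X, Y)(q) ≤ 0 for all such q, X, Y. Then K^ext is bounded near p: there exist an open neighborhood W ⊆ V of p and a constant C > 0 such that |K^ext(X, Y)(q)| ≤ C for all q ∈ W∖Σ and all linearly independent X, Y ∈ ℝ^m. -/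
open scoped Matrix

noncomputable section

/-- The Jacobian function `λ(q) = det(∂_1 f, …, ∂_m f, ν)` of a frontal `(f, ν)`. -/
def lamb {m : ℕ} (f ν : (Fin m → ℝ) → (Fin (m + 1) → ℝ)) (q : Fin m → ℝ) : ℝ :=
  Matrix.det (Matrix.of (Fin.snoc (fun k : Fin m => pd k f q) (ν q)))

/-- `p` is an `A₂`-point of the frontal `(f, ν)`: a nondegenerate singular point at which
the null direction is transversal to the singular hypersurface, i.e. `dλ_p(η) ≠ 0` for
(any) nonzero null vector `η`. -/
def IsA2 {m : ℕ} (f ν : (Fin m → ℝ) → (Fin (m + 1) → ℝ)) (p : Fin m → ℝ) : Prop :=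
  lamb f ν p = 0 ∧ fderiv ℝ (lamb f ν) p ≠ 0 ∧
  ∀ X : Fin m → ℝ, X ≠ 0 → fderiv ℝ f p X = 0 → fderiv ℝ (lamb f ν) p X ≠ 0

/-- The extrinsic curvature `K^ext(X ∧ Y) = (II(X,X)II(Y,Y) − II(X,Y)²)/(I(X,X)I(Y,Y) − I(X,Y)²)`
of the plane spanned by `X, Y` at `q`, where `I(X,Y) = ⟨df X, df Y⟩` and
`II(X,Y) = −⟨df X, dν Y⟩`. -/
def Kext {m : ℕ} (f ν : (Fin m → ℝ) → (Fin (m + 1) → ℝ)) (q : Fin m → ℝ)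
    (X Y : Fin m → ℝ) : ℝ :=
  ((fderiv ℝ f q X ⬝ᵥ fderiv ℝ ν q X) * (fderiv ℝ f q Y ⬝ᵥ fderiv ℝ ν q Y)
      - (fderiv ℝ f q X ⬝ᵥ fderiv ℝ ν q Y) ^ 2) /
    ((fderiv ℝ f q X ⬝ᵥ fderiv ℝ f q X) * (fderiv ℝ f q Y ⬝ᵥ fderiv ℝ f q Y)
      - (fderiv ℝ f q X ⬝ᵥ fderiv ℝ f q Y) ^ 2)


namespace KextAux

/-- One-dimensional core: a nonnegative function vanishing where `l` vanishes is `O(l²)`. -/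
lemma oneD {δ C : ℝ} (hδ : 0 < δ) (l l' g g1 g2 : ℝ → ℝ)
    (hl : ∀ t ∈ Set.Icc (-δ) δ, HasDerivAt l (l' t) t)
    (hl' : ∀ t ∈ Set.Icc (-δ) δ, 1 / 2 ≤ l' t)
    (hpos : 0 < l δ) (hneg : l (-δ) < 0)
    (hg : ∀ t ∈ Set.Icc (-δ) δ, HasDerivAt g (g1 t) t)
    (hg1 : ∀ t ∈ Set.Icc (-δ) δ, HasDerivAt g1 (g2 t) t)
    (hC : ∀ t ∈ Set.Icc (-δ) δ, |g2 t| ≤ C)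
    (hnn : ∀ t ∈ Set.Icc (-δ) δ, 0 ≤ g t)
    (hz : ∀ t ∈ Set.Icc (-δ) δ, l t = 0 → g t = 0) :
    |g 0| ≤ 4 * C * (l 0) ^ 2 := by
  have h0 : (0 : ℝ) ∈ Set.Icc (-δ) δ := ⟨by linarith, hδ.le⟩
  have hC0 : 0 ≤ C := (abs_nonneg _).trans (hC 0 h0)
  have hlc : ContinuousOn l (Set.Icc (-δ) δ) :=
    fun t ht => (hl t ht).continuousAt.continuousWithinAt
  obtain ⟨τ, hτ, hlτ⟩ := intermediate_value_Ioo (by linarith : -δ ≤ δ) hlc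
    (show (0 : ℝ) ∈ Set.Ioo (l (-δ)) (l δ) from ⟨hneg, hpos⟩)
  have hτ' : τ ∈ Set.Icc (-δ) δ := Set.Ioo_subset_Icc_self hτ
  have hgτ := hz τ hτ' hlτ
  have hmin : IsLocalMin g τ := by
    filter_upwards [Icc_mem_nhds hτ.1 hτ.2] with t ht
    rw [hgτ]; exact hnn t ht
  have hg1τ : g1 τ = 0 := hmin.hasDerivAt_eq_zero (hg τ hτ')
  have b1 : ∀ t ∈ Set.Icc (-δ) δ, |g1 t| ≤ C * |t - τ| := by
    intro t ht
    have := Convex.norm_image_sub_le_of_norm_hasDerivWithin_le (f := g1) (f' := g2)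
      (fun x hx => (hg1 x hx).hasDerivWithinAt) (fun x hx => hC x hx)
      (convex_Icc (-δ) δ) hτ' ht
    simpa [hg1τ] using this
  have hsub : Set.uIcc τ 0 ⊆ Set.Icc (-δ) δ := Set.uIcc_subset_Icc hτ' h0
  have b2 : |g 0| ≤ C * |τ| * |τ| := by
    have := Convex.norm_image_sub_le_of_norm_hasDerivWithin_le (f := g) (f' := g1)
      (C := C * |τ|)
      (fun x hx => (hg x (hsub hx)).hasDerivWithinAt)
      (fun x hx => (b1 x (hsub hx)).trans (by
        refine mul_le_mul_of_nonneg_left ?_ hC0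
        have := Set.abs_sub_left_of_mem_uIcc hx
        simpa using this))
      (convex_uIcc τ 0) Set.left_mem_uIcc Set.right_mem_uIcc
    simpa [hgτ] using this
  have b3 : |τ| ≤ 2 * |l 0| := by
    rcases lt_trichotomy τ 0 with h | h | h
    · obtain ⟨c, hc, he⟩ := exists_hasDerivAt_eq_slope l l' h
        (hlc.mono (Set.Icc_subset_Icc hτ'.1 h0.2))
        (fun x hx => hl x ⟨hτ'.1.trans hx.1.le, hx.2.le.trans h0.2⟩)
      have h2 := hl' c ⟨hτ'.1.trans hc.1.le, hc.2.le.trans h0.2⟩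
      rw [he, hlτ, le_div_iff₀ (by linarith)] at h2
      rw [abs_of_neg h]
      have := le_abs_self (l 0)
      linarith
    · simp [h]
    · obtain ⟨c, hc, he⟩ := exists_hasDerivAt_eq_slope l l' h
        (hlc.mono (Set.Icc_subset_Icc h0.1 hτ'.2))
        (fun x hx => hl x ⟨h0.1.trans hx.1.le, hx.2.le.trans hτ'.2⟩)
      have h2 := hl' c ⟨h0.1.trans hc.1.le, hc.2.le.trans hτ'.2⟩
      rw [he, hlτ, le_div_iff₀ (by linarith)] at h2
      rw [abs_of_pos h]
      have := neg_abs_le (l 0)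
      linarith
  calc |g 0| ≤ C * |τ| * |τ| := b2
    _ = C * (|τ| * |τ|) := by ring
    _ ≤ C * ((2 * |l 0|) * (2 * |l 0|)) := by gcongr
    _ = 4 * C * |l 0| ^ 2 := by ring
    _ = 4 * C * (l 0) ^ 2 := by rw [sq_abs]

/-- Uniform version with parameters. -/
lemma param {E F : Type*} [NormedAddCommGroup E] [NormedSpace ℝ E] [FiniteDimensional ℝ E]
    [NormedAddCommGroup F] [NormedSpace ℝ F] [FiniteDimensional ℝ F]
    {V : Set E} (hV : IsOpen V) {p : E} (hp : p ∈ V) (l : E → ℝ) (G : E × F → ℝ)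
    (hl : ContDiffOn ℝ (⊤ : ℕ∞) l V) (hG : ContDiffOn ℝ (⊤ : ℕ∞) G (V ×ˢ Set.univ))
    (hlp : l p = 0) (hdl : fderiv ℝ l p ≠ 0)
    (hnn : ∀ q ∈ V, ∀ z, 0 ≤ G (q, z)) (hz : ∀ q ∈ V, l q = 0 → ∀ z, G (q, z) = 0) :
    ∃ W : Set E, IsOpen W ∧ p ∈ W ∧ W ⊆ V ∧ ∃ C : ℝ, 0 < C ∧
      ∀ q ∈ W, ∀ z : F, ‖z‖ ≤ 1 → |G (q, z)| ≤ C * (l q) ^ 2 := by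
  obtain ⟨v, hv⟩ : ∃ v, fderiv ℝ l p v = 1 := by
    obtain ⟨u, hu⟩ : ∃ u, fderiv ℝ l p u ≠ 0 := by
      by_contra h
      push Not at h
      exact hdl (ContinuousLinearMap.ext h)
    exact ⟨(fderiv ℝ l p u)⁻¹ • u, by simp [hu]⟩
  have hVF : IsOpen (V ×ˢ (Set.univ : Set F)) := hV.prod isOpen_univ
  have hdlc : ContDiffOn ℝ (⊤ : ℕ∞) (fun q => fderiv ℝ l q v) V :=
    (hl.fderiv_of_isOpen hV (m := (⊤ : ℕ∞)) (by simp)).clm_apply contDiffOn_const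
  set G1 : E × F → ℝ := fun x => fderiv ℝ G x (v, 0) with hG1
  have hG1c : ContDiffOn ℝ (⊤ : ℕ∞) G1 (V ×ˢ Set.univ) :=
    (hG.fderiv_of_isOpen hVF (m := (⊤ : ℕ∞)) (by simp)).clm_apply contDiffOn_const
  set G2 : E × F → ℝ := fun x => fderiv ℝ G1 x (v, 0) with hG2
  have hG2c : ContDiffOn ℝ (⊤ : ℕ∞) G2 (V ×ˢ Set.univ) :=
    (hG1c.fderiv_of_isOpen hVF (m := (⊤ : ℕ∞)) (by simp)).clm_apply contDiffOn_const
  have hev : ∀ᶠ q in nhds p, q ∈ V ∧ 1 / 2 < fderiv ℝ l q v := by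
    refine Filter.Eventually.and (hV.mem_nhds hp) ?_
    refine (hdlc.continuousOn.continuousAt (hV.mem_nhds hp)).eventually_const_lt ?_
    change 1 / 2 < fderiv ℝ l p v
    rw [hv]; norm_num
  obtain ⟨r, hr, hball⟩ := Metric.nhds_basis_closedBall.eventually_iff.1 hev
  obtain ⟨δ, hδ, hδv⟩ : ∃ δ : ℝ, 0 < δ ∧ δ * ‖v‖ ≤ r / 2 := by
    refine ⟨r / 2 / (‖v‖ + 1), by positivity, ?_⟩
    rw [div_mul_eq_mul_div, div_le_iff₀ (by positivity)]
    nlinarith [norm_nonneg v]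
  have hin : ∀ q ∈ Metric.ball p (r / 2), ∀ t ∈ Set.Icc (-δ) δ,
      q + t • v ∈ Metric.closedBall p r := by
    intro q hq t ht
    rw [Metric.mem_ball, dist_eq_norm] at hq
    rw [Metric.mem_closedBall, dist_eq_norm]
    have h1 : ‖t • v‖ ≤ r / 2 := by
      rw [norm_smul]
      refine le_trans ?_ hδv
      gcongr
      exact abs_le.2 ht
    calc ‖q + t • v - p‖ = ‖(q - p) + t • v‖ := by congr 1; abel
      _ ≤ ‖q - p‖ + ‖t • v‖ := norm_add_le _ _
      _ ≤ r := by linarith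
  have hpath : ∀ (q : E) (t : ℝ), HasDerivAt (fun t : ℝ => q + t • v) v t := by
    intro q t
    simpa using ((hasDerivAt_id t).smul_const v).const_add q
  have hld : ∀ q ∈ Metric.ball p (r / 2), ∀ t ∈ Set.Icc (-δ) δ,
      HasDerivAt (fun t : ℝ => l (q + t • v)) (fderiv ℝ l (q + t • v) v) t := by
    intro q hq t ht
    have hd : DifferentiableAt ℝ l (q + t • v) :=
      (hl.contDiffAt (hV.mem_nhds (hball (hin q hq t ht)).1)).differentiableAt (by simp)
    exact hd.hasFDerivAt.comp_hasDerivAt t (hpath q t)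
  have hpr : p ∈ Metric.ball p (r / 2) := Metric.mem_ball_self (by positivity)
  have hmono : StrictMonoOn (fun t : ℝ => l (p + t • v)) (Set.Icc (-δ) δ) := by
    refine strictMonoOn_of_deriv_pos (convex_Icc _ _)
      (fun t ht => (hld p hpr t ht).continuousAt.continuousWithinAt) ?_
    intro t ht
    have ht' := interior_subset ht
    rw [(hld p hpr t ht').deriv]
    linarith [(hball (hin p hpr t ht')).2]
  have h0 : (0 : ℝ) ∈ Set.Icc (-δ) δ := ⟨by linarith, hδ.le⟩
  have hδm : δ ∈ Set.Icc (-δ) δ := ⟨by linarith, le_rfl⟩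
  have hδm' : -δ ∈ Set.Icc (-δ) δ := ⟨le_rfl, by linarith⟩
  have hpp : 0 < l (p + δ • v) := by
    have := hmono h0 hδm hδ
    simpa [hlp] using this
  have hpn : l (p + (-δ) • v) < 0 := by
    have := hmono hδm' h0 (by linarith)
    simpa [hlp] using this
  have hcont : ∀ t ∈ Set.Icc (-δ) δ, ContinuousAt (fun q => l (q + t • v)) p := by
    intro t ht
    have hd : ContinuousAt l (p + t • v) :=
      (hl.contDiffAt (hV.mem_nhds (hball (hin p hpr t ht)).1)).continuousAt
    exact ContinuousAt.comp (f := fun q => q + t • v) hd (by fun_prop)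
  have hW : ∀ᶠ q in nhds p, q ∈ Metric.ball p (r / 2) ∧ 0 < l (q + δ • v) ∧
      l (q + (-δ) • v) < 0 :=
    Filter.Eventually.and (Metric.isOpen_ball.mem_nhds hpr)
      (((hcont δ hδm).eventually_const_lt hpp).and ((hcont (-δ) hδm').eventually_lt_const hpn))
  obtain ⟨W, hWs, hWo, hpW⟩ := eventually_nhds_iff.1 hW
  have hK : IsCompact (Metric.closedBall p r ×ˢ Metric.closedBall (0 : F) 1) :=
    haveI := FiniteDimensional.proper_real E
    haveI := FiniteDimensional.proper_real F
    (isCompact_closedBall p r).prod (isCompact_closedBall 0 1)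
  obtain ⟨C, hC⟩ := hK.exists_bound_of_continuousOn (f := G2)
    (hG2c.continuousOn.mono (Set.prod_mono (fun q hq => (hball hq).1) (Set.subset_univ _)))
  refine ⟨W, hWo, hpW, ?_, 4 * (|C| + 1), by positivity, ?_⟩
  · intro q hq
    have := hin q (hWs q hq).1 0 h0
    have := (hball this).1
    simpa using this
  intro q hq z hzn
  obtain ⟨hqb, hq1, hq2⟩ := hWs q hq
  have hpath2 : ∀ t : ℝ, HasDerivAt (fun t : ℝ => (q + t • v, z)) (v, (0 : F)) t :=
    fun t => (hpath q t).prodMk (hasDerivAt_const t z)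
  have hmem : ∀ t ∈ Set.Icc (-δ) δ, (q + t • v, z) ∈ V ×ˢ (Set.univ : Set F) :=
    fun t ht => ⟨(hball (hin q hqb t ht)).1, trivial⟩
  have key := oneD (C := |C| + 1) hδ (fun t => l (q + t • v))
    (fun t => fderiv ℝ l (q + t • v) v)
    (fun t => G (q + t • v, z)) (fun t => G1 (q + t • v, z)) (fun t => G2 (q + t • v, z))
    (hld q hqb) (fun t ht => (hball (hin q hqb t ht)).2.le) hq1 hq2
    (fun t ht => by
      have hd : DifferentiableAt ℝ G (q + t • v, z) :=
        (hG.contDiffAt (hVF.mem_nhds (hmem t ht))).differentiableAt (by simp)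
      exact hd.hasFDerivAt.comp_hasDerivAt t (hpath2 t))
    (fun t ht => by
      have hd : DifferentiableAt ℝ G1 (q + t • v, z) :=
        (hG1c.contDiffAt (hVF.mem_nhds (hmem t ht))).differentiableAt (by simp)
      exact hd.hasFDerivAt.comp_hasDerivAt t (hpath2 t))
    (fun t ht => by
      have := hC (q + t • v, z) ⟨hin q hqb t ht, by simpa using hzn⟩
      rw [Real.norm_eq_abs] at this
      linarith [le_abs_self C])
    (fun t ht => hnn _ (hmem t ht).1 z)
    (fun t ht h => hz _ (hmem t ht).1 h z)
  simpa using key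

/-- Proportionality of the rows of the adjugate of a singular matrix. -/
lemma adj_rank_one {n : Type*} [Fintype n] [DecidableEq n] (M : Matrix n n ℝ) (h : M.det = 0)
    (a b j k : n) : M.adjugate a j * M.adjugate b k = M.adjugate b j * M.adjugate a k := by
  have main : ∀ i j : n, M.adjugate i j ≠ 0 → ∀ a b k,
      M.adjugate a j * M.adjugate b k = M.adjugate b j * M.adjugate a k := by
    intro i j hij a b k
    rw [Matrix.adjugate_apply] at hij
    have hker : ∀ a, Matrix.vecMul (M.adjugate a) M = 0 := by
      intro a
      have := congrFun (Matrix.adjugate_mul M) a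
      ext c
      have := congrFun this c
      rw [Matrix.mul_apply] at this
      simpa [h, Matrix.vecMul, dotProduct] using this
    set z : n → ℝ := M.adjugate a j • M.adjugate b - M.adjugate b j • M.adjugate a with hz
    have hzM : Matrix.vecMul z M = 0 := by
      rw [hz, Matrix.sub_vecMul, Matrix.smul_vecMul, Matrix.smul_vecMul, hker, hker]
      simp
    have hzj : z j = 0 := by simp [hz]; ring
    have hz' : Matrix.vecMul z (M.updateRow j (Pi.single i 1)) = 0 := by
      rw [← hzM]
      ext c
      simp only [Matrix.vecMul, dotProduct]
      refine Finset.sum_congr rfl fun x _ => ?_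
      by_cases hx : x = j
      · subst hx; simp [hzj]
      · rw [Matrix.updateRow_ne hx]
    have hz0 := Matrix.eq_zero_of_vecMul_eq_zero hij hz'
    have := congrFun hz0 k
    simp [hz] at this
    linarith
  by_cases h1 : M.adjugate a j = 0
  · by_cases h2 : M.adjugate b j = 0
    · simp [h1, h2]
    · exact main b j h2 a b k
  · exact main a j h1 a b k

lemma det_smooth {E n : Type*} [NormedAddCommGroup E] [NormedSpace ℝ E] [Fintype n]
    [DecidableEq n] {s : Set E} (M : E → Matrix n n ℝ)
    (hM : ∀ i j, ContDiffOn ℝ (⊤ : ℕ∞) (fun q => M q i j) s) :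
    ContDiffOn ℝ (⊤ : ℕ∞) (fun q => (M q).det) s := by
  simp only [Matrix.det_apply']
  refine ContDiffOn.sum fun σ _ => contDiffOn_const.mul ?_
  exact contDiffOn_prod fun i _ => hM _ _

lemma adj_smooth {E n : Type*} [NormedAddCommGroup E] [NormedSpace ℝ E] [Fintype n]
    [DecidableEq n] {s : Set E} (M : E → Matrix n n ℝ)
    (hM : ∀ i j, ContDiffOn ℝ (⊤ : ℕ∞) (fun q => M q i j) s) (a b : n) :
    ContDiffOn ℝ (⊤ : ℕ∞) (fun q => (M q).adjugate a b) s := by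
  simp only [Matrix.adjugate_apply]
  refine det_smooth _ fun i j => ?_
  by_cases h : i = b
  · subst h; simpa using contDiffOn_const
  · simpa [Matrix.updateRow_ne h] using hM i j

/-- The matrix whose determinant is `lamb`. -/
def MM {m : ℕ} (f ν : (Fin m → ℝ) → (Fin (m + 1) → ℝ)) (q : Fin m → ℝ) :
    Matrix (Fin (m + 1)) (Fin (m + 1)) ℝ :=
  Matrix.of (Fin.snoc (fun k : Fin m => pd k f q) (ν q))

/-- The tangential part of the adjugate: `df (AA w) = λ (w - ⟨w,ν⟩ν)`. -/
def AA {m : ℕ} (f ν : (Fin m → ℝ) → (Fin (m + 1) → ℝ)) (q : Fin m → ℝ)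
    (w : Fin (m + 1) → ℝ) : Fin m → ℝ :=
  fun k => ∑ a, w a * (MM f ν q).adjugate a k.castSucc

/-- The rescaled second fundamental form. -/
def BB {m : ℕ} (f ν : (Fin m → ℝ) → (Fin (m + 1) → ℝ)) (q : Fin m → ℝ)
    (w w' : Fin (m + 1) → ℝ) : ℝ :=
  w ⬝ᵥ fderiv ℝ ν q (AA f ν q w')

/-- Its two by two minors. -/
def QQ {m : ℕ} (f ν : (Fin m → ℝ) → (Fin (m + 1) → ℝ)) (q : Fin m → ℝ)
    (w w' : Fin (m + 1) → ℝ) : ℝ :=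
  BB f ν q w w * BB f ν q w' w' - BB f ν q w w' * BB f ν q w' w

section
variable {m : ℕ} (f ν : (Fin m → ℝ) → (Fin (m + 1) → ℝ))

lemma fderiv_eq_sum (q X : Fin m → ℝ) :
    fderiv ℝ f q X = ∑ k, X k • pd k f q := by
  conv_lhs => rw [pi_eq_sum_univ' X]
  rw [map_sum]
  refine Finset.sum_congr rfl fun k _ => ?_
  rw [pd, ← map_smul]

lemma vecMul_MM (q : Fin m → ℝ) (x : Fin (m + 1) → ℝ) :
    Matrix.vecMul x (MM f ν q) =
      fderiv ℝ f q (fun k => x k.castSucc) + x (Fin.last m) • ν q := by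
  rw [fderiv_eq_sum]
  ext c
  simp [Matrix.vecMul, dotProduct, Fin.sum_univ_castSucc, MM]

lemma AA_eq (q : Fin m → ℝ) (w : Fin (m + 1) → ℝ) :
    AA f ν q w = fun k => Matrix.vecMul w (MM f ν q).adjugate k.castSucc := by
  ext k; simp [AA, Matrix.vecMul, dotProduct]

lemma df_AA (q : Fin m → ℝ) (w : Fin (m + 1) → ℝ) :
    ∃ c : ℝ, fderiv ℝ f q (AA f ν q w) = lamb f ν q • w + c • ν q := by
  refine ⟨-(Matrix.vecMul w (MM f ν q).adjugate (Fin.last m)), ?_⟩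
  have h := vecMul_MM f ν q (Matrix.vecMul w (MM f ν q).adjugate)
  rw [Matrix.vecMul_vecMul, Matrix.adjugate_mul, Matrix.vecMul_smul, Matrix.vecMul_one,
    ← AA_eq] at h
  change lamb f ν q • w = _ at h
  rw [h]; simp

lemma AA_df (q X : Fin m → ℝ) :
    AA f ν q (fderiv ℝ f q X) = lamb f ν q • X := by
  have h := vecMul_MM f ν q (Fin.snoc (α := fun _ => ℝ) X 0)
  simp only [Fin.snoc_castSucc, Fin.snoc_last, zero_smul, add_zero] at h
  rw [AA_eq, ← h, Matrix.vecMul_vecMul, Matrix.mul_adjugate, Matrix.vecMul_smul,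
    Matrix.vecMul_one]
  ext k
  simp [lamb, MM]

lemma AA_smul (q : Fin m → ℝ) (c : ℝ) (w : Fin (m + 1) → ℝ) :
    AA f ν q (c • w) = c • AA f ν q w := by
  ext k; simp [AA, Finset.mul_sum, mul_assoc]

lemma AA_rank (q : Fin m → ℝ) (h : lamb f ν q = 0) (w w' : Fin (m + 1) → ℝ) (j k : Fin m) :
    AA f ν q w j * AA f ν q w' k = AA f ν q w' j * AA f ν q w k := by
  have h' : (MM f ν q).det = 0 := h
  simp only [AA, Finset.sum_mul_sum]
  conv_rhs => rw [Finset.sum_comm]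
  refine Finset.sum_congr rfl fun a _ => Finset.sum_congr rfl fun b _ => ?_
  linear_combination (w a * w' b) * adj_rank_one _ h' a b j.castSucc k.castSucc

lemma QQ_zero (q : Fin m → ℝ) (h : lamb f ν q = 0) (w w' : Fin (m + 1) → ℝ) :
    QQ f ν q w w' = 0 := by
  have hB : ∀ u u', BB f ν q u u' = ∑ k, AA f ν q u' k * (u ⬝ᵥ pd k ν q) := by
    intro u u'
    rw [BB, fderiv_eq_sum, dotProduct_sum]
    simp
  have key : BB f ν q w w * BB f ν q w' w' = BB f ν q w w' * BB f ν q w' w := by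
    simp only [hB, Finset.sum_mul_sum]
    refine Finset.sum_congr rfl fun a _ => Finset.sum_congr rfl fun b _ => ?_
    linear_combination ((w ⬝ᵥ pd a ν q) * (w' ⬝ᵥ pd b ν q)) * AA_rank f ν q h w w' a b
  rw [QQ, key, sub_self]

lemma QQ_smul (q : Fin m → ℝ) (c d : ℝ) (w w' : Fin (m + 1) → ℝ) :
    QQ f ν q (c • w) (d • w') = c ^ 2 * d ^ 2 * QQ f ν q w w' := by
  simp only [QQ, BB, AA_smul, map_smul, smul_dotProduct, dotProduct_smul, smul_eq_mul]
  ring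

end

section
variable {m : ℕ} {U : Set (Fin m → ℝ)} (hU : IsOpen U)
    (f ν : (Fin m → ℝ) → (Fin (m + 1) → ℝ))
    (hf : ContDiffOn ℝ (⊤ : ℕ∞) f U) (hν : ContDiffOn ℝ (⊤ : ℕ∞) ν U)

lemma MM_smooth (hU : IsOpen U) (hf : ContDiffOn ℝ (⊤ : ℕ∞) f U)
    (hν : ContDiffOn ℝ (⊤ : ℕ∞) ν U) (i j : Fin (m + 1)) :
    ContDiffOn ℝ (⊤ : ℕ∞) (fun q => MM f ν q i j) U := by
  induction i using Fin.lastCases with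
  | last => simpa [MM] using contDiffOn_pi.1 hν j
  | cast k =>
    have h : ContDiffOn ℝ (⊤ : ℕ∞) (fun q => fderiv ℝ f q (Pi.single k 1)) U :=
      (hf.fderiv_of_isOpen hU (m := (⊤ : ℕ∞)) (by simp)).clm_apply contDiffOn_const
    simpa [MM, pd] using contDiffOn_pi.1 h j

lemma lamb_smooth (hU : IsOpen U) (hf : ContDiffOn ℝ (⊤ : ℕ∞) f U)
    (hν : ContDiffOn ℝ (⊤ : ℕ∞) ν U) : ContDiffOn ℝ (⊤ : ℕ∞) (lamb f ν) U :=
  det_smooth (MM f ν) (MM_smooth f ν hU hf hν)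

lemma BB_smooth (hU : IsOpen U) (hf : ContDiffOn ℝ (⊤ : ℕ∞) f U)
    (hν : ContDiffOn ℝ (⊤ : ℕ∞) ν U) {P : Type*} [NormedAddCommGroup P] [NormedSpace ℝ P]
    (a b : P → (Fin (m + 1) → ℝ)) (ha : ContDiff ℝ (⊤ : ℕ∞) a) (hb : ContDiff ℝ (⊤ : ℕ∞) b) :
    ContDiffOn ℝ (⊤ : ℕ∞) (fun z : (Fin m → ℝ) × P => BB f ν z.1 (a z.2) (b z.2))
      (U ×ˢ Set.univ) := by
  have hfst : ContDiffOn ℝ (⊤ : ℕ∞) (fun z : (Fin m → ℝ) × P => z.1) (U ×ˢ Set.univ) :=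
    contDiff_fst.contDiffOn
  have hmaps : Set.MapsTo (fun z : (Fin m → ℝ) × P => z.1) (U ×ˢ Set.univ) U :=
    fun z hz => hz.1
  have hAA : ContDiffOn ℝ (⊤ : ℕ∞) (fun z : (Fin m → ℝ) × P => AA f ν z.1 (b z.2))
      (U ×ˢ Set.univ) := by
    refine contDiffOn_pi.2 fun k => ?_
    simp only [AA]
    refine ContDiffOn.sum fun i _ => ContDiffOn.mul ?_ ?_
    · exact ((contDiff_pi.1 hb i).comp contDiff_snd).contDiffOn
    · exact (adj_smooth (MM f ν) (MM_smooth f ν hU hf hν) i k.castSucc).comp hfst hmaps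
  have hd : ContDiffOn ℝ (⊤ : ℕ∞)
      (fun z : (Fin m → ℝ) × P => fderiv ℝ ν z.1 (AA f ν z.1 (b z.2))) (U ×ˢ Set.univ) :=
    ContDiffOn.clm_apply
      ((hν.fderiv_of_isOpen hU (m := (⊤ : ℕ∞)) (by simp)).comp hfst hmaps) hAA
  simp only [BB, dotProduct]
  refine ContDiffOn.sum fun i _ => ContDiffOn.mul ?_ (contDiffOn_pi.1 hd i)
  exact ((contDiff_pi.1 ha i).comp contDiff_snd).contDiffOn

lemma QQ_smooth (hU : IsOpen U) (hf : ContDiffOn ℝ (⊤ : ℕ∞) f U)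
    (hν : ContDiffOn ℝ (⊤ : ℕ∞) ν U) :
    ContDiffOn ℝ (⊤ : ℕ∞)
      (fun z : (Fin m → ℝ) × ((Fin (m + 1) → ℝ) × (Fin (m + 1) → ℝ)) =>
        QQ f ν z.1 z.2.1 z.2.2) (U ×ˢ Set.univ) := by
  have h := fun a b ha hb => BB_smooth f ν hU hf hν
    (P := (Fin (m + 1) → ℝ) × (Fin (m + 1) → ℝ)) a b ha hb
  exact ((h _ _ contDiff_fst contDiff_fst).mul (h _ _ contDiff_snd contDiff_snd)).sub
    ((h _ _ contDiff_fst contDiff_snd).mul (h _ _ contDiff_snd contDiff_fst))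

lemma hasFDerivAt_dot {E : Type*} [NormedAddCommGroup E] [NormedSpace ℝ E] {N : ℕ}
    {a b : E → (Fin N → ℝ)} {q : E} (ha : DifferentiableAt ℝ a q) (hb : DifferentiableAt ℝ b q)
    (X : E) :
    fderiv ℝ (fun x => a x ⬝ᵥ b x) q X = fderiv ℝ a q X ⬝ᵥ b q + a q ⬝ᵥ fderiv ℝ b q X := by
  have h : HasFDerivAt (fun x => a x ⬝ᵥ b x)
      (∑ i, (a q i • (ContinuousLinearMap.proj i).comp (fderiv ℝ b q)
        + b q i • (ContinuousLinearMap.proj i).comp (fderiv ℝ a q))) q := by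
    simp only [dotProduct]
    refine HasFDerivAt.fun_sum fun i _ => ?_
    exact (hasFDerivAt_pi'.1 ha.hasFDerivAt i).mul (hasFDerivAt_pi'.1 hb.hasFDerivAt i)
  rw [h.fderiv]
  simp [dotProduct, Finset.sum_add_distrib]
  rw [add_comm]
  congr 1
  exact Finset.sum_congr rfl fun i _ => mul_comm _ _

lemma nu_dnu (hU : IsOpen U) (hν : ContDiffOn ℝ (⊤ : ℕ∞) ν U)
    (hν1 : ∀ q ∈ U, ν q ⬝ᵥ ν q = 1) {q : Fin m → ℝ} (hq : q ∈ U) (X : Fin m → ℝ) :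
    ν q ⬝ᵥ fderiv ℝ ν q X = 0 := by
  have hd : DifferentiableAt ℝ ν q := (hν.contDiffAt (hU.mem_nhds hq)).differentiableAt (by simp)
  have h1 := hasFDerivAt_dot hd hd X
  have h2 : (fun x => ν x ⬝ᵥ ν x) =ᶠ[nhds q] fun _ => 1 := by
    filter_upwards [hU.mem_nhds hq] with x hx using hν1 x hx
  rw [h2.fderiv_eq] at h1
  rw [dotProduct_comm (fderiv ℝ ν q X)] at h1
  simp at h1
  linarith

lemma df_nu (htang : ∀ q ∈ U, ∀ k : Fin m, pd k f q ⬝ᵥ ν q = 0)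
    {q : Fin m → ℝ} (hq : q ∈ U) (X : Fin m → ℝ) : fderiv ℝ f q X ⬝ᵥ ν q = 0 := by
  rw [fderiv_eq_sum, sum_dotProduct]
  simp [htang q hq]

lemma II_symm (hU : IsOpen U) (hf : ContDiffOn ℝ (⊤ : ℕ∞) f U)
    (hν : ContDiffOn ℝ (⊤ : ℕ∞) ν U)
    (htang : ∀ q ∈ U, ∀ k : Fin m, pd k f q ⬝ᵥ ν q = 0)
    {q : Fin m → ℝ} (hq : q ∈ U) (X Y : Fin m → ℝ) :
    fderiv ℝ f q X ⬝ᵥ fderiv ℝ ν q Y = fderiv ℝ f q Y ⬝ᵥ fderiv ℝ ν q X := by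
  have hd : DifferentiableAt ℝ ν q := (hν.contDiffAt (hU.mem_nhds hq)).differentiableAt (by simp)
  have hdf : DifferentiableAt ℝ (fderiv ℝ f) q :=
    ((hf.fderiv_of_isOpen hU (m := (⊤ : ℕ∞)) (by simp)).contDiffAt
      (hU.mem_nhds hq)).differentiableAt (by simp)
  have key : ∀ X Y : Fin m → ℝ,
      fderiv ℝ (fderiv ℝ f) q Y X ⬝ᵥ ν q + fderiv ℝ f q X ⬝ᵥ fderiv ℝ ν q Y = 0 := by
    intro X Y
    have hdX : HasFDerivAt (fun x => fderiv ℝ f x X)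
        ((fderiv ℝ (fderiv ℝ f) q).flip X) q := by
      simpa using hdf.hasFDerivAt.clm_apply (hasFDerivAt_const X q)
    have h1 := hasFDerivAt_dot hdX.differentiableAt hd Y
    have h2 : (fun x => fderiv ℝ f x X ⬝ᵥ ν x) =ᶠ[nhds q] fun _ => 0 := by
      filter_upwards [hU.mem_nhds hq] with x hx using df_nu f ν htang hx X
    rw [h2.fderiv_eq, hdX.fderiv] at h1
    simpa using h1.symm
  have hs : IsSymmSndFDerivAt ℝ f q :=
    (hf.contDiffAt (hU.mem_nhds hq)).isSymmSndFDerivAt (by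
      simp only [minSmoothness_of_isRCLikeNormedField]
      exact WithTop.coe_le_coe.2 le_top)
  have h1 := key X Y
  have h2 := key Y X
  rw [hs X Y] at h2
  linarith

end

lemma gram_eq {N : ℕ} (a b : Fin N → ℝ) (ha : a ⬝ᵥ a ≠ 0) :
    (a ⬝ᵥ a) * (b ⬝ᵥ b) - (a ⬝ᵥ b) ^ 2 =
      (a ⬝ᵥ a) * ((b - (a ⬝ᵥ b / a ⬝ᵥ a) • a) ⬝ᵥ (b - (a ⬝ᵥ b / a ⬝ᵥ a) • a)) := by
  simp only [sub_dotProduct, dotProduct_sub, smul_dotProduct, dotProduct_smul, smul_eq_mul,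
    dotProduct_comm b a]
  field_simp
  ring

lemma norm_sq_le_dot {N : ℕ} (a : Fin N → ℝ) : ‖a‖ ^ 2 ≤ a ⬝ᵥ a := by
  have h0 : 0 ≤ a ⬝ᵥ a := Finset.sum_nonneg fun i _ => mul_self_nonneg _
  rw [← Real.sqrt_le_sqrt_iff h0, Real.sqrt_sq (norm_nonneg _)]
  refine (pi_norm_le_iff_of_nonneg (Real.sqrt_nonneg _)).2 fun i => ?_
  rw [Real.norm_eq_abs]
  refine Real.abs_le_sqrt ?_
  rw [sq]
  exact Finset.single_le_sum (f := fun i => a i * a i) (fun i _ => mul_self_nonneg _)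
    (Finset.mem_univ i)

end KextAux

/-- If the extrinsic (= sectional) curvature of a front `(f, ν)` in `ℝ^{m+1}` does not
change sign near an `A₂`-point `p` (off the singular set), then it is bounded near `p`
off the singular set. -/
theorem Kext_bounded_of_sign_constant {m : ℕ} (hm : 2 ≤ m)
    (U : Set (Fin m → ℝ)) (hU : IsOpen U)
    (f ν : (Fin m → ℝ) → (Fin (m + 1) → ℝ))
    (hf : ContDiffOn ℝ (⊤ : ℕ∞) f U) (hν : ContDiffOn ℝ (⊤ : ℕ∞) ν U)
    (hν1 : ∀ q ∈ U, ν q ⬝ᵥ ν q = 1)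
    (htang : ∀ q ∈ U, ∀ k : Fin m, pd k f q ⬝ᵥ ν q = 0)
    (hfront : ∀ q ∈ U, ∀ X : Fin m → ℝ, fderiv ℝ f q X = 0 → fderiv ℝ ν q X = 0 → X = 0)
    (p : Fin m → ℝ) (hp : p ∈ U) (hA2 : IsA2 f ν p)
    (V : Set (Fin m → ℝ)) (hV : IsOpen V) (hpV : p ∈ V) (hVU : V ⊆ U)
    (hsign :
      (∀ q ∈ V, lamb f ν q ≠ 0 → ∀ X Y : Fin m → ℝ,
        LinearIndependent ℝ ![X, Y] → 0 ≤ Kext f ν q X Y) ∨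
      (∀ q ∈ V, lamb f ν q ≠ 0 → ∀ X Y : Fin m → ℝ,
        LinearIndependent ℝ ![X, Y] → Kext f ν q X Y ≤ 0)) :
    ∃ W : Set (Fin m → ℝ), IsOpen W ∧ p ∈ W ∧ W ⊆ V ∧
      ∃ C : ℝ, 0 < C ∧
        ∀ q ∈ W, lamb f ν q ≠ 0 → ∀ X Y : Fin m → ℝ,
          LinearIndependent ℝ ![X, Y] → |Kext f ν q X Y| ≤ C := by
  classical
  have hVo := hV
  have hfV := hf.mono hVU
  have hνV := hν.mono hVU
  obtain ⟨s, hs1, hs⟩ : ∃ s : ℝ, |s| = 1 ∧ ∀ q ∈ V, lamb f ν q ≠ 0 → ∀ X Y : Fin m → ℝ,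
      LinearIndependent ℝ ![X, Y] → 0 ≤ s * Kext f ν q X Y := by
    rcases hsign with h | h
    · exact ⟨1, by simp, fun q hq hl X Y hXY => by simpa using h q hq hl X Y hXY⟩
    · exact ⟨-1, by simp, fun q hq hl X Y hXY => by simpa using h q hq hl X Y hXY⟩
  -- symmetry of the second fundamental form
  have hsymm : ∀ q ∈ V, ∀ X Y : Fin m → ℝ,
      fderiv ℝ f q X ⬝ᵥ fderiv ℝ ν q Y = fderiv ℝ f q Y ⬝ᵥ fderiv ℝ ν q X :=
    fun q hq X Y => KextAux.II_symm f ν hU hf hν htang (hVU hq) X Y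
  have hBA : ∀ q ∈ V, ∀ (w : Fin (m + 1) → ℝ) (Y : Fin m → ℝ),
      fderiv ℝ f q (KextAux.AA f ν q w) ⬝ᵥ fderiv ℝ ν q Y
        = lamb f ν q * (w ⬝ᵥ fderiv ℝ ν q Y) := by
    intro q hq w Y
    obtain ⟨c, hc⟩ := KextAux.df_AA f ν q w
    rw [hc, add_dotProduct, smul_dotProduct, smul_dotProduct,
      KextAux.nu_dnu ν hU hν hν1 (hVU hq)]
    simp
  have hinj : ∀ q, lamb f ν q ≠ 0 → ∀ X, fderiv ℝ f q X = 0 → X = 0 := by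
    intro q hl X hX
    have h := KextAux.AA_df f ν q X
    have h0 := KextAux.AA_smul f ν q 0 0
    rw [hX] at h
    rw [zero_smul, zero_smul] at h0
    rw [h0] at h
    exact (smul_eq_zero.1 h.symm).resolve_left hl
  -- sign of the minors
  have hnn : ∀ q ∈ V, ∀ z : (Fin (m + 1) → ℝ) × (Fin (m + 1) → ℝ),
      0 ≤ s * KextAux.QQ f ν q z.1 z.2 := by
    rintro q hq ⟨w, w'⟩
    by_cases hl : lamb f ν q = 0
    · simp [KextAux.QQ_zero f ν q hl]
    set X := KextAux.AA f ν q w with hX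
    set Y := KextAux.AA f ν q w' with hY
    have hnum : (fderiv ℝ f q X ⬝ᵥ fderiv ℝ ν q X) * (fderiv ℝ f q Y ⬝ᵥ fderiv ℝ ν q Y)
        - (fderiv ℝ f q X ⬝ᵥ fderiv ℝ ν q Y) ^ 2
        = lamb f ν q ^ 2 * KextAux.QQ f ν q w w' := by
      have h1 : (fderiv ℝ f q X ⬝ᵥ fderiv ℝ ν q Y) ^ 2 =
          (fderiv ℝ f q X ⬝ᵥ fderiv ℝ ν q Y) * (fderiv ℝ f q Y ⬝ᵥ fderiv ℝ ν q X) := by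
        rw [sq, hsymm q hq Y X]
      rw [h1, hX, hBA q hq, hBA q hq, ← hX, hY, hBA q hq, hBA q hq, KextAux.QQ, KextAux.BB,
        KextAux.BB, KextAux.BB, KextAux.BB]
      ring
    have hl2 : 0 < lamb f ν q ^ 2 := by positivity
    suffices h : 0 ≤ s * (lamb f ν q ^ 2 * KextAux.QQ f ν q w w') by
      have h' : 0 ≤ lamb f ν q ^ 2 * (s * KextAux.QQ f ν q w w') := by linarith
      exact nonneg_of_mul_nonneg_right h' hl2
    rw [← hnum]
    by_cases hX0 : X = 0
    · simp [hX0]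
    have ha : 0 < fderiv ℝ f q X ⬝ᵥ fderiv ℝ f q X := by
      refine lt_of_le_of_ne (Finset.sum_nonneg fun i _ => mul_self_nonneg _) fun h => hX0 ?_
      exact hinj q hl X (dotProduct_self_eq_zero.1 h.symm)
    by_cases hLI : LinearIndependent ℝ ![X, Y]
    · have hK := hs q hq hl X Y hLI
      have hden : 0 < (fderiv ℝ f q X ⬝ᵥ fderiv ℝ f q X) * (fderiv ℝ f q Y ⬝ᵥ fderiv ℝ f q Y)
          - (fderiv ℝ f q X ⬝ᵥ fderiv ℝ f q Y) ^ 2 := by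
        rw [KextAux.gram_eq _ _ ha.ne']
        refine mul_pos ha
          (lt_of_le_of_ne (Finset.sum_nonneg fun i _ => mul_self_nonneg _) fun h => ?_)
        have h1 := dotProduct_self_eq_zero.1 h.symm
        rw [← map_smul, ← map_sub] at h1
        have h2 := hinj q hl _ h1
        have h3 := (LinearIndependent.pair_iff' hX0).1 hLI
        exact h3 _ (sub_eq_zero.1 h2).symm
      rw [Kext, ← mul_div_assoc, le_div_iff₀ hden, zero_mul] at hK
      exact hK
    · rw [LinearIndependent.pair_iff' hX0] at hLI
      push Not at hLI
      obtain ⟨c, hc⟩ := hLI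
      rw [← hc]
      simp only [map_smul, smul_dotProduct, dotProduct_smul, smul_eq_mul]
      apply le_of_eq
      ring
  obtain ⟨W, hWo, hpW, hWV, C, hC, hbound⟩ := KextAux.param
    (F := (Fin (m + 1) → ℝ) × (Fin (m + 1) → ℝ)) hV hpV (lamb f ν)
    (fun z => s * KextAux.QQ f ν z.1 z.2.1 z.2.2)
    (KextAux.lamb_smooth f ν hV hfV hνV)
    (contDiffOn_const.mul (KextAux.QQ_smooth f ν hV hfV hνV)) hA2.1 hA2.2.1 hnn
    (fun q _ hl z => by simp [KextAux.QQ_zero f ν q hl])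
  refine ⟨W, hWo, hpW, hWV, C, hC, fun q hq hl X Y hXY => ?_⟩
  have hqV := hWV hq
  have hl2 : 0 < lamb f ν q ^ 2 := by positivity
  -- homogeneous bound on the minors
  have hQ : ∀ w w' : Fin (m + 1) → ℝ, w ≠ 0 → w' ≠ 0 →
      |KextAux.QQ f ν q w w'| ≤ C * lamb f ν q ^ 2 * ((w ⬝ᵥ w) * (w' ⬝ᵥ w')) := by
    intro w w' hw hw'
    have hnw : 0 < ‖w‖ := norm_pos_iff.2 hw
    have hnw' : 0 < ‖w'‖ := norm_pos_iff.2 hw'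
    have h1 := hbound q hq (‖w‖⁻¹ • w, ‖w'‖⁻¹ • w') (by
      rw [Prod.norm_def]
      simp [norm_smul, hnw.ne', hnw'.ne'])
    have h2 : KextAux.QQ f ν q w w' =
        ‖w‖ ^ 2 * ‖w'‖ ^ 2 * KextAux.QQ f ν q (‖w‖⁻¹ • w) (‖w'‖⁻¹ • w') := by
      rw [KextAux.QQ_smul]
      field_simp
    simp only [abs_mul, hs1, one_mul] at h1
    rw [h2, abs_mul, abs_of_pos (by positivity : 0 < ‖w‖ ^ 2 * ‖w'‖ ^ 2)]
    calc ‖w‖ ^ 2 * ‖w'‖ ^ 2 * |KextAux.QQ f ν q (‖w‖⁻¹ • w) (‖w'‖⁻¹ • w')|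
        ≤ ‖w‖ ^ 2 * ‖w'‖ ^ 2 * (C * lamb f ν q ^ 2) := by gcongr
      _ = C * lamb f ν q ^ 2 * (‖w‖ ^ 2 * ‖w'‖ ^ 2) := by ring
      _ ≤ _ := by
        have e1 := KextAux.norm_sq_le_dot w
        have e2 := KextAux.norm_sq_le_dot w'
        have e3 : 0 ≤ w ⬝ᵥ w := (sq_nonneg _).trans e1
        gcongr
  have hnum : ∀ X Y : Fin m → ℝ, KextAux.QQ f ν q (fderiv ℝ f q X) (fderiv ℝ f q Y) =
      lamb f ν q ^ 2 * ((fderiv ℝ f q X ⬝ᵥ fderiv ℝ ν q X) * (fderiv ℝ f q Y ⬝ᵥ fderiv ℝ ν q Y)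
        - (fderiv ℝ f q X ⬝ᵥ fderiv ℝ ν q Y) ^ 2) := by
    intro X Y
    simp only [KextAux.QQ, KextAux.BB, KextAux.AA_df, map_smul, dotProduct_smul, smul_eq_mul]
    rw [hsymm q hqV Y X]
    ring
  have hX0 : X ≠ 0 := by
    have := hXY.ne_zero 0
    simpa using this
  have hwX : fderiv ℝ f q X ≠ 0 := fun h => hX0 (hinj q hl X h)
  have ha : fderiv ℝ f q X ⬝ᵥ fderiv ℝ f q X ≠ 0 := fun h => hwX (dotProduct_self_eq_zero.1 h)
  set c : ℝ := fderiv ℝ f q X ⬝ᵥ fderiv ℝ f q Y / fderiv ℝ f q X ⬝ᵥ fderiv ℝ f q X with hc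
  have hY' : fderiv ℝ f q (Y - c • X) ≠ 0 := by
    intro h
    exact (LinearIndependent.pair_iff' hX0).1 hXY c (sub_eq_zero.1 (hinj q hl _ h)).symm
  have hb := hQ _ _ hwX hY'
  rw [hnum, abs_mul, abs_of_pos hl2] at hb
  have hinv : (fderiv ℝ f q X ⬝ᵥ fderiv ℝ ν q X) *
        (fderiv ℝ f q (Y - c • X) ⬝ᵥ fderiv ℝ ν q (Y - c • X))
        - (fderiv ℝ f q X ⬝ᵥ fderiv ℝ ν q (Y - c • X)) ^ 2
      = (fderiv ℝ f q X ⬝ᵥ fderiv ℝ ν q X) * (fderiv ℝ f q Y ⬝ᵥ fderiv ℝ ν q Y)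
        - (fderiv ℝ f q X ⬝ᵥ fderiv ℝ ν q Y) ^ 2 := by
    simp only [map_sub, map_smul, sub_dotProduct, dotProduct_sub, smul_dotProduct,
      dotProduct_smul, smul_eq_mul, hsymm q hqV Y X]
    ring
  have hgram := KextAux.gram_eq (fderiv ℝ f q X) (fderiv ℝ f q Y) ha
  rw [← hc, ← map_smul, ← map_sub] at hgram
  rw [hinv, ← hgram] at hb
  have hb' := le_of_mul_le_mul_left (hb.trans_eq (by ring :
    _ = lamb f ν q ^ 2 * (C * ((fderiv ℝ f q X ⬝ᵥ fderiv ℝ f q X) *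
      (fderiv ℝ f q Y ⬝ᵥ fderiv ℝ f q Y) - (fderiv ℝ f q X ⬝ᵥ fderiv ℝ f q Y) ^ 2)))) hl2
  have hden : 0 < (fderiv ℝ f q X ⬝ᵥ fderiv ℝ f q X) * (fderiv ℝ f q Y ⬝ᵥ fderiv ℝ f q Y)
          - (fderiv ℝ f q X ⬝ᵥ fderiv ℝ f q Y) ^ 2 := by
    rw [hgram]
    have p1 : ∀ a : Fin (m + 1) → ℝ, a ≠ 0 → 0 < a ⬝ᵥ a := fun a ha =>
      lt_of_lt_of_le (by positivity) (KextAux.norm_sq_le_dot a)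
    exact mul_pos (p1 _ hwX) (p1 _ hY')
  rw [Kext, abs_div, abs_of_pos hden, div_le_iff₀ hden]
  exact hb'
end
end
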